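/- arXiv:2503.21002 — 2 statements merged into one kernel-verified Lean document; each statement's English description precedes it below -/
import Mathlib

section
/- Covert secrecy capacity with key assistance (Theorem 1): Let P_{X→BW} be a classical-quantum covert communication channel with binary input satisfying supp(σ_1) ⊆ supp(σ_0) and supp(ω_1) ⊆ supp(ω_0), and consider covert communication of classical information with secrecy via this channel without a public message (L_public = 0). Then the covert secrecy capacity with key assistance is C_S^key(P) = D(σ_1||σ_0) / √( (1/2) χ²(ω_1||ω_0) ). -/
open Matrix Filter
open scoped Kronecker Classical ComplexOrder

noncomputable section

namespace CovertPaper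



variable {ι : Type*} [Fintype ι] [DecidableEq ι]

/-- `ρ` is a density matrix (state). -/
def IsDensity (ρ : Matrix ι ι ℂ) : Prop := ρ.PosSemidef ∧ ρ.trace = 1

/-- `supp ρ ⊆ supp σ`, expressed (for Hermitian PSD matrices) as `ker σ ⊆ ker ρ`. -/
def SuppLE (ρ σ : Matrix ι ι ℂ) : Prop :=
  ∀ v : ι → ℂ, σ.mulVec v = 0 → ρ.mulVec v = 0

/-- Functional calculus on Hermitian matrices (junk value `0` otherwise). -/
def matFun (f : ℝ → ℝ) (A : Matrix ι ι ℂ) : Matrix ι ι ℂ :=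
  if hA : A.IsHermitian then
    (hA.eigenvectorUnitary : Matrix ι ι ℂ) *
      diagonal (fun i => (f (hA.eigenvalues i) : ℂ)) *
      (star (hA.eigenvectorUnitary : Matrix ι ι ℂ))
  else 0

/-- Matrix logarithm of a Hermitian matrix (`0` on the kernel, by `Real.log 0 = 0`). -/
def matLog (A : Matrix ι ι ℂ) : Matrix ι ι ℂ := matFun Real.log A

/-- Trace norm `‖A‖₁ = Tr √(AᴴA)`. -/
def traceNorm (A : Matrix ι ι ℂ) : ℝ := ((matFun Real.sqrt (Aᴴ * A)).trace).re

/-- Fidelity `F(ρ,σ) = ‖√ρ√σ‖₁²`. -/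
def fidelity (ρ σ : Matrix ι ι ℂ) : ℝ :=
  (traceNorm (matFun Real.sqrt ρ * matFun Real.sqrt σ)) ^ 2

/-- von Neumann entropy `H(ρ) = −Tr[ρ log ρ]` (natural logarithm). -/
def vnEnt (ρ : Matrix ι ι ℂ) : ℝ := -((ρ * matLog ρ).trace).re

/-- Quantum (Umegaki) relative entropy `D(ρ‖σ) = Tr[ρ (log ρ − log σ)]`; this real-valued
formula agrees with the usual definition whenever `supp ρ ⊆ supp σ`. -/
def relEnt (ρ σ : Matrix ι ι ℂ) : ℝ := ((ρ * (matLog ρ - matLog σ)).trace).re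

/-- The quantum chi-square divergence
`χ²(ρ‖σ) = (∂²/∂α²) D(αρ + (1−α)σ ‖ σ) |_{α=0}`. -/
def chiSq (ρ σ : Matrix ι ι ℂ) : ℝ :=
  iteratedDeriv 2 (fun α : ℝ => relEnt ((α : ℂ) • ρ + ((1 - α : ℝ) : ℂ) • σ) σ) 0

section PTrace

variable {α β : Type*} [Fintype α] [Fintype β]

/-- Partial trace over the second (right) tensor factor. -/
def ptraceRight (ρ : Matrix (α × β) (α × β) ℂ) : Matrix α α ℂ :=
  of fun a a' => ∑ b, ρ (a, b) (a', b)

/-- Partial trace over the first (left) tensor factor. -/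
def ptraceLeft (ρ : Matrix (α × β) (α × β) ℂ) : Matrix β β ℂ :=
  of fun b b' => ∑ a, ρ (a, b) (a, b')

/-- The product state `⊗_{i=1}^n ω_{x_i}` associated with a classical string `x^n`. -/
def stringState {d : ℕ} (ω : Fin d → Matrix β β ℂ) {n : ℕ} (x : Fin n → Fin d) :
    Matrix (Fin n → β) (Fin n → β) ℂ :=
  of fun a b => ∏ i, ω (x i) (a i) (b i)

/-- The `n`-fold tensor power `ω^{⊗n}`. -/
def tpow (ω : Matrix β β ℂ) (n : ℕ) : Matrix (Fin n → β) (Fin n → β) ℂ :=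
  of fun a b => ∏ i, ω (a i) (b i)

end PTrace

/-- Asymptotic little-o : `f ∈ o(g)` iff `f/g → 0`. -/
def LittleO (f g : ℕ → ℝ) : Prop :=
  Tendsto (fun n => f n / g n) atTop (nhds 0)

/-- Asymptotic little-omega : `f ∈ ω(g)` iff `|f/g| → ∞`. -/
def LittleOmega (f g : ℕ → ℝ) : Prop :=
  Tendsto (fun n => |f n / g n|) atTop atTop

section CQ

variable {B W : Type*} [Fintype B] [DecidableEq B] [Fintype W] [DecidableEq W]

/-- Bob's reduced output `σ_x` of the classical-quantum channel `π`. -/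
def bobOut (π : Fin 2 → Matrix (B × W) (B × W) ℂ) (x : Fin 2) : Matrix B B ℂ :=
  ptraceRight (π x)

/-- Willie's reduced output `ω_x` of the classical-quantum channel `π`. -/
def willieOut (π : Fin 2 → Matrix (B × W) (B × W) ℂ) (x : Fin 2) : Matrix W W ℂ :=
  ptraceLeft (π x)

variable (π : Fin 2 → Matrix (B × W) (B × W) ℂ)

/-- Bob's output state for the codeword `x^n`. -/
def bobWord {n : ℕ} (x : Fin n → Fin 2) : Matrix (Fin n → B) (Fin n → B) ℂ :=
  stringState (bobOut π) x

/-- Willie's output state for the codeword `x^n`. -/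
def willieWord {n : ℕ} (x : Fin n → Fin 2) : Matrix (Fin n → W) (Fin n → W) ℂ :=
  stringState (willieOut π) x

/-- `Λ` is a (sub-normalized) decoding POVM for each key value. -/
def IsPOVM {n M L K : ℕ} (Λ : Fin K → Fin M → Fin L → Matrix (Fin n → B) (Fin n → B) ℂ) :
    Prop :=
  (∀ k m ℓ, (Λ k m ℓ).PosSemidef) ∧
    ∀ k, ((1 : Matrix (Fin n → B) (Fin n → B) ℂ) - ∑ m, ∑ ℓ, Λ k m ℓ).PosSemidef

/-- Average decoding error probability of a covert secrecy code. -/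
def avgErr {n M L K : ℕ} (f : Fin M → Fin L → Fin K → Fin n → Fin 2)
    (Λ : Fin K → Fin M → Fin L → Matrix (Fin n → B) (Fin n → B) ℂ) : ℝ :=
  ((M : ℝ) * L * K)⁻¹ *
    ∑ m, ∑ ℓ, ∑ k, (1 - ((Λ k m ℓ * bobWord π (f m ℓ k)).trace).re)

/-- Willie's average output state `ρ̄_{W^n}` (averaged over message, public message and key). -/
def willieAvg {n M L K : ℕ} (f : Fin M → Fin L → Fin K → Fin n → Fin 2) :
    Matrix (Fin n → W) (Fin n → W) ℂ :=
  ((((M : ℝ) * L * K)⁻¹ : ℝ) : ℂ) • ∑ m, ∑ ℓ, ∑ k, willieWord π (f m ℓ k)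

/-- Willie's state `ρ_{W^n}^{(m)}` given the secret message `m` (averaged over `ℓ` and `k`). -/
def willieMsg {n M L K : ℕ} (f : Fin M → Fin L → Fin K → Fin n → Fin 2) (m : Fin M) :
    Matrix (Fin n → W) (Fin n → W) ℂ :=
  ((((L : ℝ) * K)⁻¹ : ℝ) : ℂ) • ∑ ℓ, ∑ k, willieWord π (f m ℓ k)

/-- The covertness criterion `D(ρ̄_{W^n} ‖ ω₀^{⊗n}) ≤ δ_cov`. -/
def Covert {n M L K : ℕ} (f : Fin M → Fin L → Fin K → Fin n → Fin 2) (δcov : ℝ) : Prop :=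
  relEnt (willieAvg π f) (tpow (willieOut π 0) n) ≤ δcov

/-- The secrecy criterion: some state `ρ̆` independent of `m` is `δ_sec`-close on average. -/
def Secret {n M L K : ℕ} (f : Fin M → Fin L → Fin K → Fin n → Fin 2) (δsec : ℝ) : Prop :=
  ∃ ρ' : Matrix (Fin n → W) (Fin n → W) ℂ, IsDensity ρ' ∧
    (M : ℝ)⁻¹ * ∑ m, traceNorm (willieMsg π f m - ρ') ≤ δsec

/-- Existence of an `(|M|,|L|,|K|,n,ε,δ_cov,δ_sec)` covert secrecy code. -/
def CodeExists (n M L K : ℕ) (ε δcov δsec : ℝ) : Prop :=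
  ∃ (f : Fin M → Fin L → Fin K → Fin n → Fin 2)
    (Λ : Fin K → Fin M → Fin L → Matrix (Fin n → B) (Fin n → B) ℂ),
      IsPOVM (B := B) Λ ∧ avgErr π f Λ ≤ ε ∧ Covert π f δcov ∧ Secret π f δsec

end CQ



section Statement0

variable {B W : Type*} [Fintype B] [DecidableEq B] [Fintype W] [DecidableEq W]

/-- `L_S > 0` is an achievable covert secrecy rate with key assistance and
no public message (`L_public = 0`, i.e. `|L| = 1`). -/
def AchievableWithKey (π : Fin 2 → Matrix (B × W) (B × W) ℂ) (LS : ℝ) : Prop :=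
  0 < LS ∧ ∀ ε δcov δsec : ℝ, 0 < ε → 0 < δcov → 0 < δsec →
    ∀ᶠ n : ℕ in atTop, ∃ M K : ℕ,
      Real.sqrt ((n : ℝ) * δcov) * LS ≤ Real.log M ∧
      CodeExists π n M 1 K ε δcov δsec

/-- The covert secrecy capacity with key assistance. -/
def keyAssistedCovertSecrecyCapacity (π : Fin 2 → Matrix (B × W) (B × W) ℂ) : ℝ :=
  sSup {LS : ℝ | AchievableWithKey π LS}

set_option linter.unusedSectionVars false

section Basics

variable {ι : Type*} [Fintype ι] [DecidableEq ι]

/-- Unitarity as a pair of equations. -/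
def UN (U : Matrix ι ι ℂ) : Prop := Uᴴ * U = 1 ∧ U * Uᴴ = 1

/-- `U diag(d) Uᴴ`. -/
def sp (U : Matrix ι ι ℂ) (d : ι → ℝ) : Matrix ι ι ℂ :=
  U * diagonal (fun i => (d i : ℂ)) * Uᴴ

/-- Real part of the trace. -/
def rtr (A : Matrix ι ι ℂ) : ℝ := A.trace.re

/-- Diagonal entries of `Uᴴ A U`. -/
def qd (U A : Matrix ι ι ℂ) (i : ι) : ℝ := ((Uᴴ * A * U) i i).re


lemma rtr_add (A B : Matrix ι ι ℂ) : rtr (A + B) = rtr A + rtr B := by simp [rtr]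
lemma rtr_sub (A B : Matrix ι ι ℂ) : rtr (A - B) = rtr A - rtr B := by simp [rtr]
lemma rtr_smul (c : ℝ) (A : Matrix ι ι ℂ) : rtr ((c : ℂ) • A) = c * rtr A := by simp [rtr]
lemma rtr_sum {κ : Type*} (s : Finset κ) (A : κ → Matrix ι ι ℂ) :
    rtr (∑ k ∈ s, A k) = ∑ k ∈ s, rtr (A k) := by simp [rtr, trace_sum]
lemma rtr_comm (A B : Matrix ι ι ℂ) : rtr (A * B) = rtr (B * A) := by
  simp [rtr, trace_mul_comm A B]

lemma UN.conj {U : Matrix ι ι ℂ} (h : UN U) : UN Uᴴ := by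
  refine ⟨?_, ?_⟩
  · simpa using h.2
  · simpa using h.1

lemma UN_one : UN (1 : Matrix ι ι ℂ) := by simp [UN]

lemma sp_mul {U : Matrix ι ι ℂ} (h : UN U) (d e : ι → ℝ) :
    sp U d * sp U e = sp U (fun i => d i * e i) := by
  unfold sp
  calc U * diagonal (fun i => (d i : ℂ)) * Uᴴ * (U * diagonal (fun i => (e i : ℂ)) * Uᴴ)
      = U * diagonal (fun i => (d i : ℂ)) * (Uᴴ * U) * diagonal (fun i => (e i : ℂ)) * Uᴴ := by
        simp only [Matrix.mul_assoc]
    _ = _ := by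
        rw [h.1, Matrix.mul_one, Matrix.mul_assoc U, diagonal_mul_diagonal]; simp

lemma sp_psd (U : Matrix ι ι ℂ) {d : ι → ℝ} (h : ∀ i, 0 ≤ d i) : (sp U d).PosSemidef := by
  unfold sp
  apply PosSemidef.mul_mul_conjTranspose_same
  apply PosSemidef.diagonal
  intro i
  simpa using h i

lemma sp_herm (U : Matrix ι ι ℂ) (d : ι → ℝ) : (sp U d)ᴴ = sp U d := by
  unfold sp
  simp only [conjTranspose_mul, diagonal_conjTranspose, conjTranspose_conjTranspose, Matrix.mul_assoc]
  congr 3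
  ext i
  simp

lemma sp_add (U : Matrix ι ι ℂ) (d e : ι → ℝ) :
    sp U (fun i => d i + e i) = sp U d + sp U e := by
  unfold sp
  rw [← Matrix.add_mul, ← Matrix.mul_add, diagonal_add]; simp

lemma sp_sub (U : Matrix ι ι ℂ) (d e : ι → ℝ) :
    sp U (fun i => d i - e i) = sp U d - sp U e := by
  unfold sp
  rw [← Matrix.sub_mul, ← Matrix.mul_sub, diagonal_sub]; simp

lemma sp_smul (U : Matrix ι ι ℂ) (c : ℝ) (d : ι → ℝ) :
    sp U (fun i => c * d i) = (c : ℂ) • sp U d := by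
  unfold sp
  rw [← Matrix.smul_mul, ← Matrix.mul_smul, ← diagonal_smul]
  congr 3
  ext i; simp

lemma sp_one {U : Matrix ι ι ℂ} (h : UN U) : sp U (fun _ => 1) = 1 := by
  unfold sp
  simp [h.2]

lemma qd_sum {U : Matrix ι ι ℂ} (h : UN U) (A : Matrix ι ι ℂ) : ∑ i, qd U A i = rtr A := by
  unfold qd rtr
  rw [← Complex.re_sum]
  change (trace (Uᴴ * A * U)).re = _
  rw [Matrix.mul_assoc, trace_mul_comm, Matrix.mul_assoc, h.2, Matrix.mul_one]

lemma qd_nonneg (U : Matrix ι ι ℂ) {A : Matrix ι ι ℂ} (hA : A.PosSemidef) (i : ι) :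
    0 ≤ qd U A i := by
  have := (hA.conjTranspose_mul_mul_same U).diag_nonneg (i := i)
  exact (Complex.le_def.1 this).1

lemma rtr_sp_mul (U A : Matrix ι ι ℂ) (d : ι → ℝ) :
    rtr (sp U d * A) = ∑ i, d i * qd U A i := by
  unfold rtr sp qd
  rw [Matrix.mul_assoc, Matrix.mul_assoc, trace_mul_comm, Matrix.mul_assoc, trace]
  simp only [diag_apply, diagonal_mul, Complex.re_sum, Complex.re_ofReal_mul]

lemma rtr_sp {U : Matrix ι ι ℂ} (h : UN U) (d : ι → ℝ) : rtr (sp U d) = ∑ i, d i := by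
  have := rtr_sp_mul U 1 d
  rw [Matrix.mul_one] at this
  rw [this]
  simp [qd, h.1]

lemma qd_sp {U : Matrix ι ι ℂ} (h : UN U) (d : ι → ℝ) (i : ι) : qd U (sp U d) i = d i := by
  unfold qd sp
  have : Uᴴ * (U * diagonal (fun i => (d i : ℂ)) * Uᴴ) * U
      = (Uᴴ * U) * diagonal (fun i => (d i : ℂ)) * (Uᴴ * U) := by
    simp only [Matrix.mul_assoc]
  rw [this, h.1]; simp

/-- overlap probabilities -/
def ov (U V : Matrix ι ι ℂ) (i j : ι) : ℝ := Complex.normSq ((Uᴴ * V) i j)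

lemma ov_nonneg (U V : Matrix ι ι ℂ) (i j : ι) : 0 ≤ ov U V i j := Complex.normSq_nonneg _

lemma ov_sum_right {U V : Matrix ι ι ℂ} (hU : UN U) (hV : UN V) (i : ι) : ∑ j, ov U V i j = 1 := by
  have : (Uᴴ * V) * (Uᴴ * V)ᴴ = 1 := by
    rw [conjTranspose_mul, conjTranspose_conjTranspose, Matrix.mul_assoc, ← Matrix.mul_assoc V,
      hV.2, Matrix.one_mul, hU.1]
  have h2 := congrFun (congrFun this i) i
  rw [mul_apply] at h2
  have h3 := congrArg Complex.re h2
  simp only [conjTranspose_apply, one_apply_eq, Complex.one_re, Complex.re_sum] at h3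
  rw [← h3]
  refine Finset.sum_congr rfl fun j _ => ?_
  simp only [ov, RCLike.star_def, Complex.mul_conj, Complex.ofReal_re]

lemma ov_sum_left {U V : Matrix ι ι ℂ} (hU : UN U) (hV : UN V) (j : ι) : ∑ i, ov U V i j = 1 := by
  rw [← ov_sum_right hV hU j]
  refine Finset.sum_congr rfl fun i _ => ?_
  unfold ov
  rw [← Complex.normSq_conj, ← RCLike.star_def, ← conjTranspose_apply, conjTranspose_mul,
    conjTranspose_conjTranspose]

lemma qd_sp_ov (U V : Matrix ι ι ℂ) (d : ι → ℝ) (j : ι) :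
    qd V (sp U d) j = ∑ i, d i * ov U V i j := by
  unfold qd sp
  have : Vᴴ * (U * diagonal (fun i => (d i : ℂ)) * Uᴴ) * V
      = (Uᴴ * V)ᴴ * (diagonal (fun i => (d i : ℂ)) * (Uᴴ * V)) := by
    simp only [Matrix.mul_assoc, conjTranspose_mul, conjTranspose_conjTranspose]
  rw [this, mul_apply, Complex.re_sum]
  refine Finset.sum_congr rfl fun i _ => ?_
  simp only [diagonal_mul, conjTranspose_apply, ov, RCLike.star_def]
  rw [mul_left_comm, Complex.re_ofReal_mul, mul_comm (starRingEnd ℂ _), Complex.mul_conj,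
    Complex.ofReal_re]

lemma rtr_sp_sp (U V : Matrix ι ι ℂ) (d e : ι → ℝ) :
    rtr (sp U d * sp V e) = ∑ i, ∑ j, d i * e j * ov U V i j := by
  rw [rtr_comm, rtr_sp_mul]
  simp only [qd_sp_ov, Finset.mul_sum]
  rw [Finset.sum_comm]
  refine Finset.sum_congr rfl fun i _ => Finset.sum_congr rfl fun j _ => by ring

lemma exists_sp {A : Matrix ι ι ℂ} (hA : A.IsHermitian) :
    ∃ (U : Matrix ι ι ℂ) (d : ι → ℝ), UN U ∧ A = sp U d ∧
      ∀ f : ℝ → ℝ, matFun f A = sp U (fun i => f (d i)) := by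
  refine ⟨hA.eigenvectorUnitary, hA.eigenvalues, ⟨?_, ?_⟩, ?_, ?_⟩
  · exact Unitary.coe_star_mul_self hA.eigenvectorUnitary
  · exact Unitary.coe_mul_star_self hA.eigenvectorUnitary
  · conv_lhs => rw [hA.spectral_theorem]
    rfl
  · intro f
    unfold matFun
    rw [dif_pos hA]
    rfl

lemma sp_fun_eq {U V : Matrix ι ι ℂ} (hU : UN U) (hV : UN V) {d e : ι → ℝ}
    (h : sp U d = sp V e) (f : ℝ → ℝ) :
    sp U (fun i => f (d i)) = sp V (fun i => f (e i)) := by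
  have key : (Vᴴ * U) * diagonal (fun i => (d i : ℂ)) = diagonal (fun i => (e i : ℂ)) * (Vᴴ * U) := by
    have h1 : Vᴴ * sp U d * U = Vᴴ * sp V e * U := by rw [h]
    unfold sp at h1
    calc (Vᴴ * U) * diagonal (fun i => (d i : ℂ))
        = Vᴴ * (U * diagonal (fun i => (d i : ℂ)) * Uᴴ) * U := by
          simp only [Matrix.mul_assoc, hU.1, Matrix.mul_one]
      _ = (Vᴴ * V) * diagonal (fun i => (e i : ℂ)) * Vᴴ * U := by
          rw [h1]; simp only [Matrix.mul_assoc]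
      _ = _ := by rw [hV.1, Matrix.one_mul, Matrix.mul_assoc]
  have key2 : (Vᴴ * U) * diagonal (fun i => (f (d i) : ℂ))
      = diagonal (fun i => (f (e i) : ℂ)) * (Vᴴ * U) := by
    ext i j
    have := congrFun (congrFun key i) j
    simp only [mul_diagonal, diagonal_mul] at this ⊢
    by_cases hz : (Vᴴ * U) i j = 0
    · simp [hz]
    · rw [mul_comm] at this
      have h3 := mul_right_cancel₀ hz this
      have h4 : d j = e i := by exact_mod_cast h3
      rw [h4, mul_comm]
  unfold sp
  calc U * diagonal (fun i => (f (d i) : ℂ)) * Uᴴ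
      = (V * Vᴴ) * U * diagonal (fun i => (f (d i) : ℂ)) * Uᴴ := by rw [hV.2, Matrix.one_mul]
    _ = V * ((Vᴴ * U) * diagonal (fun i => (f (d i) : ℂ))) * Uᴴ := by simp only [Matrix.mul_assoc]
    _ = V * diagonal (fun i => (f (e i) : ℂ)) * Vᴴ * (U * Uᴴ) := by
        rw [key2]; simp only [Matrix.mul_assoc]
    _ = _ := by rw [hU.2, Matrix.mul_one]

lemma matFun_sp {U : Matrix ι ι ℂ} (hU : UN U) (d : ι → ℝ) (f : ℝ → ℝ) :
    matFun f (sp U d) = sp U (fun i => f (d i)) := by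
  obtain ⟨V, e, hV, h1, h2⟩ := exists_sp (A := sp U d) (sp_herm U d)
  rw [h2 f]
  exact (sp_fun_eq hU hV h1 f).symm

lemma psd_sp {A : Matrix ι ι ℂ} (hA : A.PosSemidef) :
    ∃ (U : Matrix ι ι ℂ) (d : ι → ℝ), UN U ∧ (∀ i, 0 ≤ d i) ∧ A = sp U d := by
  obtain ⟨U, d, hU, h1, _⟩ := exists_sp hA.1
  refine ⟨U, d, hU, fun i => ?_, h1⟩
  rw [← qd_sp hU d i, ← h1]
  exact qd_nonneg U hA i

lemma density_sp {A : Matrix ι ι ℂ} (hA : IsDensity A) :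
    ∃ (U : Matrix ι ι ℂ) (d : ι → ℝ), UN U ∧ (∀ i, 0 ≤ d i) ∧ (∀ i, d i ≤ 1) ∧
      ∑ i, d i = 1 ∧ A = sp U d := by
  obtain ⟨U, d, hU, h0, h1⟩ := psd_sp hA.1
  have hs : ∑ i, d i = 1 := by
    rw [← rtr_sp hU, ← h1, rtr, hA.2]; simp
  refine ⟨U, d, hU, h0, fun i => ?_, hs, h1⟩
  rw [← hs]
  exact Finset.single_le_sum (fun j _ => h0 j) (Finset.mem_univ i)

lemma psd_factor {A : Matrix ι ι ℂ} (hA : A.PosSemidef) : ∃ Y : Matrix ι ι ℂ, A = Y * Yᴴ := by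
  obtain ⟨U, d, hU, h0, h1⟩ := psd_sp hA
  refine ⟨sp U (fun i => Real.sqrt (d i)), ?_⟩
  rw [sp_herm, sp_mul hU, h1]
  congr 1
  ext i
  exact (Real.mul_self_sqrt (h0 i)).symm

lemma rtr_nonneg {A : Matrix ι ι ℂ} (hA : A.PosSemidef) : 0 ≤ rtr A :=
  (Complex.le_def.1 hA.trace_nonneg).1

lemma rtr_mul_nonneg {A B : Matrix ι ι ℂ} (hA : A.PosSemidef) (hB : B.PosSemidef) :
    0 ≤ rtr (A * B) := by
  obtain ⟨Y, rfl⟩ := psd_factor hA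
  rw [Matrix.mul_assoc, rtr_comm]
  apply rtr_nonneg
  exact hB.conjTranspose_mul_mul_same Y

lemma rtr_mul_le {P A B : Matrix ι ι ℂ} (hP : P.PosSemidef) (h : (B - A).PosSemidef) :
    rtr (P * A) ≤ rtr (P * B) := by
  have := rtr_mul_nonneg hP h
  rw [Matrix.mul_sub, rtr_sub] at this
  linarith

lemma rtr_mul_le' {P A B : Matrix ι ι ℂ} (hP : P.PosSemidef) (h : (B - A).PosSemidef) :
    rtr (A * P) ≤ rtr (B * P) := by
  rw [rtr_comm A, rtr_comm B]
  exact rtr_mul_le hP h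

lemma sp_sub_psd (U : Matrix ι ι ℂ) {d e : ι → ℝ} (h : ∀ i, d i ≤ e i) :
    (sp U e - sp U d).PosSemidef := by
  rw [← sp_sub]
  exact sp_psd U fun i => sub_nonneg.2 (h i)

lemma psd_smul {A : Matrix ι ι ℂ} (hA : A.PosSemidef) {c : ℝ} (hc : 0 ≤ c) :
    ((c : ℂ) • A).PosSemidef := by
  apply hA.smul
  exact_mod_cast hc

/-- Domination implies support inclusion. -/
lemma suppLE_of_psd {A B : Matrix ι ι ℂ} (hA : A.PosSemidef) {c : ℝ}
    (h : ((c : ℂ) • B - A).PosSemidef) : SuppLE A B := by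
  intro v hv
  rw [← hA.dotProduct_mulVec_zero_iff]
  have h1 := h.dotProduct_mulVec_nonneg v
  have h2 := hA.dotProduct_mulVec_nonneg v
  rw [sub_mulVec, smul_mulVec, hv, smul_zero, zero_sub, dotProduct_neg] at h1
  exact le_antisymm (neg_nonneg.1 h1) h2

lemma suppLE_mul_zero {A B C : Matrix ι ι ℂ} (h : SuppLE A B) (hC : B * C = 0) : A * C = 0 := by
  ext i j
  have : B.mulVec (C.col j) = 0 := by
    ext k
    have := congrFun (congrFun hC k) j
    simpa [mul_apply, mulVec, dotProduct] using this
  have h2 := congrFun (h _ this) i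
  simpa [mul_apply, mulVec, dotProduct] using h2

lemma one_sub_density_psd {A : Matrix ι ι ℂ} (hA : IsDensity A) : (1 - A).PosSemidef := by
  obtain ⟨U, d, hU, h0, h1, hs, rfl⟩ := density_sp hA
  rw [← sp_one hU]
  exact sp_sub_psd U h1

/-- Support data for a support inclusion: a projection onto the support of `B`. -/
lemma suppLE_proj {A : Matrix ι ι ℂ} (hA : A.PosSemidef) {U : Matrix ι ι ℂ} (hU : UN U)
    {s : ι → ℝ} (h : SuppLE A (sp U s)) :
    sp U (fun i => if s i = 0 then 0 else 1) * A = A ∧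
    A * sp U (fun i => if s i = 0 then 0 else 1) = A := by
  have h1 : sp U s * sp U (fun i => if s i = 0 then 1 else 0) = 0 := by
    rw [sp_mul hU]
    have : (fun i => s i * (if s i = 0 then (1 : ℝ) else 0)) = fun _ => 0 := by
      ext i; by_cases hi : s i = 0 <;> simp [hi]
    rw [this]; simp [sp]
  have h2 := suppLE_mul_zero h h1
  have h3 : sp U (fun i => if s i = 0 then 1 else 0) =
      1 - sp U (fun i => if s i = 0 then 0 else 1) := by
    rw [← sp_one hU, ← sp_sub]
    congr 1; ext i; by_cases hi : s i = 0 <;> simp [hi]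
  rw [h3, Matrix.mul_sub, Matrix.mul_one, sub_eq_zero] at h2
  refine ⟨?_, h2.symm⟩
  have := congrArg conjTranspose h2
  rw [conjTranspose_mul, hA.1.eq, sp_herm] at this
  exact this.symm

lemma suppLE_dom {A B : Matrix ι ι ℂ} (hA : IsDensity A) (hB : B.PosSemidef) (h : SuppLE A B) :
    ∃ μ : ℝ, 0 ≤ μ ∧ ((μ : ℂ) • B - A).PosSemidef := by
  obtain ⟨U, s, hU, h0, rfl⟩ := psd_sp hB
  refine ⟨∑ j, (s j)⁻¹, Finset.sum_nonneg fun j _ => inv_nonneg.2 (h0 j), ?_⟩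
  set P := sp U (fun i => if s i = 0 then 0 else 1) with hP
  obtain ⟨h1, h2⟩ := suppLE_proj hA.1 hU h
  have hPA : P * (1 - A) * P = P - A := by
    rw [Matrix.mul_sub, Matrix.mul_one, h1, Matrix.sub_mul, h2, hP, sp_mul hU]
    congr 2; ext i; by_cases hi : s i = 0 <;> simp [hi]
  have hPA' : (P - A).PosSemidef := by
    rw [← hPA]
    have := (one_sub_density_psd hA).mul_mul_conjTranspose_same P
    rwa [hP, sp_herm, ← hP] at this
  have h3 : (((∑ j, (s j)⁻¹ : ℝ) : ℂ) • sp U s - P).PosSemidef := by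
    rw [← sp_smul]
    apply sp_sub_psd
    intro i
    by_cases hi : s i = 0
    · simp [hi]
    · simp only [hi, if_false]
      have h4 : (s i)⁻¹ ≤ ∑ j, (s j)⁻¹ :=
        Finset.single_le_sum (fun j _ => inv_nonneg.2 (h0 j)) (Finset.mem_univ i)
      calc 1 = (s i)⁻¹ * s i := (inv_mul_cancel₀ hi).symm
        _ ≤ _ := mul_le_mul_of_nonneg_right h4 (h0 i)
  have := h3.add hPA'
  rwa [sub_add_sub_cancel] at this

lemma relEnt_eq_rtr (ρ σ : Matrix ι ι ℂ) : relEnt ρ σ = rtr (ρ * matLog ρ) - rtr (ρ * matLog σ) := by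
  rw [← rtr_sub, ← Matrix.mul_sub]; rfl

lemma rtr_matLog_self {U : Matrix ι ι ℂ} (hU : UN U) (d : ι → ℝ) :
    rtr (sp U d * matLog (sp U d)) = ∑ i, d i * Real.log (d i) := by
  rw [matLog, matFun_sp hU, sp_mul hU, rtr_sp hU]

lemma rtr_matLog {V : Matrix ι ι ℂ} (hV : UN V) (A : Matrix ι ι ℂ) (e : ι → ℝ) :
    rtr (A * matLog (sp V e)) = ∑ j, qd V A j * Real.log (e j) := by
  rw [matLog, matFun_sp hV, rtr_comm, rtr_sp_mul]
  exact Finset.sum_congr rfl fun i _ => mul_comm _ _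

lemma suppLE_qd {A U : Matrix ι ι ℂ} (hA : A.PosSemidef) (hU : UN U) {s : ι → ℝ}
    (h : SuppLE A (sp U s)) {i : ι} (hi : s i = 0) : qd U A i = 0 := by
  obtain ⟨h1, h2⟩ := suppLE_proj hA hU h
  unfold qd
  rw [← h1]
  have : Uᴴ * (sp U (fun i => if s i = 0 then 0 else 1) * A) * U
     = diagonal (fun i => (((if s i = 0 then 0 else 1 : ℝ)) : ℂ)) * (Uᴴ * A * U) := by
    unfold sp
    calc _ = (Uᴴ * U) * diagonal (fun i => (((if s i = 0 then 0 else 1 : ℝ)) : ℂ)) * (Uᴴ * A * U) := by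
          simp only [Matrix.mul_assoc]
      _ = _ := by rw [hU.1, Matrix.one_mul]
  rw [this, diagonal_mul]
  simp [hi]

/-- scalar Klein inequality -/
lemma klein_scalar {r s : ℝ} (hr : 0 ≤ r) (hs : 0 < s) (hr1 : r ≤ 1) (hs1 : s ≤ 1) :
    (r - s) ^ 2 / 4 ≤ r * Real.log r - r * Real.log s - r + s := by
  rcases hr.eq_or_lt with h | h
  · subst h; simp; nlinarith
  · have h1 : Real.log (Real.sqrt s / Real.sqrt r) ≤ Real.sqrt s / Real.sqrt r - 1 :=
      Real.log_le_sub_one_of_pos (by positivity)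
    rw [Real.log_div (by positivity) (by positivity), Real.log_sqrt hs.le, Real.log_sqrt hr] at h1
    set a := Real.sqrt r with ha
    set b := Real.sqrt s with hb
    have ha0 : 0 < a := Real.sqrt_pos.2 h
    have hb0 : 0 < b := Real.sqrt_pos.2 hs
    have ha2 : a ^ 2 = r := Real.sq_sqrt hr
    have hb2 : b ^ 2 = s := Real.sq_sqrt hs.le
    have ha1 : a ≤ 1 := by rw [ha]; exact Real.sqrt_le_one.2 hr1
    have hb1 : b ≤ 1 := by rw [hb]; exact Real.sqrt_le_one.2 hs1
    have h2 : r * (Real.log s / 2 - Real.log r / 2) ≤ r * (b / a - 1) :=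
      mul_le_mul_of_nonneg_left h1 hr
    have h3 : r * (b / a) = a * b := by rw [← ha2]; field_simp
    have h4 : (a - b) ^ 2 ≤ r * Real.log r - r * Real.log s - r + s := by nlinarith
    have h5 : (r - s) ^ 2 / 4 ≤ (a - b) ^ 2 := by
      rw [← ha2, ← hb2]
      have h6 : (a + b) ^ 2 ≤ 4 := by nlinarith
      nlinarith [mul_nonneg (sq_nonneg (a - b)) (sub_nonneg.2 h6)]
    linarith

/-- Quantum Klein / Pinsker type inequality. -/
lemma klein {ρ σ : Matrix ι ι ℂ} (hρ : IsDensity ρ) (hσ : IsDensity σ) (h : SuppLE ρ σ) :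
    rtr ((ρ - σ) * (ρ - σ)) / 4 ≤ relEnt ρ σ := by
  obtain ⟨U, r, hU, hr0, hr1, hrs, rfl⟩ := density_sp hρ
  obtain ⟨V, s, hV, hs0, hs1, hss, rfl⟩ := density_sp hσ
  have hq : ∀ i j, s j = 0 → r i * ov U V i j = 0 := by
    intro i j hj
    have h1 := suppLE_qd hρ.1 hV h hj
    rw [qd_sp_ov] at h1
    exact (Finset.sum_eq_zero_iff_of_nonneg
      (fun i _ => mul_nonneg (hr0 i) (ov_nonneg _ _ _ _))).1 h1 i (Finset.mem_univ i)
  have e1 : ∑ i, r i * Real.log (r i) = ∑ i, ∑ j, r i * Real.log (r i) * ov U V i j := by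
    refine Finset.sum_congr rfl fun i _ => ?_
    rw [← Finset.mul_sum, ov_sum_right hU hV, mul_one]
  have e2 : ∑ i, r i = ∑ i, ∑ j, r i * ov U V i j := by
    refine Finset.sum_congr rfl fun i _ => ?_
    rw [← Finset.mul_sum, ov_sum_right hU hV, mul_one]
  have e3 : ∑ j, s j = ∑ i, ∑ j, s j * ov U V i j := by
    rw [Finset.sum_comm]
    refine Finset.sum_congr rfl fun j _ => ?_
    rw [← Finset.mul_sum, ov_sum_left hU hV, mul_one]
  have e4 : ∑ i, r i * r i = ∑ i, ∑ j, r i * r i * ov U V i j := by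
    refine Finset.sum_congr rfl fun i _ => ?_
    rw [← Finset.mul_sum, ov_sum_right hU hV, mul_one]
  have e5 : ∑ j, s j * s j = ∑ i, ∑ j, s j * s j * ov U V i j := by
    rw [Finset.sum_comm]
    refine Finset.sum_congr rfl fun j _ => ?_
    rw [← Finset.mul_sum, ov_sum_left hU hV, mul_one]
  have e6 : relEnt (sp U r) (sp V s) = ∑ i, ∑ j, (r i * Real.log (r i) - r i * Real.log (s j)
      - r i + s j) * ov U V i j := by
    rw [relEnt_eq_rtr, rtr_matLog_self hU, matLog, matFun_sp hV, rtr_sp_sp, e1]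
    have : ∑ i, ∑ j, (r i * Real.log (r i) - r i * Real.log (s j)
      - r i + s j) * ov U V i j = ∑ i, ∑ j, r i * Real.log (r i) * ov U V i j
      - ∑ i, ∑ j, r i * Real.log (s j) * ov U V i j - ∑ i, ∑ j, r i * ov U V i j
      + ∑ i, ∑ j, s j * ov U V i j := by
      simp only [← Finset.sum_sub_distrib, ← Finset.sum_add_distrib]
      refine Finset.sum_congr rfl fun i _ => Finset.sum_congr rfl fun j _ => by ring
    rw [this, ← e2, ← e3, hrs, hss]; ring
  have e7 : rtr ((sp U r - sp V s) * (sp U r - sp V s)) = ∑ i, ∑ j, (r i - s j) ^ 2 * ov U V i j := by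
    have h1 : (sp U r - sp V s) * (sp U r - sp V s) = sp U r * sp U r - sp U r * sp V s
      - sp V s * sp U r + sp V s * sp V s := by noncomm_ring
    rw [h1, rtr_add, rtr_sub, rtr_sub, rtr_comm (sp V s) (sp U r), sp_mul hU, sp_mul hV, rtr_sp_sp,
      rtr_sp hU, rtr_sp hV, e4, e5]
    simp only [← Finset.sum_sub_distrib, ← Finset.sum_add_distrib]
    refine Finset.sum_congr rfl fun i _ => Finset.sum_congr rfl fun j _ => by ring
  rw [e6, e7, Finset.sum_div]
  refine Finset.sum_le_sum fun i _ => ?_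
  rw [Finset.sum_div]
  refine Finset.sum_le_sum fun j _ => ?_
  rcases (hs0 j).eq_or_lt with hj | hj
  · have h1 := hq i j hj.symm
    rcases mul_eq_zero.1 h1 with h2 | h2
    · rw [h2, ← hj]; simp
    · rw [h2]; simp
  · have := mul_le_mul_of_nonneg_right (klein_scalar (hr0 i) hj (hr1 i) (hs1 j)) (ov_nonneg U V i j)
    linarith

lemma rtr_herm_sq {A : Matrix ι ι ℂ} (hA : A.IsHermitian) : 0 ≤ rtr (A * A) ∧
    (rtr (A * A) = 0 → A = 0) := by
  obtain ⟨U, d, hU, rfl, _⟩ := exists_sp hA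
  rw [sp_mul hU, rtr_sp hU]
  refine ⟨Finset.sum_nonneg fun i _ => mul_self_nonneg _, fun h => ?_⟩
  rw [Finset.sum_eq_zero_iff_of_nonneg fun i _ => mul_self_nonneg _] at h
  have : d = fun _ => 0 := by
    ext i; exact mul_self_eq_zero.1 (h i (Finset.mem_univ i))
  rw [this]; simp [sp]

lemma relEnt_nonneg {ρ σ : Matrix ι ι ℂ} (hρ : IsDensity ρ) (hσ : IsDensity σ) (h : SuppLE ρ σ) :
    0 ≤ relEnt ρ σ := by
  have := klein hρ hσ h
  have h2 := (rtr_herm_sq (hρ.1.1.sub hσ.1.1)).1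
  linarith

end Basics

section KronSec

variable {β : Type*} [Fintype β] [DecidableEq β] {n : ℕ}

/-- Tensor product of a family of matrices. -/
def kron (A : Fin n → Matrix β β ℂ) : Matrix (Fin n → β) (Fin n → β) ℂ :=
  of fun a b => ∏ i, A i (a i) (b i)

lemma kron_apply (A : Fin n → Matrix β β ℂ) (a b : Fin n → β) :
    kron A a b = ∏ i, A i (a i) (b i) := rfl

lemma tpow_eq_kron (ω : Matrix β β ℂ) : tpow ω n = kron (fun _ : Fin n => ω) := rfl

lemma stringState_eq_kron {d : ℕ} (ω : Fin d → Matrix β β ℂ) (x : Fin n → Fin d) :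
    stringState ω x = kron (fun i => ω (x i)) := rfl

lemma kron_mul (A B : Fin n → Matrix β β ℂ) : kron A * kron B = kron (fun i => A i * B i) := by
  ext a b
  simp only [mul_apply, kron_apply, ← Finset.prod_mul_distrib]
  rw [Finset.prod_univ_sum]
  simp

lemma kron_conjTranspose (A : Fin n → Matrix β β ℂ) : (kron A)ᴴ = kron (fun i => (A i)ᴴ) := by
  ext a b
  simp [conjTranspose_apply, kron_apply]

lemma kron_diagonal (d : Fin n → β → ℂ) :
    kron (fun i => diagonal (d i)) = diagonal (fun b => ∏ i, d i (b i)) := by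
  ext a b
  simp only [kron_apply, diagonal_apply]
  by_cases h : a = b
  · simp [h]
  · rw [if_neg h]
    obtain ⟨i, hi⟩ := Function.ne_iff.1 h
    exact Finset.prod_eq_zero (Finset.mem_univ i) (if_neg hi)

lemma kron_one : kron (fun _ : Fin n => (1 : Matrix β β ℂ)) = 1 := by
  have := kron_diagonal (n := n) (β := β) (fun _ _ => 1)
  simpa using this

lemma trace_kron (A : Fin n → Matrix β β ℂ) : (kron A).trace = ∏ i, (A i).trace := by
  simp only [trace, diag_apply, kron_apply]
  rw [Finset.prod_univ_sum]
  simp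

lemma kron_sum {κ : Type*} [Fintype κ] (A : Fin n → κ → Matrix β β ℂ) :
    kron (fun i => ∑ j, A i j) = ∑ y : Fin n → κ, kron (fun i => A i (y i)) := by
  ext a b
  simp only [kron_apply, Matrix.sum_apply]
  rw [Finset.prod_univ_sum]
  simp

lemma kron_smul (c : Fin n → ℂ) (A : Fin n → Matrix β β ℂ) :
    kron (fun i => c i • A i) = (∏ i, c i) • kron A := by
  ext a b
  simp [kron_apply, Finset.prod_mul_distrib]

lemma kron_UN {G : Fin n → Matrix β β ℂ} (h : ∀ i, UN (G i)) : UN (kron G) := by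
  refine ⟨?_, ?_⟩
  · rw [kron_conjTranspose, kron_mul]
    simp only [(h _).1, kron_one]
  · rw [kron_conjTranspose, kron_mul]
    simp only [(h _).2, kron_one]

lemma kron_sp (G : Fin n → Matrix β β ℂ) (d : Fin n → β → ℝ) :
    kron (fun i => sp (G i) (d i)) = sp (kron G) (fun b => ∏ i, d i (b i)) := by
  unfold sp
  rw [← kron_mul, ← kron_mul, ← kron_conjTranspose, kron_diagonal]
  simp

lemma kron_psd {A : Fin n → Matrix β β ℂ} (h : ∀ i, (A i).PosSemidef) : (kron A).PosSemidef := by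
  choose Y hY using fun i => psd_factor (h i)
  have : kron A = kron Y * (kron Y)ᴴ := by
    rw [kron_conjTranspose, kron_mul]
    congr 1; ext1 i; exact hY i
  rw [this]
  exact posSemidef_self_mul_conjTranspose _

lemma kron_density {A : Fin n → Matrix β β ℂ} (h : ∀ i, IsDensity (A i)) : IsDensity (kron A) := by
  refine ⟨kron_psd fun i => (h i).1, ?_⟩
  rw [trace_kron]
  exact Finset.prod_eq_one fun i _ => (h i).2

lemma kron_mono {A B : Fin n → Matrix β β ℂ} (hA : ∀ i, (A i).PosSemidef)
    (h : ∀ i, (B i - A i).PosSemidef) : (kron B - kron A).PosSemidef := by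
  let C : Fin n → Fin 2 → Matrix β β ℂ := fun i j => if j = 0 then A i else B i - A i
  have h1 : kron B = ∑ y : Fin n → Fin 2, kron (fun i => C i (y i)) := by
    rw [← kron_sum]
    congr 1; ext1 i
    simp [C, Fin.sum_univ_two]
  have h2 : kron A = kron (fun i => C i ((fun _ => 0 : Fin n → Fin 2) i)) := by
    simp [C]
  rw [h1, h2, ← Finset.add_sum_erase Finset.univ _ (Finset.mem_univ (fun _ => 0 : Fin n → Fin 2)),
    add_sub_cancel_left]
  apply posSemidef_sum
  intro y _
  apply kron_psd
  intro i
  by_cases hy : y i = 0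
  · simp [C, hy, hA i]
  · simp [C, hy, h i]

lemma qd_complex (U : Matrix β β ℂ) {A : Matrix β β ℂ} (hA : A.IsHermitian) (i : β) :
    (Uᴴ * A * U) i i = (qd U A i : ℂ) := by
  have h : (Uᴴ * A * U).IsHermitian := isHermitian_conjTranspose_mul_mul U hA
  have := h.coe_re_apply_self i
  exact this.symm

lemma qd_kron (G : Fin n → Matrix β β ℂ) {R : Fin n → Matrix β β ℂ}
    (hR : ∀ i, (R i).IsHermitian) (b : Fin n → β) :
    qd (kron G) (kron R) b = ∏ i, qd (G i) (R i) (b i) := by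
  rw [qd, kron_conjTranspose, kron_mul, kron_mul, kron_apply]
  simp only [qd_complex _ (hR _)]
  rw [← Complex.ofReal_prod, Complex.ofReal_re]

lemma rtr_density {A : Matrix β β ℂ} (h : IsDensity A) : rtr A = 1 := by simp [rtr, h.2]

lemma kron_matLog {τ : Matrix β β ℂ} (hτ : τ.PosSemidef) {R : Fin n → Matrix β β ℂ}
    (hR : ∀ i, IsDensity (R i)) (h : ∀ i, SuppLE (R i) τ) :
    rtr (kron R * matLog (tpow τ n)) = ∑ i, rtr (R i * matLog τ) := by
  obtain ⟨U, t, hU, ht0, rfl⟩ := psd_sp hτ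
  rw [tpow_eq_kron, kron_sp, rtr_matLog (kron_UN fun _ => hU)]
  have h1 : ∀ b : Fin n → β, qd (kron fun _ => U) (kron R) b * Real.log (∏ i, t (b i))
      = ∑ i, qd (kron fun _ => U) (kron R) b * Real.log (t (b i)) := by
    intro b
    rw [qd_kron _ (fun i => (hR i).1.1)]
    by_cases hz : ∃ i, t (b i) = 0
    · obtain ⟨i, hi⟩ := hz
      have : ∏ i, qd U (R i) (b i) = 0 :=
        Finset.prod_eq_zero (Finset.mem_univ i) (suppLE_qd (hR i).1 hU (h i) hi)
      simp [this]
    · push Not at hz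
      rw [Real.log_prod (fun i _ => hz i), Finset.mul_sum]
  simp only [h1]
  rw [Finset.sum_comm]
  refine Finset.sum_congr rfl fun i _ => ?_
  rw [rtr_matLog hU]
  simp only [qd_kron (fun _ => U) (fun i => (hR i).1.1)]
  have h2 : ∀ b : Fin n → β, (∏ k, qd U (R k) (b k)) * Real.log (t (b i))
      = ∏ k, (qd U (R k) (b k) * if k = i then Real.log (t (b k)) else 1) := by
    intro b
    rw [Finset.prod_mul_distrib, Finset.prod_ite_eq']
    simp
  simp only [h2]
  have h3 := Finset.prod_univ_sum (fun _ : Fin n => (Finset.univ : Finset β))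
    (fun k b => qd U (R k) b * if k = i then Real.log (t b) else 1)
  rw [Fintype.piFinset_univ] at h3
  rw [← h3, ← Finset.mul_prod_erase Finset.univ _ (Finset.mem_univ i)]
  simp only [if_true]
  rw [Finset.prod_eq_one, mul_one]
  intro k hk
  rw [Finset.mem_erase] at hk
  simp only [hk.1, if_false, mul_one]
  rw [qd_sum hU, rtr_density (hR k)]

lemma SuppLE.refl' (A : Matrix β β ℂ) : SuppLE A A := fun _ h => h

lemma relEnt_tpow {ρ τ : Matrix β β ℂ} (hρ : IsDensity ρ) (hτ : τ.PosSemidef) (h : SuppLE ρ τ) :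
    relEnt (tpow ρ n) (tpow τ n) = n * relEnt ρ τ := by
  rw [relEnt_eq_rtr, relEnt_eq_rtr]
  have h1 := kron_matLog (n := n) hτ (fun _ => hρ) (fun _ => h)
  have h2 := kron_matLog (n := n) hρ.1 (fun _ => hρ) (fun _ => SuppLE.refl' ρ)
  rw [← tpow_eq_kron] at h1 h2
  rw [h1, h2]
  simp
  ring

end KronSec

section Willie

variable {β : Type*} [Fintype β] [DecidableEq β] {n : ℕ}

/-- The mixture `a ω₁ + (1-a) ω₀`. -/
def mix (ω : Fin 2 → Matrix β β ℂ) (a : ℝ) : Matrix β β ℂ :=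
  (a : ℂ) • ω 1 + ((1 - a : ℝ) : ℂ) • ω 0

/-- Hamming weight of a binary string. -/
def wt (x : Fin n → Fin 2) : ℝ := ∑ i, if x i = 1 then (1 : ℝ) else 0

lemma density_mix {ω : Fin 2 → Matrix β β ℂ} (hω : ∀ y, IsDensity (ω y)) {a : ℝ}
    (h0 : 0 ≤ a) (h1 : a ≤ 1) : IsDensity (mix ω a) := by
  refine ⟨(psd_smul (hω 1).1 h0).add (psd_smul (hω 0).1 (sub_nonneg.2 h1)), ?_⟩
  simp [mix, trace_add, trace_smul, (hω 1).2, (hω 0).2]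

lemma density_avg {T : Type*} [Fintype T] [Nonempty T] {A : T → Matrix β β ℂ}
    (hA : ∀ t, IsDensity (A t)) :
    IsDensity ((((Fintype.card T : ℝ)⁻¹ : ℝ) : ℂ) • ∑ t, A t) := by
  refine ⟨psd_smul (posSemidef_sum _ fun t _ => (hA t).1) (by positivity), ?_⟩
  rw [trace_smul, trace_sum]
  simp [(hA _).2]

lemma SuppLE.add' {A B C : Matrix β β ℂ} (h1 : SuppLE A C) (h2 : SuppLE B C) : SuppLE (A + B) C := by
  intro v hv
  rw [add_mulVec, h1 v hv, h2 v hv, add_zero]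

lemma SuppLE.smul' {A C : Matrix β β ℂ} (c : ℂ) (h1 : SuppLE A C) : SuppLE (c • A) C := by
  intro v hv
  rw [smul_mulVec, h1 v hv, smul_zero]

lemma SuppLE.sum' {T : Type*} (s : Finset T) {A : T → Matrix β β ℂ} {C : Matrix β β ℂ}
    (h1 : ∀ t, SuppLE (A t) C) : SuppLE (∑ t ∈ s, A t) C := by
  intro v hv
  rw [sum_mulVec]
  exact Finset.sum_eq_zero fun t _ => h1 t v hv

lemma suppLE_letter {ω : Fin 2 → Matrix β β ℂ} (h : SuppLE (ω 1) (ω 0)) (y : Fin 2) :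
    SuppLE (ω y) (ω 0) := by
  fin_cases y
  · exact SuppLE.refl' _
  · exact h

lemma suppLE_mix {ω : Fin 2 → Matrix β β ℂ} (h : SuppLE (ω 1) (ω 0)) (a : ℝ) :
    SuppLE (mix ω a) (ω 0) :=
  (h.smul' _).add' ((SuppLE.refl' _).smul' _)

lemma letter_dom {ω : Fin 2 → Matrix β β ℂ} (hω : ∀ y, IsDensity (ω y)) {a : ℝ}
    (h0 : 0 < a) (h1 : a < 1) :
    ∃ c : ℝ, 0 < c ∧ ∀ y, ((c : ℂ) • mix ω a - ω y).PosSemidef := by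
  refine ⟨a⁻¹ + (1 - a)⁻¹, by have := sub_pos.2 h1; positivity, fun y => ?_⟩
  have h1' := sub_pos.2 h1
  have e : ((a⁻¹ + (1 - a)⁻¹ : ℝ) : ℂ) • mix ω a =
      ((((a⁻¹ + (1 - a)⁻¹) * a : ℝ)) : ℂ) • ω 1 + ((((a⁻¹ + (1 - a)⁻¹) * (1 - a) : ℝ)) : ℂ) • ω 0 := by
    rw [mix, smul_add, smul_smul, smul_smul]; push_cast; rfl
  have ea : (a⁻¹ + (1 - a)⁻¹) * a = 1 + a / (1 - a) := by field_simp
  have eb : (a⁻¹ + (1 - a)⁻¹) * (1 - a) = 1 + (1 - a) / a := by field_simp; ring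
  rw [e, ea, eb]
  have hp1 : 0 ≤ a / (1 - a) := by positivity
  have hp2 : 0 ≤ (1 - a) / a := by positivity
  fin_cases y
  · have : ((1 + a / (1 - a) : ℝ) : ℂ) • ω 1 + ((1 + (1 - a) / a : ℝ) : ℂ) • ω 0 - ω 0
      = ((1 + a / (1 - a) : ℝ) : ℂ) • ω 1 + (((1 - a) / a : ℝ) : ℂ) • ω 0 := by
      push_cast; module
    change (((1 + a / (1 - a) : ℝ) : ℂ) • ω 1 + ((1 + (1 - a) / a : ℝ) : ℂ) • ω 0 - ω 0).PosSemidef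
    rw [this]
    exact (psd_smul (hω 1).1 (by positivity)).add (psd_smul (hω 0).1 hp2)
  · have : ((1 + a / (1 - a) : ℝ) : ℂ) • ω 1 + ((1 + (1 - a) / a : ℝ) : ℂ) • ω 0 - ω 1
      = ((a / (1 - a) : ℝ) : ℂ) • ω 1 + ((1 + (1 - a) / a : ℝ) : ℂ) • ω 0 := by
      push_cast; module
    change (((1 + a / (1 - a) : ℝ) : ℂ) • ω 1 + ((1 + (1 - a) / a : ℝ) : ℂ) • ω 0 - ω 1).PosSemidef
    rw [this]
    exact (psd_smul (hω 1).1 hp1).add (psd_smul (hω 0).1 (by positivity))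

lemma willie_conv {T : Type*} [Fintype T] [Nonempty T] {ω : Fin 2 → Matrix β β ℂ}
    (hω : ∀ y, IsDensity (ω y)) (hs : SuppLE (ω 1) (ω 0)) {a : ℝ} (h0 : 0 < a) (h1 : a < 1)
    (X : T → Fin n → Fin 2) (hW : (Fintype.card T : ℝ) * (n * a) ≤ ∑ t, wt (X t)) :
    n * relEnt (mix ω a) (ω 0) ≤
      relEnt ((((Fintype.card T : ℝ)⁻¹ : ℝ) : ℂ) • ∑ t, kron (fun i => ω (X t i))) (tpow (ω 0) n) := by
  set τ := mix ω a with hτ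
  have hτd : IsDensity τ := density_mix hω h0.le h1.le
  set ρ := (((Fintype.card T : ℝ)⁻¹ : ℝ) : ℂ) • ∑ t, kron (fun i => ω (X t i)) with hρ
  have hρd : IsDensity ρ := density_avg fun t => kron_density fun i => hω _
  obtain ⟨c, hc, hdom⟩ := letter_dom hω h0 h1
  have hst : ∀ y, SuppLE (ω y) τ := fun y => suppLE_of_psd (hω y).1 (hdom y)
  have hsn : SuppLE ρ (tpow τ n) := by
    apply SuppLE.smul'
    apply SuppLE.sum'
    intro t
    apply suppLE_of_psd (c := c ^ n) (kron_psd fun i => (hω _).1)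
    have h3 : ((c ^ n : ℝ) : ℂ) • tpow τ n = kron (fun _ : Fin n => (c : ℂ) • τ) := by
      rw [kron_smul]; simp [tpow_eq_kron]
    rw [h3]
    exact kron_mono (fun i => (hω _).1) (fun i => hdom _)
  have hkl := relEnt_nonneg hρd (tpow_eq_kron τ ▸ kron_density fun _ => hτd) hsn
  -- linear functional
  let ℓ : Fin 2 → ℝ := fun y => rtr (ω y * matLog τ) - rtr (ω y * matLog (ω 0))
  have e1 : ∀ υ : Matrix β β ℂ, υ.PosSemidef → (∀ y, SuppLE (ω y) υ) →
      rtr (ρ * matLog (tpow υ n)) = (Fintype.card T : ℝ)⁻¹ * ∑ t, ∑ i, rtr (ω (X t i) * matLog υ) := by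
    intro υ hυ hsυ
    rw [hρ, Matrix.smul_mul, rtr_smul, Finset.sum_mul, rtr_sum]
    congr 1
    refine Finset.sum_congr rfl fun t _ => ?_
    exact kron_matLog hυ (fun i => hω _) fun i => hsυ _
  have e2 : relEnt ρ (tpow (ω 0) n) = relEnt ρ (tpow τ n)
      + (Fintype.card T : ℝ)⁻¹ * ∑ t, ∑ i, ℓ (X t i) := by
    rw [relEnt_eq_rtr, relEnt_eq_rtr, e1 τ hτd.1 hst, e1 (ω 0) (hω 0).1 (suppLE_letter hs)]
    simp only [ℓ, Finset.sum_sub_distrib]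
    ring
  have hD0 : ℓ 0 ≤ 0 := by
    have := relEnt_nonneg (hω 0) hτd (hst 0)
    rw [relEnt_eq_rtr] at this
    simp only [ℓ]; linarith
  have hg : relEnt τ (ω 0) = a * ℓ 1 + (1 - a) * ℓ 0 := by
    have : ∀ L : Matrix β β ℂ, rtr (τ * L) = a * rtr (ω 1 * L) + (1 - a) * rtr (ω 0 * L) := by
      intro L
      rw [hτ, mix, Matrix.add_mul, Matrix.smul_mul, Matrix.smul_mul, rtr_add, rtr_smul, rtr_smul]
    rw [relEnt_eq_rtr, this, this]
    simp only [ℓ]; ring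
  have hg0 : 0 ≤ relEnt τ (ω 0) := relEnt_nonneg hτd (hω 0) (suppLE_mix hs a)
  have e3 : ∀ t, ∑ i, ℓ (X t i) = n * ℓ 0 + wt (X t) * (ℓ 1 - ℓ 0) := by
    intro t
    have : ∀ i, ℓ (X t i) = ℓ 0 + (if X t i = 1 then 1 else 0) * (ℓ 1 - ℓ 0) := by
      intro i
      generalize X t i = y
      fin_cases y <;> simp
    simp only [this, Finset.sum_add_distrib, ← Finset.sum_mul, wt]
    simp
  have hdiff : 0 ≤ ℓ 1 - ℓ 0 := by
    have h5 : 0 ≤ a * (ℓ 1 - ℓ 0) := by linarith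
    exact nonneg_of_mul_nonneg_right h5 h0
  have hcard : (0 : ℝ) < Fintype.card T := by exact_mod_cast Fintype.card_pos
  rw [e2]
  simp only [e3, Finset.sum_add_distrib, ← Finset.sum_mul]
  have h6 : (n * a) * (ℓ 1 - ℓ 0) ≤ (Fintype.card T : ℝ)⁻¹ * ((∑ t, wt (X t)) * (ℓ 1 - ℓ 0)) := by
    rw [← mul_assoc]
    apply mul_le_mul_of_nonneg_right _ hdiff
    rw [← div_eq_inv_mul, le_div_iff₀ hcard]
    linarith
  have h7 : (Fintype.card T : ℝ)⁻¹ * ((∑ _t : T, (n : ℝ)) * ℓ 0) = n * ℓ 0 := by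
    simp only [Finset.sum_const, Finset.card_univ, nsmul_eq_mul]
    field_simp
  rw [mul_add, h7, hg]
  linarith

end Willie

section PT
variable {α β : Type*} [Fintype α] [Fintype β] [DecidableEq α] [DecidableEq β]

lemma ptraceRight_density {ρ : Matrix (α × β) (α × β) ℂ} (h : IsDensity ρ) :
    IsDensity (ptraceRight ρ) := by
  have e : ptraceRight ρ = ∑ b, ρ.submatrix (fun a => (a, b)) (fun a => (a, b)) := by
    ext a a'
    simp [ptraceRight, Matrix.sum_apply]
  refine ⟨?_, ?_⟩
  · rw [e]; exact posSemidef_sum _ fun b _ => h.1.submatrix _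
  · rw [← h.2]; simp [ptraceRight, trace, Fintype.sum_prod_type]

lemma ptraceLeft_density {ρ : Matrix (α × β) (α × β) ℂ} (h : IsDensity ρ) :
    IsDensity (ptraceLeft ρ) := by
  have e : ptraceLeft ρ = ∑ a, ρ.submatrix (fun b => (a, b)) (fun b => (a, b)) := by
    ext a a'
    simp [ptraceLeft, Matrix.sum_apply]
  refine ⟨?_, ?_⟩
  · rw [e]; exact posSemidef_sum _ fun b _ => h.1.submatrix _
  · rw [← h.2]; simp [ptraceLeft, trace, Fintype.sum_prod_type_right]

end PT

section Taylor

variable {β : Type*} [Fintype β] [DecidableEq β]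

open scoped Matrix.Norms.L2Operator

lemma sp_norm_lt {U : Matrix β β ℂ} (hU : UN U) {d : β → ℝ} (h : ∀ i, |d i| < 1) :
    ‖sp U d‖ < 1 := by
  have hUn : U ∈ unitary (Matrix β β ℂ) := by
    rw [Unitary.mem_iff]; exact hU
  have e : ‖sp U d‖ = ‖(diagonal (fun i => (d i : ℂ)) : Matrix β β ℂ)‖ := by
    unfold sp
    have h1 := CStarRing.norm_mul_coe_unitary (U * diagonal (fun i => (d i : ℂ)))
      (⟨Uᴴ, Unitary.star_mem hUn⟩ : unitary (Matrix β β ℂ))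
    have h2 := CStarRing.norm_coe_unitary_mul (⟨U, hUn⟩ : unitary (Matrix β β ℂ))
      (diagonal (fun i => (d i : ℂ)))
    exact h1.trans h2
  rw [e, Matrix.l2_opNorm_diagonal, pi_norm_lt_iff one_pos]
  intro i
  rw [Complex.norm_real]; exact h i

lemma analytic_series (A N Δ : Matrix β β ℂ) (hN : ‖N‖ < 1) :
    ∃ r : ℝ, 0 < r ∧ AnalyticAt ℂ (fun z : ℂ => ∑' k : ℕ,
      ((A + z • Δ) * (N - z • Δ) ^ (k + 1)).trace / ((k : ℂ) + 1)) 0 ∧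
      ∀ z : ℂ, ‖z‖ < r → Summable (fun k : ℕ =>
        ((A + z • Δ) * (N - z • Δ) ^ (k + 1)).trace / ((k : ℂ) + 1)) := by
  obtain ⟨q, hq1, hq2⟩ := exists_between hN
  have hq0 : 0 ≤ q := (norm_nonneg N).trans hq1.le
  set r := (q - ‖N‖) / (‖Δ‖ + 1) with hr
  have hr0 : 0 < r := div_pos (sub_pos.2 hq1) (by positivity)
  have hrΔ : r * ‖Δ‖ ≤ q - ‖N‖ := by
    rw [hr, div_mul_eq_mul_div, div_le_iff₀ (by positivity)]
    have := sub_pos.2 hq1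
    nlinarith
  let tr : Matrix β β ℂ →L[ℂ] ℂ := LinearMap.toContinuousLinearMap (Matrix.traceLinearMap β ℂ ℂ)
  have htr : ∀ X, tr X = X.trace := fun X => rfl
  have hbound : ∀ (k : ℕ) (z : ℂ), z ∈ Metric.ball (0 : ℂ) r →
      ‖((A + z • Δ) * (N - z • Δ) ^ (k + 1)).trace / ((k : ℂ) + 1)‖ ≤
        ‖tr‖ * ((‖A‖ + r * ‖Δ‖) * q ^ (k + 1)) := by
    intro k z hz
    rw [mem_ball_zero_iff] at hz
    rw [norm_div]
    have h1 : (1 : ℝ) ≤ ‖(k : ℂ) + 1‖ := by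
      have : ((k : ℂ) + 1) = ((k + 1 : ℕ) : ℂ) := by push_cast; rfl
      rw [this, Complex.norm_natCast]; push_cast; linarith [Nat.cast_nonneg (α := ℝ) k]
    refine (div_le_self (norm_nonneg _) h1).trans ?_
    rw [← htr]
    refine (tr.le_opNorm _).trans ?_
    gcongr
    have hzΔ : ‖z • Δ‖ ≤ r * ‖Δ‖ := by
      rw [norm_smul]; gcongr
    refine (norm_mul_le _ _).trans ?_
    gcongr
    · exact (norm_add_le _ _).trans (by linarith)
    · refine (norm_pow_le' _ (Nat.succ_pos k)).trans ?_
      gcongr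
      exact (norm_sub_le _ _).trans (by linarith)
  have hsum : Summable fun k : ℕ => ‖tr‖ * ((‖A‖ + r * ‖Δ‖) * q ^ (k + 1)) := by
    refine Summable.mul_left _ (Summable.mul_left _ ?_)
    exact (summable_nat_add_iff 1).2 (summable_geometric_of_lt_one hq0 hq2)
  refine ⟨r, hr0, ?_, ?_⟩
  · have hd : DifferentiableOn ℂ (fun z : ℂ => ∑' k : ℕ,
      ((A + z • Δ) * (N - z • Δ) ^ (k + 1)).trace / ((k : ℂ) + 1)) (Metric.ball 0 r) := by
      refine Complex.differentiableOn_tsum_of_summable_norm hsum ?_ Metric.isOpen_ball hbound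
      intro k
      apply Differentiable.differentiableOn
      apply Differentiable.div_const
      have : Differentiable ℂ fun z : ℂ => ((A + z • Δ) * (N - z • Δ) ^ (k + 1)) := by fun_prop
      exact tr.differentiable.comp this
    exact hd.analyticAt (Metric.ball_mem_nhds _ hr0)
  · intro z hz
    exact Summable.of_norm_bounded hsum fun k => hbound k z (mem_ball_zero_iff.2 hz)

/-- real-variable divergence curve -/
def gD (ω : Fin 2 → Matrix β β ℂ) (a : ℝ) : ℝ := relEnt (mix ω a) (ω 0)

lemma density_mix_near {ω : Fin 2 → Matrix β β ℂ} (hω : ∀ y, IsDensity (ω y))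
    (hs : SuppLE (ω 1) (ω 0)) : ∀ᶠ a : ℝ in nhds 0, IsDensity (mix ω a) := by
  obtain ⟨μ, hμ, hd⟩ := suppLE_dom (hω 1) (hω 0).1 hs
  have : Set.Ioo (-(μ + 1)⁻¹) 1 ∈ nhds (0 : ℝ) :=
    Ioo_mem_nhds (by simp; positivity) one_pos
  filter_upwards [this] with a ha
  rcases le_or_gt 0 a with h | h
  · exact density_mix hω h ha.2.le
  · refine ⟨?_, by simp [mix, trace_add, trace_smul, (hω 1).2, (hω 0).2]⟩
    have e : mix ω a = (((-a : ℝ)) : ℂ) • ((μ : ℂ) • ω 0 - ω 1) + ((1 - a + a * μ : ℝ) : ℂ) • ω 0 := by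
      rw [mix]; push_cast; module
    rw [e]
    refine (psd_smul hd (by linarith)).add (psd_smul (hω 0).1 ?_)
    have h2 : -a < (μ + 1)⁻¹ := by linarith [ha.1]
    have h3 : -a * (μ + 1) < 1 := by
      rw [lt_inv_comm₀ (by linarith) (by positivity)] at h2
      rw [inv_eq_one_div, lt_div_iff₀ (by linarith)] at h2
      linarith
    nlinarith

lemma mul_pow_proj {A P : Matrix β β ℂ} (h2 : A * P = A) (k : ℕ) :
    A * (P - A) ^ k = A * (1 - A) ^ k := by
  induction k with
  | zero => simp
  | succ k ih =>
    have hc : A * (1 - A) ^ k = (1 - A) ^ k * A :=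
      ((Commute.one_right A).sub_right (Commute.refl A)).pow_right k
    rw [pow_succ, ← Matrix.mul_assoc, ih, hc, Matrix.mul_assoc, Matrix.mul_sub A P, h2,
      pow_succ, ← Matrix.mul_assoc, hc, Matrix.mul_assoc, Matrix.mul_sub A 1, Matrix.mul_one]

lemma sp_pow {U : Matrix β β ℂ} (hU : UN U) (d : β → ℝ) (k : ℕ) :
    sp U d ^ k = sp U (fun i => d i ^ k) := by
  induction k with
  | zero => simp [sp_one hU]
  | succ k ih => rw [pow_succ, ih, sp_mul hU]; simp only [pow_succ]

lemma xlogx_series {a : ℝ} (h0 : 0 ≤ a) (h1 : a ≤ 1) :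
    HasSum (fun k : ℕ => a * (1 - a) ^ (k + 1) / ((k : ℝ) + 1)) (-(a * Real.log a)) := by
  rcases h0.eq_or_lt with h | h
  · subst h; simp
  · have := (Real.hasSum_pow_div_log_of_abs_lt_one (x := 1 - a) (by rw [abs_lt]; constructor <;> linarith)).mul_left a
    simp only [sub_sub_cancel] at this
    rw [mul_neg] at this
    simpa only [mul_div_assoc] using this

lemma gD_analytic {ω : Fin 2 → Matrix β β ℂ} (hω : ∀ y, IsDensity (ω y))
    (hs : SuppLE (ω 1) (ω 0)) : AnalyticAt ℝ (gD ω) 0 := by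
  obtain ⟨U, s, hU, hs0, hs1, hss, hU0⟩ := density_sp (hω 0)
  set P := sp U (fun i => if s i = 0 then 0 else 1) with hP
  have hN : ‖P - ω 0‖ < 1 := by
    rw [hU0, hP, ← sp_sub]
    apply sp_norm_lt hU
    intro i
    rw [abs_lt]
    have := hs0 i
    have := hs1 i
    split_ifs with h
    · rw [h]; norm_num
    · have : 0 < s i := lt_of_le_of_ne (hs0 i) (Ne.symm h)
      constructor <;> linarith
  obtain ⟨r, hr, han, hsm⟩ := analytic_series (ω 0) (P - ω 0) (ω 1 - ω 0) hN
  set F : ℂ → ℂ := fun z => ∑' k : ℕ,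
      ((ω 0 + z • (ω 1 - ω 0)) * (P - ω 0 - z • (ω 1 - ω 0)) ^ (k + 1)).trace / ((k : ℂ) + 1) with hF
  have hmix : ∀ a : ℝ, ω 0 + (a : ℂ) • (ω 1 - ω 0) = mix ω a := by
    intro a; rw [mix]; push_cast; module
  have hev : ∀ᶠ a : ℝ in nhds 0, gD ω a =
      -(F (a : ℂ)).re - (a * rtr (ω 1 * matLog (ω 0)) + (1 - a) * rtr (ω 0 * matLog (ω 0))) := by
    filter_upwards [density_mix_near hω hs, Metric.ball_mem_nhds (0 : ℝ) hr] with a hd har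
    have har' : ‖(a : ℂ)‖ < r := by
      rw [Complex.norm_real]; simpa using har
    have h2 : mix ω a * P = mix ω a :=
      (suppLE_proj hd.1 hU (hU0 ▸ suppLE_mix hs a)).2
    obtain ⟨V, d, hV, hd0, hd1, hds, hVd⟩ := density_sp hd
    have hterm : ∀ k : ℕ, (((ω 0 + (a : ℂ) • (ω 1 - ω 0)) *
        (P - ω 0 - (a : ℂ) • (ω 1 - ω 0)) ^ (k + 1)).trace / ((k : ℂ) + 1)).re =
        ∑ i, d i * (1 - d i) ^ (k + 1) / ((k : ℝ) + 1) := by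
      intro k
      have e : P - ω 0 - (a : ℂ) • (ω 1 - ω 0) = P - mix ω a := by rw [← hmix]; abel
      rw [hmix, e, mul_pow_proj h2]
      have e2 : (1 : Matrix β β ℂ) - mix ω a = sp V (fun i => 1 - d i) := by
        rw [sp_sub, sp_one hV, ← hVd]
      have e3 : ((k : ℂ) + 1) = (((k : ℝ) + 1 : ℝ) : ℂ) := by push_cast; rfl
      rw [e2, sp_pow hV, hVd, sp_mul hV, e3, Complex.div_ofReal_re]
      change rtr _ / _ = _
      rw [rtr_sp hV, Finset.sum_div]
    have hFre : (F a).re = ∑ i, -(d i * Real.log (d i)) := by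
      have h3 := Complex.hasSum_re (hsm a har').hasSum
      simp only [hterm] at h3
      refine h3.unique ?_
      exact hasSum_sum fun i _ => xlogx_series (hd0 i) (hd1 i)
    rw [gD, relEnt_eq_rtr, hFre]
    have h4 : rtr (mix ω a * matLog (mix ω a)) = ∑ i, d i * Real.log (d i) := by
      rw [hVd, rtr_matLog_self hV]
    rw [h4, Finset.sum_neg_distrib, neg_neg]
    congr 1
    rw [mix, Matrix.add_mul, Matrix.smul_mul, Matrix.smul_mul, rtr_add, rtr_smul, rtr_smul]
  refine AnalyticAt.congr ?_ (hev.mono fun a h => h.symm)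
  have hFr : AnalyticAt ℝ (fun a : ℝ => (F (a : ℂ)).re) 0 := by
    have h1 : AnalyticAt ℝ F ((0 : ℝ) : ℂ) := by simpa using han.restrictScalars
    have h2 : AnalyticAt ℝ (fun a : ℝ => F (a : ℂ)) 0 :=
      h1.comp_of_eq (Complex.ofRealCLM.analyticAt 0) rfl
    exact (Complex.reCLM.analyticAt _).comp h2
  fun_prop

lemma gD_zero {ω : Fin 2 → Matrix β β ℂ} : gD ω 0 = 0 := by
  have : mix ω 0 = ω 0 := by simp [mix]
  simp [gD, this, relEnt]

lemma gD_tendsto {ω : Fin 2 → Matrix β β ℂ} (hω : ∀ y, IsDensity (ω y))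
    (hs : SuppLE (ω 1) (ω 0)) :
    Tendsto (fun a => gD ω a / a ^ 2) (nhdsWithin 0 {0}ᶜ) (nhds (chiSq (ω 1) (ω 0) / 2)) := by
  have han := gD_analytic hω hs
  have hmin : IsLocalMin (gD ω) 0 := by
    filter_upwards [density_mix_near hω hs] with a ha
    rw [gD_zero]
    exact relEnt_nonneg ha (hω 0) (suppLE_mix hs a)
  have hd0 : deriv (gD ω) 0 = 0 := hmin.deriv_eq_zero
  have hχ : chiSq (ω 1) (ω 0) = deriv (deriv (gD ω)) 0 := by
    rw [chiSq]
    change iteratedDeriv 2 (gD ω) 0 = _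
    rw [iteratedDeriv_succ, iteratedDeriv_one]
  refine deriv.lhopital_zero_nhdsNE ?_ ?_ ?_ ?_ ?_
  · exact (han.eventually_analyticAt.filter_mono nhdsWithin_le_nhds).mono fun a h => h.differentiableAt
  · filter_upwards [self_mem_nhdsWithin] with a ha
    simpa using ha
  · have := han.continuousAt.tendsto.mono_left (nhdsWithin_le_nhds (s := {0}ᶜ))
    rwa [gD_zero] at this
  · have : Continuous fun a : ℝ => a ^ 2 := by fun_prop
    simpa using (this.tendsto 0).mono_left (nhdsWithin_le_nhds (s := {0}ᶜ))
  · have h1 := han.deriv.differentiableAt.hasDerivAt.tendsto_slope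
    rw [← hχ] at h1
    have h2 := h1.div_const 2
    refine h2.congr' ?_
    filter_upwards [self_mem_nhdsWithin] with a ha
    simp only [slope_def_field, hd0, sub_zero, differentiableAt_fun_id, deriv_fun_pow, deriv_id'']
    field_simp
    ring

lemma chiSq_pos {ω : Fin 2 → Matrix β β ℂ} (hω : ∀ y, IsDensity (ω y))
    (hs : SuppLE (ω 1) (ω 0)) (hne : ω 1 ≠ ω 0) : 0 < chiSq (ω 1) (ω 0) := by
  have hH := rtr_herm_sq ((hω 1).1.1.sub (hω 0).1.1)
  have hpos : 0 < rtr ((ω 1 - ω 0) * (ω 1 - ω 0)) :=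
    lt_of_le_of_ne hH.1 fun h => hne (sub_eq_zero.1 (hH.2 h.symm))
  have hge : rtr ((ω 1 - ω 0) * (ω 1 - ω 0)) / 4 ≤ chiSq (ω 1) (ω 0) / 2 := by
    refine ge_of_tendsto (gD_tendsto hω hs) ?_
    filter_upwards [(density_mix_near hω hs).filter_mono nhdsWithin_le_nhds, self_mem_nhdsWithin] with a ha hane
    have hk := klein ha (hω 0) (suppLE_mix hs a)
    have e : mix ω a - ω 0 = (a : ℂ) • (ω 1 - ω 0) := by rw [mix]; push_cast; module
    rw [e, Matrix.smul_mul, Matrix.mul_smul, rtr_smul, rtr_smul] at hk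
    have ha2 : 0 < a ^ 2 := by
      have : a ≠ 0 := hane
      positivity
    rw [le_div_iff₀ ha2, gD]
    linarith
  linarith

end Taylor
section BobConverse

section OneShot
variable {ι : Type*} [Fintype ι] [DecidableEq ι]

lemma qd_sandwich (U V X : Matrix ι ι ℂ) (s : ι → ℝ) (i : ι) :
    qd U (Xᴴ * sp V s * X) i = ∑ j, s j * Complex.normSq ((Uᴴ * Xᴴ * V) i j) := by
  unfold qd sp
  have e : Uᴴ * (Xᴴ * (V * diagonal (fun i => (s i : ℂ)) * Vᴴ) * X) * U =
      (Uᴴ * Xᴴ * V) * diagonal (fun i => (s i : ℂ)) * (Uᴴ * Xᴴ * V)ᴴ := by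
    simp only [conjTranspose_mul, conjTranspose_conjTranspose, Matrix.mul_assoc]
  rw [e, mul_apply, Complex.re_sum]
  refine Finset.sum_congr rfl fun j _ => ?_
  rw [mul_diagonal, conjTranspose_apply, Complex.normSq_apply]
  simp
  ring

lemma rtr_sandwich (U V X : Matrix ι ι ℂ) (r s : ι → ℝ) :
    rtr (sp U r * (Xᴴ * sp V s * X)) = ∑ i, ∑ j, r i * s j * Complex.normSq ((Uᴴ * Xᴴ * V) i j) := by
  rw [rtr_sp_mul]
  refine Finset.sum_congr rfl fun i _ => ?_
  rw [qd_sandwich, Finset.mul_sum]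
  refine Finset.sum_congr rfl fun j _ => by ring

/-- `T² ≤ T` for an effect. -/
lemma effect_sq {T : Matrix ι ι ℂ} (hT : T.PosSemidef) (hT1 : (1 - T).PosSemidef) :
    (T - T * T).PosSemidef := by
  obtain ⟨Y, hY⟩ := psd_factor hT1
  obtain ⟨Z, hZ⟩ := psd_factor hT
  -- T - T² = T(1-T)T + (1-T)T(1-T)
  have h1 : (T * (1 - T) * T).PosSemidef := by
    have := hT1.mul_mul_conjTranspose_same T
    rwa [hT.1.eq] at this
  have h2 : ((1 - T) * T * (1 - T)).PosSemidef := by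
    have := hT.mul_mul_conjTranspose_same (1 - T)
    rwa [hT1.1.eq] at this
  have e : T - T * T = T * (1 - T) * T + (1 - T) * T * (1 - T) := by noncomm_ring
  rw [e]; exact h1.add h2

lemma ns_bound {T : Matrix ι ι ℂ} (hT : T.PosSemidef) (hT1 : (1 - T).PosSemidef)
    {U V : Matrix ι ι ℂ} (hU : UN U) (hV : UN V) {r s : ι → ℝ} (hr : ∀ i, 0 ≤ r i)
    (hs : ∀ i, 0 ≤ s i) {c : ℝ} (hc : 0 ≤ c) :
    ∑ i, ∑ j, min (r i) (c * s j) * ov U V i j ≤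
      2 * (rtr ((1 - T) * sp U r) + c * rtr (T * sp V s)) := by
  have hT1sq : ((1 - T) - (1 - T) * (1 - T)).PosSemidef :=
    effect_sq hT1 (by rwa [sub_sub_cancel])
  have a1 : ∑ i, ∑ j, r i * Complex.normSq ((Uᴴ * (1 - T) * V) i j) ≤ rtr ((1 - T) * sp U r) := by
    have h := rtr_mul_le (sp_psd U hr) hT1sq
    have e := rtr_sandwich U V (1 - T) r (fun _ => 1)
    rw [sp_one hV, Matrix.mul_one, hT1.1.eq] at e
    simp only [mul_one] at e
    rw [← e, rtr_comm _ (sp U r)]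
    exact h
  have a2 : ∑ i, ∑ j, s j * Complex.normSq ((Uᴴ * T * V) i j) ≤ rtr (T * sp V s) := by
    have h := rtr_mul_le (sp_psd V hs) (effect_sq hT hT1)
    have e := rtr_sandwich U V T (fun _ => 1) s
    rw [sp_one hU, Matrix.one_mul, hT.1.eq] at e
    simp only [one_mul] at e
    have e3 : rtr (T * sp V s * T) = rtr (sp V s * (T * T)) := by
      rw [Matrix.mul_assoc, rtr_comm, Matrix.mul_assoc]
    rw [← e, rtr_comm T (sp V s), e3]
    exact h
  have a3 : ∀ i j, min (r i) (c * s j) * ov U V i j ≤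
      2 * (r i * Complex.normSq ((Uᴴ * (1 - T) * V) i j)
        + c * (s j * Complex.normSq ((Uᴴ * T * V) i j))) := by
    intro i j
    have e : (Uᴴ * V) i j = (Uᴴ * (1 - T) * V) i j + (Uᴴ * T * V) i j := by
      rw [← Matrix.add_apply, ← Matrix.add_mul, ← Matrix.mul_add, sub_add_cancel, Matrix.mul_one]
    unfold ov
    rw [e]
    set x := (Uᴴ * (1 - T) * V) i j
    set y := (Uᴴ * T * V) i j
    have hxy : Complex.normSq (x + y) ≤ 2 * (Complex.normSq x + Complex.normSq y) := by
      simp only [Complex.normSq_apply, Complex.add_re, Complex.add_im]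
      nlinarith [sq_nonneg (x.re - y.re), sq_nonneg (x.im - y.im)]
    have hm : 0 ≤ min (r i) (c * s j) := le_min (hr i) (mul_nonneg hc (hs j))
    have hm1 := mul_le_mul_of_nonneg_right (min_le_left (r i) (c * s j)) (Complex.normSq_nonneg x)
    have hm2 := mul_le_mul_of_nonneg_right (min_le_right (r i) (c * s j)) (Complex.normSq_nonneg y)
    have := mul_le_mul_of_nonneg_left hxy hm
    nlinarith
  calc ∑ i, ∑ j, min (r i) (c * s j) * ov U V i j
      ≤ ∑ i, ∑ j, 2 * (r i * Complex.normSq ((Uᴴ * (1 - T) * V) i j)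
        + c * (s j * Complex.normSq ((Uᴴ * T * V) i j))) :=
        Finset.sum_le_sum fun i _ => Finset.sum_le_sum fun j _ => a3 i j
    _ = 2 * (∑ i, ∑ j, r i * Complex.normSq ((Uᴴ * (1 - T) * V) i j)
        + c * ∑ i, ∑ j, s j * Complex.normSq ((Uᴴ * T * V) i j)) := by
        simp only [Finset.mul_sum, ← Finset.sum_add_distrib, mul_add]
    _ ≤ _ := by
        have := mul_le_mul_of_nonneg_left a2 hc
        linarith

lemma log_point {r s γ : ℝ} (hr : 0 ≤ r) (hs : 0 < s) (hγ : 0 ≤ γ) :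
    γ * (r - min r (Real.exp γ * s)) - s ≤ r * Real.log r - r * Real.log s := by
  rcases hr.eq_or_lt with h | h
  · subst h
    rw [min_eq_left (by positivity)]; simp [hs.le]
  rcases le_or_gt r (Real.exp γ * s) with h1 | h1
  · rw [min_eq_left h1]
    have h2 := Real.log_le_sub_one_of_pos (div_pos hs h)
    rw [Real.log_div hs.ne' h.ne'] at h2
    have h3 := mul_le_mul_of_nonneg_left h2 h.le
    have : r * (s / r - 1) = s - r := by field_simp
    nlinarith
  · rw [min_eq_right h1.le]
    have h2 : γ + Real.log s ≤ Real.log r := by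
      rw [Real.le_log_iff_exp_le h, Real.exp_add, Real.exp_log hs]; exact h1.le
    have h3 := mul_le_mul_of_nonneg_left h2 h.le
    have : 0 ≤ γ * (Real.exp γ * s) := by positivity
    nlinarith

lemma one_shot_converse {ρ σ T : Matrix ι ι ℂ} (hρ : IsDensity ρ) (hσ : IsDensity σ)
    (h : SuppLE ρ σ) (hT : T.PosSemidef) (hT1 : (1 - T).PosSemidef) {γ : ℝ} (hγ : 0 ≤ γ) :
    γ * (1 - 2 * (rtr ((1 - T) * ρ) + Real.exp γ * rtr (T * σ))) - 1 ≤ relEnt ρ σ := by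
  obtain ⟨U, r, hU, hr0, hr1, hrs, rfl⟩ := density_sp hρ
  obtain ⟨V, s, hV, hs0, hs1, hss, rfl⟩ := density_sp hσ
  have hq : ∀ i j, s j = 0 → r i * ov U V i j = 0 := by
    intro i j hj
    have h1 := suppLE_qd hρ.1 hV h hj
    rw [qd_sp_ov] at h1
    exact (Finset.sum_eq_zero_iff_of_nonneg
      (fun i _ => mul_nonneg (hr0 i) (ov_nonneg _ _ _ _))).1 h1 i (Finset.mem_univ i)
  have e1 : ∑ i, r i * Real.log (r i) = ∑ i, ∑ j, r i * Real.log (r i) * ov U V i j := by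
    refine Finset.sum_congr rfl fun i _ => ?_
    rw [← Finset.mul_sum, ov_sum_right hU hV, mul_one]
  have e2 : ∑ i, r i = ∑ i, ∑ j, r i * ov U V i j := by
    refine Finset.sum_congr rfl fun i _ => ?_
    rw [← Finset.mul_sum, ov_sum_right hU hV, mul_one]
  have e3 : ∑ j, s j = ∑ i, ∑ j, s j * ov U V i j := by
    rw [Finset.sum_comm]
    refine Finset.sum_congr rfl fun j _ => ?_
    rw [← Finset.mul_sum, ov_sum_left hU hV, mul_one]
  have e6 : relEnt (sp U r) (sp V s) = ∑ i, ∑ j, (r i * Real.log (r i) - r i * Real.log (s j)) * ov U V i j := by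
    rw [relEnt_eq_rtr, rtr_matLog_self hU, matLog, matFun_sp hV, rtr_sp_sp, e1]
    simp only [← Finset.sum_sub_distrib]
    refine Finset.sum_congr rfl fun i _ => Finset.sum_congr rfl fun j _ => by ring
  have hns := ns_bound hT hT1 hU hV hr0 hs0 (Real.exp_pos γ).le
  have key : ∑ i, ∑ j, (γ * (r i - min (r i) (Real.exp γ * s j)) - s j) * ov U V i j ≤
      relEnt (sp U r) (sp V s) := by
    rw [e6]
    refine Finset.sum_le_sum fun i _ => Finset.sum_le_sum fun j _ => ?_
    rcases (hs0 j).eq_or_lt with hj | hj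
    · have h0 := hq i j hj.symm
      rw [← hj]
      rw [mul_zero, min_eq_right (hr0 i)]
      have t1 : (γ * (r i - 0) - 0) * ov U V i j = γ * (r i * ov U V i j) := by ring
      have t2 : (r i * Real.log (r i) - r i * Real.log 0) * ov U V i j =
        (Real.log (r i) - Real.log 0) * (r i * ov U V i j) := by ring
      rw [t1, t2, h0]; simp
    · exact mul_le_mul_of_nonneg_right (log_point (hr0 i) hj hγ) (ov_nonneg _ _ _ _)
  have e7 : ∑ i, ∑ j, (γ * (r i - min (r i) (Real.exp γ * s j)) - s j) * ov U V i j =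
      γ * (1 - ∑ i, ∑ j, min (r i) (Real.exp γ * s j) * ov U V i j) - 1 := by
    have : γ * ((∑ i, ∑ j, r i * ov U V i j) - ∑ i, ∑ j, min (r i) (Real.exp γ * s j) * ov U V i j)
        - (∑ i, ∑ j, s j * ov U V i j) = γ * (1 - ∑ i, ∑ j, min (r i) (Real.exp γ * s j) * ov U V i j) - 1 := by
      rw [← e2, ← e3, hrs, hss]
    rw [← this]
    simp only [Finset.mul_sum, ← Finset.sum_sub_distrib]
    refine Finset.sum_congr rfl fun i _ => Finset.sum_congr rfl fun j _ => by ring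
  rw [e7] at key
  have := mul_le_mul_of_nonneg_left hns hγ
  linarith

end OneShot

variable {β : Type*} [Fintype β] [DecidableEq β] {n : ℕ}

lemma kron_matLog' {τ : Fin n → Matrix β β ℂ} (hτ : ∀ i, (τ i).PosSemidef) {R : Fin n → Matrix β β ℂ}
    (hR : ∀ i, IsDensity (R i)) (h : ∀ i, SuppLE (R i) (τ i)) :
    rtr (kron R * matLog (kron τ)) = ∑ i, rtr (R i * matLog (τ i)) := by
  choose U t hU ht0 hτe using fun i => psd_sp (hτ i)
  obtain rfl : τ = fun i => sp (U i) (t i) := funext hτe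
  rw [kron_sp, rtr_matLog (kron_UN hU)]
  have h1 : ∀ b : Fin n → β, qd (kron U) (kron R) b * Real.log (∏ i, t i (b i))
      = ∑ i, qd (kron U) (kron R) b * Real.log (t i (b i)) := by
    intro b
    rw [qd_kron _ (fun i => (hR i).1.1)]
    by_cases hz : ∃ i, t i (b i) = 0
    · obtain ⟨i, hi⟩ := hz
      have : ∏ i, qd (U i) (R i) (b i) = 0 :=
        Finset.prod_eq_zero (Finset.mem_univ i) (suppLE_qd (hR i).1 (hU i) (h i) hi)
      simp [this]
    · push Not at hz
      rw [Real.log_prod (fun i _ => hz i), Finset.mul_sum]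
  simp only [h1]
  rw [Finset.sum_comm]
  refine Finset.sum_congr rfl fun i _ => ?_
  rw [rtr_matLog (hU i)]
  simp only [qd_kron U (fun i => (hR i).1.1)]
  have h2 : ∀ b : Fin n → β, (∏ k, qd (U k) (R k) (b k)) * Real.log (t i (b i))
      = ∏ k, (qd (U k) (R k) (b k) * if k = i then Real.log (t k (b k)) else 1) := by
    intro b
    rw [Finset.prod_mul_distrib, Finset.prod_ite_eq']
    simp
  simp only [h2]
  have h3 := Finset.prod_univ_sum (fun _ : Fin n => (Finset.univ : Finset β))
    (fun k b => qd (U k) (R k) b * if k = i then Real.log (t k b) else 1)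
  rw [Fintype.piFinset_univ] at h3
  rw [← h3, ← Finset.mul_prod_erase Finset.univ _ (Finset.mem_univ i)]
  simp only [if_true]
  rw [Finset.prod_eq_one, mul_one]
  intro k hk
  rw [Finset.mem_erase] at hk
  simp only [hk.1, if_false, mul_one]
  rw [qd_sum (hU k), rtr_density (hR k)]

lemma relEnt_word {σ : Fin 2 → Matrix β β ℂ} (hσ : ∀ y, IsDensity (σ y)) (hs : SuppLE (σ 1) (σ 0))
    (x : Fin n → Fin 2) :
    relEnt (kron (fun i => σ (x i))) (tpow (σ 0) n) = wt x * relEnt (σ 1) (σ 0) := by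
  rw [relEnt_eq_rtr, kron_matLog' (fun i => (hσ _).1) (fun i => hσ _) (fun i => SuppLE.refl' _),
    kron_matLog (hσ 0).1 (fun i => hσ _) (fun i => suppLE_letter hs _), ← Finset.sum_sub_distrib,
    wt, Finset.sum_mul]
  refine Finset.sum_congr rfl fun i _ => ?_
  generalize x i = y
  rw [← relEnt_eq_rtr]
  fin_cases y
  · simp [relEnt]
  · simp

lemma suppLE_word {σ : Fin 2 → Matrix β β ℂ} (hσ : ∀ y, IsDensity (σ y)) (hs : SuppLE (σ 1) (σ 0))
    (x : Fin n → Fin 2) : SuppLE (kron (fun i => σ (x i))) (tpow (σ 0) n) := by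
  choose μ h1 h2 using fun y => suppLE_dom (hσ y) (hσ 0).1 (suppLE_letter hs y)
  apply suppLE_of_psd (c := ∏ i, μ (x i)) (kron_psd fun i => (hσ _).1)
  have h3 : ((∏ i, μ (x i) : ℝ) : ℂ) • tpow (σ 0) n = kron (fun i : Fin n => (μ (x i) : ℂ) • σ 0) := by
    rw [kron_smul]; simp [tpow_eq_kron]
  rw [h3]
  exact kron_mono (fun i => (hσ _).1) (fun i => h2 _)

end BobConverse

section CodeConverse
variable {B W : Type*} [Fintype B] [DecidableEq B] [Fintype W] [DecidableEq W]

lemma bob_density {π : Fin 2 → Matrix (B × W) (B × W) ℂ} (hπ : ∀ x, IsDensity (π x)) (y : Fin 2) :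
    IsDensity (bobOut π y) := ptraceRight_density (hπ y)

lemma willie_density {π : Fin 2 → Matrix (B × W) (B × W) ℂ} (hπ : ∀ x, IsDensity (π x)) (y : Fin 2) :
    IsDensity (willieOut π y) := ptraceLeft_density (hπ y)

lemma bob_converse {π : Fin 2 → Matrix (B × W) (B × W) ℂ} (hπ : ∀ x, IsDensity (π x))
    (hσ : SuppLE (bobOut π 1) (bobOut π 0)) {n M K : ℕ} (hM : 0 < M) (hK : 0 < K)
    (f : Fin M → Fin 1 → Fin K → Fin n → Fin 2)
    (Λ : Fin K → Fin M → Fin 1 → Matrix (Fin n → B) (Fin n → B) ℂ) (hΛ : IsPOVM (B := B) Λ)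
    {ε : ℝ} (he : avgErr π f Λ ≤ ε) (hMε : 1 ≤ M * ε) :
    (M : ℝ) * K * (Real.log (M * ε) * (1 - 4 * ε) - 1) ≤
      (∑ m, ∑ k, wt (f m 0 k)) * relEnt (bobOut π 1) (bobOut π 0) := by
  have hMp : (0 : ℝ) < M := by exact_mod_cast hM
  have hKp : (0 : ℝ) < K := by exact_mod_cast hK
  set γ := Real.log (M * ε) with hγ
  have hγ0 : 0 ≤ γ := Real.log_nonneg hMε
  have hexp : Real.exp γ = M * ε := Real.exp_log (by linarith)
  set S := tpow (bobOut π 0) n with hS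
  have hSd : IsDensity S := kron_density fun _ => bob_density hπ 0
  have hΛ1 : ∀ k m, (1 - Λ k m 0).PosSemidef := by
    intro k m
    have h1 := hΛ.2 k
    simp only [Finset.univ_unique, Fin.default_eq_zero, Finset.sum_singleton] at h1
    rw [← Finset.add_sum_erase _ _ (Finset.mem_univ m)] at h1
    have h2 : (∑ m' ∈ Finset.univ.erase m, Λ k m' 0).PosSemidef :=
      posSemidef_sum _ fun m' _ => hΛ.1 k m' 0
    have := h1.add h2
    convert this using 1; abel
  have hsum : ∀ k, ∑ m, rtr (Λ k m 0 * S) ≤ 1 := by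
    intro k
    have h1 := hΛ.2 k
    simp only [Finset.univ_unique, Fin.default_eq_zero, Finset.sum_singleton] at h1
    have := rtr_mul_nonneg h1 hSd.1
    rw [Matrix.sub_mul, rtr_sub, Matrix.one_mul, rtr_density hSd, Finset.sum_mul, rtr_sum] at this
    linarith
  have hword : ∀ m k, rtr ((1 - Λ k m 0) * bobWord π (f m 0 k)) =
      1 - ((Λ k m 0 * bobWord π (f m 0 k)).trace).re := by
    intro m k
    rw [Matrix.sub_mul, rtr_sub, Matrix.one_mul]
    have hd : IsDensity (bobWord π (f m 0 k)) := kron_density fun i => bob_density hπ (f m 0 k i)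
    rw [rtr_density hd]
    rfl
  have herr : ∑ m, ∑ k, rtr ((1 - Λ k m 0) * bobWord π (f m 0 k)) ≤ M * K * ε := by
    unfold avgErr at he
    simp only [Finset.univ_unique, Fin.default_eq_zero, Finset.sum_singleton, ← hword] at he
    rw [inv_mul_le_iff₀ (by push_cast; positivity)] at he
    push_cast at he
    linarith
  have hone : ∀ m k, γ * (1 - 2 * (rtr ((1 - Λ k m 0) * bobWord π (f m 0 k))
      + Real.exp γ * rtr (Λ k m 0 * S))) - 1 ≤ wt (f m 0 k) * relEnt (bobOut π 1) (bobOut π 0) := by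
    intro m k
    rw [← relEnt_word (fun y => bob_density hπ y) hσ]
    exact one_shot_converse (kron_density fun i => bob_density hπ _) hSd
      (suppLE_word (fun y => bob_density hπ y) hσ _) (hΛ.1 k m 0) (hΛ1 k m) hγ0
  have htot := Finset.sum_le_sum fun m (_ : m ∈ Finset.univ) =>
    Finset.sum_le_sum fun k (_ : k ∈ Finset.univ) => hone m k
  simp only [← Finset.sum_mul] at htot
  refine le_trans ?_ htot
  have e : ∑ m, ∑ k, (γ * (1 - 2 * (rtr ((1 - Λ k m 0) * bobWord π (f m 0 k))
      + Real.exp γ * rtr (Λ k m 0 * S))) - 1) =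
      M * K * (γ - 1) - 2 * γ * (∑ m, ∑ k, rtr ((1 - Λ k m 0) * bobWord π (f m 0 k)))
      - 2 * γ * Real.exp γ * ∑ k, ∑ m, rtr (Λ k m 0 * S) := by
    rw [Finset.sum_comm (f := fun k m => rtr (Λ k m 0 * S))]
    have : (M : ℝ) * K * (γ - 1) = ∑ _m : Fin M, ∑ _k : Fin K, (γ - 1) := by simp; ring
    rw [this]
    simp only [Finset.mul_sum, ← Finset.sum_sub_distrib]
    refine Finset.sum_congr rfl fun i _ => Finset.sum_congr rfl fun j _ => by ring
  rw [e, hexp]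
  have h8 : ∑ k, ∑ m, rtr (Λ k m 0 * S) ≤ K := by
    refine (Finset.sum_le_sum fun k _ => hsum k).trans ?_
    simp
  have h9 := mul_le_mul_of_nonneg_left herr (by positivity : 0 ≤ 2 * γ)
  have hε : 0 ≤ M * ε := by linarith
  have h10 := mul_le_mul_of_nonneg_left h8 (by positivity : 0 ≤ 2 * γ * (M * ε))
  nlinarith

end CodeConverse
section ConverseAssembly
variable {B W : Type*} [Fintype B] [DecidableEq B] [Fintype W] [DecidableEq W]

lemma traceNorm_neg_density {ι : Type*} [Fintype ι] [DecidableEq ι] {ρ : Matrix ι ι ℂ}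
    (h : IsDensity ρ) : traceNorm (0 - ρ) = 1 := by
  obtain ⟨U, d, hU, h0, h1, hs, hd⟩ := density_sp h
  have e : (0 - ρ)ᴴ * (0 - ρ) = sp U (fun i => d i * d i) := by
    rw [zero_sub, conjTranspose_neg, h.1.1.eq, neg_mul_neg, hd, sp_mul hU]
  rw [traceNorm, e, matFun_sp hU]
  have : (fun i => Real.sqrt (d i * d i)) = d := by
    ext i; exact Real.sqrt_mul_self (h0 i)
  rw [this, ← hd, h.2]; simp

lemma willieAvg_eq {π : Fin 2 → Matrix (B × W) (B × W) ℂ} {n M K : ℕ}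
    (f : Fin M → Fin 1 → Fin K → Fin n → Fin 2) :
    willieAvg π f = (((Fintype.card (Fin M × Fin K) : ℝ)⁻¹ : ℝ) : ℂ) •
      ∑ t : Fin M × Fin K, kron (fun i => willieOut π (f t.1 0 t.2 i)) := by
  unfold willieAvg
  simp only [Finset.univ_unique, Fin.default_eq_zero, Finset.sum_singleton, Fintype.card_prod,
    Fintype.card_fin, Fintype.sum_prod_type]
  push_cast
  rw [mul_one]
  rfl

lemma secret_pos_key {π : Fin 2 → Matrix (B × W) (B × W) ℂ} {n M L K : ℕ} (hM : 0 < M)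
    (f : Fin M → Fin L → Fin K → Fin n → Fin 2) {δ : ℝ} (hδ : δ < 1) (h : Secret π f δ) : 0 < K := by
  rcases Nat.eq_zero_or_pos K with h0 | h0
  · subst h0
    obtain ⟨ρ, hρ, hle⟩ := h
    have e : ∀ m, willieMsg π f m = 0 := by
      intro m; simp [willieMsg]
    simp only [e, traceNorm_neg_density hρ] at hle
    have hMp : (0 : ℝ) < M := by exact_mod_cast hM
    simp [hMp.ne'] at hle
    linarith
  · exact h0

lemma gD_scaled {ω : Fin 2 → Matrix W W ℂ} (hω : ∀ y, IsDensity (ω y))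
    (hs : SuppLE (ω 1) (ω 0)) {c : ℝ} (hc : 0 < c) :
    Tendsto (fun n : ℕ => (n : ℝ) * gD ω (c / Real.sqrt n)) atTop
      (nhds (c ^ 2 * (chiSq (ω 1) (ω 0) / 2))) := by
  have hsq : Tendsto (fun n : ℕ => Real.sqrt n) atTop atTop :=
    Real.tendsto_sqrt_atTop.comp tendsto_natCast_atTop_atTop
  have h1 : Tendsto (fun n : ℕ => c / Real.sqrt n) atTop (nhdsWithin 0 {0}ᶜ) := by
    rw [tendsto_nhdsWithin_iff]
    refine ⟨tendsto_const_nhds.div_atTop hsq, ?_⟩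
    filter_upwards [eventually_gt_atTop 0] with n hn
    have : (0 : ℝ) < n := by exact_mod_cast hn
    have : c / Real.sqrt n ≠ 0 := by positivity
    simpa using this
  have h2 := ((gD_tendsto hω hs).comp h1).const_mul (c ^ 2)
  refine h2.congr' ?_
  filter_upwards [eventually_gt_atTop 0] with n hn
  have hn' : (0 : ℝ) < n := by exact_mod_cast hn
  simp only [Function.comp]
  rw [div_pow, Real.sq_sqrt hn'.le]
  field_simp

lemma converse_aux {π : Fin 2 → Matrix (B × W) (B × W) ℂ} (hπ : ∀ x, IsDensity (π x))
    (hσ : SuppLE (bobOut π 1) (bobOut π 0)) (hω : SuppLE (willieOut π 1) (willieOut π 0))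
    {LS : ℝ} (h : AchievableWithKey π LS) {c : ℝ} (hc : 0 < c)
    (hc1 : 1 < c ^ 2 * (chiSq (willieOut π 1) (willieOut π 0) / 2)) {ε : ℝ} (hε : 0 < ε)
    (hε1 : ε < 1 / 4) :
    LS * (1 - 4 * ε) ≤ c * relEnt (bobOut π 1) (bobOut π 0) := by
  obtain ⟨hLS, h⟩ := h
  have hwd := fun y => willie_density hπ y
  have hD0 : 0 ≤ relEnt (bobOut π 1) (bobOut π 0) :=
    relEnt_nonneg (bob_density hπ 1) (bob_density hπ 0) hσ
  set D := relEnt (bobOut π 1) (bobOut π 0) with hD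
  have hev := h ε 1 (1 / 2) hε one_pos (by norm_num)
  have hsq : Tendsto (fun n : ℕ => Real.sqrt n) atTop atTop :=
    Real.tendsto_sqrt_atTop.comp tendsto_natCast_atTop_atTop
  have hg := (gD_scaled (ω := willieOut π) hwd hω hc).eventually (lt_mem_nhds hc1)
  have hbig1 : ∀ᶠ n : ℕ in atTop, -Real.log ε / LS ≤ Real.sqrt n := hsq.eventually_ge_atTop _
  have hbig2 : ∀ᶠ n : ℕ in atTop, c < Real.sqrt n := hsq.eventually_gt_atTop _
  have hmain : ∀ᶠ n : ℕ in atTop,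
      LS * (1 - 4 * ε) ≤ c * D + (1 - Real.log ε * (1 - 4 * ε)) / Real.sqrt n := by
    filter_upwards [hev, hg, hbig1, hbig2, eventually_gt_atTop 0] with n hn hgn h1 h2 hn0
    obtain ⟨M, K, hM, f, Λ, hΛ, herr, hcov, hsec⟩ := hn
    have hnp : (0 : ℝ) < n := by exact_mod_cast hn0
    have hsn : 0 < Real.sqrt n := Real.sqrt_pos.2 hnp
    rw [mul_one] at hM
    have hM0 : 0 < M := by
      rcases Nat.eq_zero_or_pos M with h0 | h0
      · subst h0
        simp at hM
        nlinarith [mul_pos hsn hLS]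
      · exact h0
    have hK0 : 0 < K := secret_pos_key hM0 f (by norm_num) hsec
    have hMp : (0 : ℝ) < M := by exact_mod_cast hM0
    have hKp : (0 : ℝ) < K := by exact_mod_cast hK0
    have hlogM : Real.log (M * ε) = Real.log M + Real.log ε := Real.log_mul hMp.ne' hε.ne'
    have hlog0 : 0 ≤ Real.log M + Real.log ε := by
      rw [div_le_iff₀ hLS] at h1; linarith
    have hMε : 1 ≤ M * ε := by
      rw [← hlogM] at hlog0
      by_contra hlt
      push Not at hlt
      exact absurd (Real.log_neg (by positivity) hlt) (by linarith)
    have hb := bob_converse hπ hσ hM0 hK0 f Λ hΛ herr hMε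
    have hwt : ∑ m, ∑ k, wt (f m 0 k) ≤ M * K * (c * Real.sqrt n) := by
      by_contra hlt
      push Not at hlt
      have : Nonempty (Fin M × Fin K) := ⟨(⟨0, hM0⟩, ⟨0, hK0⟩)⟩
      have hw := willie_conv (n := n) (ω := willieOut π) hwd hω (a := c / Real.sqrt n) (by positivity)
        ((div_lt_one hsn).2 h2) (fun t : Fin M × Fin K => f t.1 0 t.2) (by
          rw [Fintype.sum_prod_type, Fintype.card_prod, Fintype.card_fin, Fintype.card_fin]
          have : (n : ℝ) * (c / Real.sqrt n) = c * Real.sqrt n := by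
            field_simp
            rw [Real.sq_sqrt hnp.le]
          rw [this]
          push_cast
          exact hlt.le)
      rw [← willieAvg_eq] at hw
      have : relEnt (willieAvg π f) (tpow (willieOut π 0) n) ≤ 1 := hcov
      unfold gD at hgn
      linarith
    have hb2 : (M : ℝ) * K * (Real.log (M * ε) * (1 - 4 * ε) - 1) ≤ M * K * (c * Real.sqrt n * D) := by
      refine hb.trans ?_
      have := mul_le_mul_of_nonneg_right hwt hD0
      linarith
    have hb3 := le_of_mul_le_mul_left hb2 (mul_pos hMp hKp)
    rw [hlogM] at hb3
    have h14 : 0 < 1 - 4 * ε := by linarith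
    have hb4 := mul_le_mul_of_nonneg_right hM h14.le
    have : LS * (1 - 4 * ε) - c * D ≤ (1 - Real.log ε * (1 - 4 * ε)) / Real.sqrt n := by
      rw [le_div_iff₀ hsn]
      nlinarith
    linarith
  have hlim : Tendsto (fun n : ℕ => c * D + (1 - Real.log ε * (1 - 4 * ε)) / Real.sqrt n) atTop
      (nhds (c * D + 0)) := tendsto_const_nhds.add (tendsto_const_nhds.div_atTop hsq)
  rw [add_zero] at hlim
  exact ge_of_tendsto hlim hmain

lemma converse {π : Fin 2 → Matrix (B × W) (B × W) ℂ} (hπ : ∀ x, IsDensity (π x))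
    (hσ : SuppLE (bobOut π 1) (bobOut π 0)) (hω : SuppLE (willieOut π 1) (willieOut π 0))
    (hχ : 0 < chiSq (willieOut π 1) (willieOut π 0)) {LS : ℝ} (h : AchievableWithKey π LS) :
    LS ≤ relEnt (bobOut π 1) (bobOut π 0) /
        Real.sqrt (2⁻¹ * chiSq (willieOut π 1) (willieOut π 0)) := by
  set χ := chiSq (willieOut π 1) (willieOut π 0) with hχd
  set D := relEnt (bobOut π 1) (bobOut π 0) with hD
  have hs : 0 < Real.sqrt (2⁻¹ * χ) := Real.sqrt_pos.2 (by positivity)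
  have h1 : ∀ c, (Real.sqrt (2⁻¹ * χ))⁻¹ < c → LS ≤ c * D := by
    intro c hc
    have hc0 : 0 < c := (inv_pos.2 hs).trans hc
    have hc1 : 1 < c ^ 2 * (χ / 2) := by
      have : 1 < c * Real.sqrt (2⁻¹ * χ) := by
        rwa [inv_eq_one_div, div_lt_iff₀ hs] at hc
      have h2 : (c * Real.sqrt (2⁻¹ * χ)) ^ 2 = c ^ 2 * (χ / 2) := by
        rw [mul_pow, Real.sq_sqrt (by positivity)]; ring
      nlinarith
    have hlim : Tendsto (fun ε : ℝ => LS * (1 - 4 * ε)) (nhdsWithin 0 (Set.Ioi 0)) (nhds LS) := by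
      have : Continuous fun ε : ℝ => LS * (1 - 4 * ε) := by fun_prop
      simpa using (this.tendsto 0).mono_left (nhdsWithin_le_nhds (s := Set.Ioi 0))
    refine le_of_tendsto hlim ?_
    filter_upwards [Ioo_mem_nhdsGT (show (0 : ℝ) < 1 / 4 by norm_num)] with ε hε
    exact converse_aux hπ hσ hω h hc0 hc1 hε.1 hε.2
  have hlim : Tendsto (fun c : ℝ => c * D) (nhdsWithin (Real.sqrt (2⁻¹ * χ))⁻¹ (Set.Ioi (Real.sqrt (2⁻¹ * χ))⁻¹))
      (nhds ((Real.sqrt (2⁻¹ * χ))⁻¹ * D)) := by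
    have : Continuous fun c : ℝ => c * D := by fun_prop
    exact (this.tendsto _).mono_left nhdsWithin_le_nhds
  rw [div_eq_inv_mul]
  refine ge_of_tendsto hlim ?_
  filter_upwards [self_mem_nhdsWithin] with c hc using h1 c hc

end ConverseAssembly
section SeqDecoder
variable {ι : Type*} [Fintype ι] [DecidableEq ι]

/-- An effect: `0 ≤ T ≤ 1`. -/
def Eff (T : Matrix ι ι ℂ) : Prop := T.PosSemidef ∧ (1 - T).PosSemidef

lemma Eff.compl {T : Matrix ι ι ℂ} (h : Eff T) : Eff (1 - T) :=
  ⟨h.2, by rw [sub_sub_cancel]; exact h.1⟩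

lemma Eff.zero : Eff (0 : Matrix ι ι ℂ) := ⟨PosSemidef.zero, by rw [sub_zero]; exact PosSemidef.one⟩

lemma rtr_conjTranspose (A : Matrix ι ι ℂ) : rtr Aᴴ = rtr A := by
  simp [rtr, trace_conjTranspose]

lemma union_step {C Y v : Matrix ι ι ℂ} (hC : C.PosSemidef) :
    rtr (Yᴴ * C * v) ≤ rtr (Yᴴ * C * Y) + rtr (vᴴ * C * v) / 4 := by
  have h1 := rtr_nonneg (hC.conjTranspose_mul_mul_same (Y - ((1 / 2 : ℝ) : ℂ) • v))
  have e : (Y - ((1 / 2 : ℝ) : ℂ) • v)ᴴ * C * (Y - ((1 / 2 : ℝ) : ℂ) • v) =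
      Yᴴ * C * Y - ((1 / 2 : ℝ) : ℂ) • (Yᴴ * C * v) - ((1 / 2 : ℝ) : ℂ) • (vᴴ * C * Y)
        + ((1 / 4 : ℝ) : ℂ) • (vᴴ * C * v) := by
    have h4 : ((1 / 4 : ℝ) : ℂ) = ((1 / 2 : ℝ) : ℂ) * ((1 / 2 : ℝ) : ℂ) := by
      rw [← Complex.ofReal_mul]; norm_num
    rw [h4, conjTranspose_sub, conjTranspose_smul]
    simp only [Complex.star_def, Complex.conj_ofReal, Matrix.sub_mul, Matrix.mul_sub, Matrix.smul_mul,
      Matrix.mul_smul, smul_sub, smul_smul]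
    abel
  have e2 : rtr (vᴴ * C * Y) = rtr (Yᴴ * C * v) := by
    rw [← rtr_conjTranspose]
    simp only [conjTranspose_mul, conjTranspose_conjTranspose, hC.1.eq, Matrix.mul_assoc]
  rw [e, rtr_add, rtr_sub, rtr_sub, rtr_smul, rtr_smul, rtr_smul, e2] at h1
  linarith

lemma union_sum {Bs : ℕ → Matrix ι ι ℂ} (hB : ∀ i, Eff (Bs i)) (v : ℕ → Matrix ι ι ℂ)
    (hv : ∀ i, v (i + 1) = Bs i * v i) (k : ℕ) :
    rtr ((v 0)ᴴ * (v 0 - v k)) ≤ ∑ i ∈ Finset.range k, rtr ((1 - Bs i) * (v 0 * (v 0)ᴴ)) +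
      (rtr ((v 0)ᴴ * v 0) - rtr ((v k)ᴴ * v k)) / 4 := by
  induction k with
  | zero => simp [rtr]
  | succ k ih =>
    rw [Finset.sum_range_succ]
    have h1 := union_step (Y := v 0) (v := v k) (hB k).2
    have h2 : rtr ((v 0)ᴴ * (1 - Bs k) * v 0) = rtr ((1 - Bs k) * (v 0 * (v 0)ᴴ)) := by
      rw [Matrix.mul_assoc, rtr_comm, Matrix.mul_assoc]
    have h3 : rtr ((v k)ᴴ * (1 - Bs k) * v k) ≤ rtr ((v k)ᴴ * v k) - rtr ((v (k + 1))ᴴ * v (k + 1)) := by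
      have h4 := rtr_nonneg ((effect_sq (hB k).1 (hB k).2).conjTranspose_mul_mul_same (v k))
      rw [hv, conjTranspose_mul, (hB k).1.1.eq]
      have e : (v k)ᴴ * (Bs k - Bs k * Bs k) * v k = (v k)ᴴ * v k - (v k)ᴴ * (1 - Bs k) * v k
        - (v k)ᴴ * Bs k * (Bs k * v k) := by noncomm_ring
      rw [e, rtr_sub, rtr_sub] at h4
      linarith
    have h5 : rtr ((v 0)ᴴ * (v 0 - v (k + 1))) = rtr ((v 0)ᴴ * (v 0 - v k)) +
        rtr ((v 0)ᴴ * (1 - Bs k) * v k) := by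
      rw [hv, ← rtr_add]; congr 1; noncomm_ring
    linarith

lemma union_bound {Bs : ℕ → Matrix ι ι ℂ} (hB : ∀ i, Eff (Bs i)) (v : ℕ → Matrix ι ι ℂ)
    (hv : ∀ i, v (i + 1) = Bs i * v i) (k : ℕ) :
    rtr (v 0 * (v 0)ᴴ) - rtr ((v k)ᴴ * v k) ≤
      4 * ∑ i ∈ Finset.range k, rtr ((1 - Bs i) * (v 0 * (v 0)ᴴ)) := by
  have h1 := union_sum hB v hv k
  have h2 := rtr_nonneg (posSemidef_conjTranspose_mul_self (v 0 - v k))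
  have e : (v 0 - v k)ᴴ * (v 0 - v k) = (v 0)ᴴ * v 0 - (v 0)ᴴ * v k - (v k)ᴴ * v 0 + (v k)ᴴ * v k := by
    rw [conjTranspose_sub]; noncomm_ring
  have e2 : rtr ((v k)ᴴ * v 0) = rtr ((v 0)ᴴ * v k) := by
    rw [← rtr_conjTranspose]
    simp only [conjTranspose_mul, conjTranspose_conjTranspose]
  rw [e, rtr_add, rtr_sub, rtr_sub, e2] at h2
  rw [Matrix.mul_sub, rtr_sub] at h1
  rw [rtr_comm (v 0)]
  linarith

/-- partial products of complements -/
def seqQ (T : ℕ → Matrix ι ι ℂ) : ℕ → Matrix ι ι ℂ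
  | 0 => 1
  | i + 1 => (1 - T i) * seqQ T i

/-- sequential POVM element -/
def seqΛ (T : ℕ → Matrix ι ι ℂ) (i : ℕ) : Matrix ι ι ℂ := (T i * seqQ T i)ᴴ * (T i * seqQ T i)

lemma seqΛ_psd (T : ℕ → Matrix ι ι ℂ) (i : ℕ) : (seqΛ T i).PosSemidef :=
  posSemidef_conjTranspose_mul_self _

lemma seqΛ_sum {T : ℕ → Matrix ι ι ℂ} (hT : ∀ i, Eff (T i)) (k : ℕ) :
    (1 - ∑ i ∈ Finset.range k, seqΛ T i - (seqQ T k)ᴴ * seqQ T k).PosSemidef := by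
  induction k with
  | zero => simp [seqQ, PosSemidef.zero]
  | succ k ih =>
    rw [Finset.sum_range_succ]
    have h1 := (effect_sq (hT k).1 (hT k).2).conjTranspose_mul_mul_same (seqQ T k)
    have h2 := ih.add (h1.add h1)
    convert h2 using 1
    rw [seqΛ, seqQ, conjTranspose_mul, conjTranspose_mul, (hT k).1.1.eq, (hT k).2.1.eq]
    noncomm_ring

lemma seqΛ_le {T : ℕ → Matrix ι ι ℂ} (hT : ∀ i, Eff (T i)) (k : ℕ) :
    (1 - ∑ i ∈ Finset.range k, seqΛ T i).PosSemidef := by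
  have h := (seqΛ_sum hT k).add (posSemidef_conjTranspose_mul_self (seqQ T k))
  rwa [sub_add_cancel] at h

lemma seq_error {T : ℕ → Matrix ι ι ℂ} (hT : ∀ i, Eff (T i)) {ρ : Matrix ι ι ℂ} (hρ : IsDensity ρ)
    (m : ℕ) : 1 - rtr (seqΛ T m * ρ) ≤
      4 * (rtr ((1 - T m) * ρ) + ∑ i ∈ Finset.range m, rtr (T i * ρ)) := by
  obtain ⟨Y, hY⟩ := psd_factor hρ.1
  let Bs : ℕ → Matrix ι ι ℂ := fun i => if i = m then T m else 1 - T i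
  let v : ℕ → Matrix ι ι ℂ := fun k => Nat.rec Y (fun i w => Bs i * w) k
  have hv0 : v 0 = Y := rfl
  have hv : ∀ i, v (i + 1) = Bs i * v i := fun i => rfl
  have hB : ∀ i, Eff (Bs i) := by
    intro i
    by_cases h : i = m
    · simp only [Bs, h, if_true]; exact hT m
    · simp only [Bs, h, if_false]; exact (hT i).compl
  have hvq : ∀ i, i ≤ m → v i = seqQ T i * Y := by
    intro i
    induction i with
    | zero => intro _; simp [seqQ, hv0]
    | succ i ih =>
      intro hi
      rw [hv, ih (by omega), seqQ, Matrix.mul_assoc]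
      have : i ≠ m := by omega
      simp only [Bs, this, if_false]
  have hb := union_bound hB v hv (m + 1)
  rw [hv0, ← hY, rtr_density hρ, Finset.sum_range_succ] at hb
  have e1 : rtr ((v (m + 1))ᴴ * v (m + 1)) = rtr (seqΛ T m * ρ) := by
    rw [hv, hvq m le_rfl, hY, seqΛ]
    simp only [Bs, if_true]
    rw [conjTranspose_mul, conjTranspose_mul, ← Matrix.mul_assoc (T m), conjTranspose_mul,
      ← Matrix.mul_assoc _ Y, rtr_comm (_ * Y)]
    congr 1
    simp only [Matrix.mul_assoc]
  have e2 : ∑ i ∈ Finset.range m, rtr ((1 - Bs i) * ρ) = ∑ i ∈ Finset.range m, rtr (T i * ρ) := by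
    refine Finset.sum_congr rfl fun i hi => ?_
    have : i ≠ m := (Finset.mem_range.1 hi).ne
    simp only [Bs, this, if_false, sub_sub_cancel]
  rw [e1, e2] at hb
  simp only [Bs, if_true] at hb
  linarith

/-- For projections, the sandwiched product test. -/
lemma proj_test {P Q ρ : Matrix ι ι ℂ} (hP : Eff P) (hQ : Eff Q)
    (hQ2 : Q * Q = Q) (hρ : IsDensity ρ) :
    1 - rtr (P * Q * P * ρ) ≤ 4 * (rtr ((1 - P) * ρ) + rtr ((1 - Q) * ρ)) := by
  obtain ⟨Y, hY⟩ := psd_factor hρ.1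
  let Bs : ℕ → Matrix ι ι ℂ := fun i => if i = 0 then P else Q
  let v : ℕ → Matrix ι ι ℂ := fun k => Nat.rec Y (fun i w => Bs i * w) k
  have hv : ∀ i, v (i + 1) = Bs i * v i := fun i => rfl
  have hB : ∀ i, Eff (Bs i) := by
    intro i
    by_cases h : i = 0
    · simp only [Bs, h, if_true]; exact hP
    · simp only [Bs, h, if_false]; exact hQ
  have hb := union_bound hB v hv 2
  have e0 : v 0 = Y := rfl
  have e1 : v 2 = Q * (P * Y) := rfl
  rw [e1, e0, ← hY, rtr_density hρ, Finset.sum_range_succ, Finset.sum_range_one] at hb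
  have e2 : rtr ((Q * (P * Y))ᴴ * (Q * (P * Y))) = rtr (P * Q * P * ρ) := by
    rw [conjTranspose_mul, conjTranspose_mul, hQ.1.1.eq, hP.1.1.eq, hY]
    have : Yᴴ * P * Q * (Q * (P * Y)) = Yᴴ * (P * (Q * Q) * P * Y) := by
      simp only [Matrix.mul_assoc]
    rw [this, hQ2, rtr_comm]
    simp only [Matrix.mul_assoc]
  rw [e2] at hb
  simp only [Bs, if_true] at hb
  exact hb

lemma sandwich_eff {P Q : Matrix ι ι ℂ} (hP : Eff P) (hP2 : P * P = P) (hQ : Eff Q) :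
    Eff (P * Q * P) := by
  refine ⟨?_, ?_⟩
  · have := hQ.1.mul_mul_conjTranspose_same P
    rwa [hP.1.1.eq] at this
  · have := hQ.2.mul_mul_conjTranspose_same P
    rw [hP.1.1.eq] at this
    have h2 := hP.2.add this
    convert h2 using 1
    rw [Matrix.mul_sub, Matrix.sub_mul, Matrix.mul_one, hP2]
    abel

end SeqDecoder
section TestSec
variable {β : Type*} [Fintype β] [DecidableEq β]

/-- typical set -/
def typS {n : ℕ} (q g : β → ℝ) (t : ℝ) (x : Fin n → Fin 2) (b : Fin n → β) : Prop :=
  (∀ i, x i = 1 → q (b i) ≠ 0) ∧ (∑ i, if x i = 1 then g (b i) else 0) ≤ wt x * t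

lemma exp_moment {q g : β → ℝ} (hq : ∀ b, 0 ≤ q b) (hq1 : ∑ b, q b = 1) {η : ℝ} (hη : 0 < η) :
    ∃ θ u : ℝ, 0 < θ ∧ 0 < u ∧
      ∑ b, q b * Real.exp (θ * (g b - (∑ b, q b * g b + η))) = Real.exp (-u) := by
  set t := ∑ b, q b * g b + η with ht
  set φ : ℝ → ℝ := fun θ => ∑ b, q b * Real.exp (θ * (g b - t)) with hφ
  have hd : HasDerivAt φ (∑ b, q b * (g b - t)) 0 := by
    apply HasDerivAt.fun_sum
    intro b _
    apply HasDerivAt.const_mul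
    have h1 : HasDerivAt (fun θ : ℝ => θ * (g b - t)) (g b - t) 0 := by
      simpa using (hasDerivAt_id (0 : ℝ)).mul_const (g b - t)
    simpa using h1.exp
  have hsum : ∑ b, q b * (g b - t) = -η := by
    simp only [mul_sub, Finset.sum_sub_distrib, ← Finset.sum_mul, hq1, ht]; ring
  rw [hsum] at hd
  have h0 : φ 0 = 1 := by simp [hφ, hq1]
  have hs := hd.tendsto_slope
  have hev : ∀ᶠ θ in nhdsWithin (0 : ℝ) {0}ᶜ, slope φ 0 θ < 0 :=
    hs.eventually (gt_mem_nhds (by linarith))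
  have hev2 : ∀ᶠ θ in nhdsWithin (0 : ℝ) (Set.Ioi 0), slope φ 0 θ < 0 :=
    hev.filter_mono (nhdsWithin_mono _ fun z hz => ne_of_gt hz)
  obtain ⟨θ, hθ1, hθ2⟩ := (hev2.and self_mem_nhdsWithin).exists
  have hθ0 : 0 < θ := hθ2
  rw [slope_def_field, h0, sub_zero, div_neg_iff] at hθ1
  have hlt : φ θ < 1 := by
    rcases hθ1 with h | h
    · linarith [h.2]
    · linarith [h.1]
  have hpos : 0 < φ θ := by
    obtain ⟨b, hb⟩ : ∃ b, q b ≠ 0 := by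
      by_contra hcon
      push Not at hcon
      simp [hcon] at hq1
    refine Finset.sum_pos' (fun b _ => mul_nonneg (hq b) (Real.exp_pos _).le) ⟨b, Finset.mem_univ b, ?_⟩
    exact mul_pos (lt_of_le_of_ne (hq b) (Ne.symm hb)) (Real.exp_pos _)
  refine ⟨θ, -Real.log (φ θ), hθ0, by linarith [Real.log_neg hpos hlt], ?_⟩
  rw [neg_neg, Real.exp_log hpos]

lemma prod_ite_exp {n : ℕ} (x : Fin n → Fin 2) (f : Fin n → ℝ) :
    ∏ i, (if x i = 1 then Real.exp (f i) else 1) = Real.exp (∑ i, if x i = 1 then f i else 0) := by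
  rw [Real.exp_sum]
  refine Finset.prod_congr rfl fun i _ => ?_
  split_ifs <;> simp

lemma sum_ite_wt {n : ℕ} (x : Fin n → Fin 2) (c : ℝ) :
    (∑ i, if x i = 1 then c else 0) = wt x * c := by
  rw [wt, Finset.sum_mul]
  refine Finset.sum_congr rfl fun i _ => ?_
  split_ifs <;> simp

lemma tail_bound {q g : β → ℝ} (hq : ∀ b, 0 ≤ q b) (hq1 : ∑ b, q b = 1) {η : ℝ} (hη : 0 < η) :
    ∃ u : ℝ, 0 < u ∧ ∀ (n : ℕ) (x : Fin n → Fin 2) (p : Fin n → β → ℝ), (∀ i b, 0 ≤ p i b) →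
      (∀ i, ∑ b, p i b = 1) → (∀ i, x i = 1 → p i = q) →
      ∑ b : Fin n → β, (1 - if typS q g (∑ b, q b * g b + η) x b then 1 else 0) * ∏ i, p i (b i) ≤
        Real.exp (-u * wt x) := by
  obtain ⟨θ, u, hθ, hu, he⟩ := exp_moment (g := g) hq hq1 hη
  set t := ∑ b, q b * g b + η with ht
  refine ⟨u, hu, fun n x p hp hp1 hpx => ?_⟩
  have hpt : ∀ b : Fin n → β, (1 - if typS q g t x b then 1 else 0) * ∏ i, p i (b i) ≤
      ∏ i, (p i (b i) * if x i = 1 then Real.exp (θ * (g (b i) - t)) else 1) := by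
    intro b
    have hrhs : 0 ≤ ∏ i, (p i (b i) * if x i = 1 then Real.exp (θ * (g (b i) - t)) else 1) := by
      refine Finset.prod_nonneg fun i _ => mul_nonneg (hp _ _) ?_
      split_ifs <;> positivity
    by_cases hS : typS q g t x b
    · rw [if_pos hS, sub_self, zero_mul]; exact hrhs
    · rw [if_neg hS, sub_zero, one_mul]
      by_cases h1 : ∀ i, x i = 1 → q (b i) ≠ 0
      · have h2 : ¬ ((∑ i, if x i = 1 then g (b i) else 0) ≤ wt x * t) := fun h => hS ⟨h1, h⟩
        push Not at h2
        rw [Finset.prod_mul_distrib]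
        refine le_mul_of_one_le_right (Finset.prod_nonneg fun i _ => hp _ _) ?_
        rw [prod_ite_exp x (fun i => θ * (g (b i) - t))]
        rw [Real.one_le_exp_iff]
        have e : (∑ i, if x i = 1 then θ * (g (b i) - t) else 0) =
            θ * ((∑ i, if x i = 1 then g (b i) else 0) - wt x * t) := by
          rw [← sum_ite_wt, ← Finset.sum_sub_distrib, Finset.mul_sum]
          refine Finset.sum_congr rfl fun i _ => ?_
          split_ifs <;> simp
        rw [e]
        exact mul_nonneg hθ.le (by linarith)
      · push Not at h1
        obtain ⟨i, hi, hqi⟩ := h1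
        have : ∏ i, p i (b i) = 0 :=
          Finset.prod_eq_zero (Finset.mem_univ i) (by rw [hpx i hi]; exact hqi)
        rw [this]; exact hrhs
  refine (Finset.sum_le_sum fun b _ => hpt b).trans ?_
  have h3 := Finset.prod_univ_sum (fun _ : Fin n => (Finset.univ : Finset β))
    (fun i b => p i b * if x i = 1 then Real.exp (θ * (g b - t)) else 1)
  rw [Fintype.piFinset_univ] at h3
  rw [← h3]
  have h4 : ∀ i, ∑ b, p i b * (if x i = 1 then Real.exp (θ * (g b - t)) else 1) =
      if x i = 1 then Real.exp (-u) else 1 := by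
    intro i
    split_ifs with h
    · rw [hpx i h]; exact he
    · simp [hp1]
  simp only [h4]
  rw [prod_ite_exp x (fun _ => -u), sum_ite_wt, mul_comm]

lemma ind_eff {U : Matrix β β ℂ} (hU : UN U) (S : β → Prop) :
    Eff (sp U (fun b => if S b then 1 else 0)) ∧
    sp U (fun b => if S b then 1 else 0) * sp U (fun b => if S b then 1 else 0) =
      sp U (fun b => if S b then 1 else 0) ∧
    1 - sp U (fun b => if S b then 1 else 0) = sp U (fun b => 1 - if S b then 1 else 0) := by
  have h3 : 1 - sp U (fun b => if S b then 1 else 0) = sp U (fun b => 1 - if S b then 1 else 0) := by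
    rw [sp_sub, sp_one hU]
  refine ⟨⟨sp_psd U fun b => by split_ifs <;> norm_num, ?_⟩, ?_, h3⟩
  · rw [h3]; exact sp_psd U fun b => by split_ifs <;> norm_num
  · rw [sp_mul hU]; congr 1; ext b; split_ifs <;> norm_num

lemma mix_dom {σ : Fin 2 → Matrix β β ℂ} (hσ : ∀ y, IsDensity (σ y)) {μ : ℝ}
    (hd : ((μ : ℂ) • σ 0 - σ 1).PosSemidef) {α : ℝ} (h0 : 0 ≤ α) :
    (((1 + α * μ : ℝ) : ℂ) • σ 0 - mix σ α).PosSemidef := by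
  have e : ((1 + α * μ : ℝ) : ℂ) • σ 0 - mix σ α = (α : ℂ) • ((μ : ℂ) • σ 0 - σ 1) + (α : ℂ) • σ 0 := by
    rw [mix]; push_cast; module
  rw [e]
  exact (psd_smul hd h0).add (psd_smul (hσ 0).1 h0)

lemma exists_test {σ : Fin 2 → Matrix β β ℂ} (hσ : ∀ y, IsDensity (σ y)) (hs : SuppLE (σ 1) (σ 0))
    {η : ℝ} (hη : 0 < η) :
    ∃ u μ : ℝ, 0 < u ∧ 0 ≤ μ ∧ ∀ (n : ℕ) (x : Fin n → Fin 2) (α : ℝ), 0 ≤ α → α ≤ 1 →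
      ∃ T : Matrix (Fin n → β) (Fin n → β) ℂ, Eff T ∧
        rtr ((1 - T) * kron (fun i => σ (x i))) ≤ 8 * Real.exp (-u * wt x) ∧
        rtr (T * tpow (mix σ α) n) ≤ Real.exp (wt x * (-relEnt (σ 1) (σ 0) + 2 * η + α * μ)) := by
  obtain ⟨μ, hμ, hdom⟩ := suppLE_dom (hσ 1) (hσ 0).1 hs
  obtain ⟨U1, r, hU1, hr0, hr1, hrs, hσ1⟩ := density_sp (hσ 1)
  obtain ⟨U0, s, hU0, hs0, hs1, hss, hσ0⟩ := density_sp (hσ 0)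
  set q := qd U0 (σ 1) with hq
  have hq0 : ∀ b, 0 ≤ q b := fun b => qd_nonneg U0 (hσ 1).1 b
  have hqs : ∑ b, q b = 1 := by rw [hq, qd_sum hU0, rtr_density (hσ 1)]
  have hqr : qd U1 (σ 1) = r := by ext b; rw [hσ1, qd_sp hU1]
  obtain ⟨u1, hu1, ht1⟩ := tail_bound (q := r) (g := fun b => -Real.log (r b)) hr0 hrs hη
  obtain ⟨u0, hu0, ht0⟩ := tail_bound (q := q) (g := fun b => Real.log (s b)) hq0 hqs hη
  set t1 := ∑ b, r b * -Real.log (r b) + η with ht1d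
  set t0 := ∑ b, q b * Real.log (s b) + η with ht0d
  have hD : t1 + t0 = -relEnt (σ 1) (σ 0) + 2 * η := by
    have e1 : rtr (σ 1 * matLog (σ 1)) = ∑ b, r b * Real.log (r b) := by
      rw [hσ1, rtr_matLog_self hU1]
    have e2 : rtr (σ 1 * matLog (σ 0)) = ∑ b, q b * Real.log (s b) := by
      conv_lhs => rw [hσ0]
      rw [rtr_matLog hU0]
    rw [relEnt_eq_rtr, e1, e2, ht1d, ht0d]
    simp only [mul_neg, Finset.sum_neg_distrib]
    ring
  refine ⟨min u1 u0, μ, lt_min hu1 hu0, hμ, fun n x α hα0 hα1 => ?_⟩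
  obtain ⟨V, v, hV, hv0, hv1, hvs, hσα⟩ := density_sp (density_mix hσ hα0 hα1)
  set G1 : Fin n → Matrix β β ℂ := fun i => if x i = 1 then U1 else 1 with hG1
  set G0 : Fin n → Matrix β β ℂ := fun i => if x i = 1 then U0 else V with hG0
  have hUN1 : ∀ i, UN (G1 i) := by
    intro i; simp only [hG1]; split_ifs
    · exact hU1
    · exact UN_one
  have hUN0 : ∀ i, UN (G0 i) := by
    intro i; simp only [hG0]; split_ifs
    · exact hU0
    · exact hV
  set S1 := typS r (fun b => -Real.log (r b)) t1 x with hS1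
  set S0 := typS q (fun b => Real.log (s b)) t0 x with hS0
  obtain ⟨hE1, hP1, hC1⟩ := ind_eff (kron_UN hUN1) S1
  obtain ⟨hE0, hP0, hC0⟩ := ind_eff (kron_UN hUN0) S0
  set Pr1 := sp (kron G1) (fun b => if S1 b then 1 else 0) with hPr1
  set Pr0 := sp (kron G0) (fun b => if S0 b then 1 else 0) with hPr0
  have hρd : IsDensity (kron (fun i => σ (x i))) := kron_density fun i => hσ _
  have hwt : 0 ≤ wt x := Finset.sum_nonneg fun i _ => by split_ifs <;> norm_num
  refine ⟨Pr0 * Pr1 * Pr0, sandwich_eff hE0 hP0 hE1, ?_, ?_⟩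
  · have h := proj_test hE0 hE1 hP1 hρd
    rw [Matrix.sub_mul, rtr_sub, Matrix.one_mul, rtr_density hρd]
    have h1 : rtr ((1 - Pr1) * kron (fun i => σ (x i))) ≤ Real.exp (-u1 * wt x) := by
      rw [hC1, rtr_sp_mul]
      simp only [qd_kron G1 (fun i => (hσ (x i)).1.1)]
      refine ht1 n x (fun i => qd (G1 i) (σ (x i))) (fun i b => qd_nonneg _ (hσ _).1 b) (fun i => ?_) ?_
      · rw [qd_sum (hUN1 i), rtr_density (hσ _)]
      · intro i hi
        simp only [hG1, hi, if_true]; exact hqr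
    have h0 : rtr ((1 - Pr0) * kron (fun i => σ (x i))) ≤ Real.exp (-u0 * wt x) := by
      rw [hC0, rtr_sp_mul]
      simp only [qd_kron G0 (fun i => (hσ (x i)).1.1)]
      refine ht0 n x (fun i => qd (G0 i) (σ (x i))) (fun i b => qd_nonneg _ (hσ _).1 b) (fun i => ?_) ?_
      · rw [qd_sum (hUN0 i), rtr_density (hσ _)]
      · intro i hi
        simp only [hG0, hi, if_true]; rfl
    have h1' : Real.exp (-u1 * wt x) ≤ Real.exp (-min u1 u0 * wt x) := by
      gcongr; exact min_le_left _ _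
    have h0' : Real.exp (-u0 * wt x) ≤ Real.exp (-min u1 u0 * wt x) := by
      gcongr; exact min_le_right _ _
    linarith
  · -- domination by the product with the innocent letter on the support of `x`
    let d : Fin n → β → ℝ := fun i b => if x i = 1 then (1 + α * μ) * s b else v b
    let e : Fin n → β → ℝ := fun i b => if x i = 1 then 1 else v b
    let ρ1 : Fin n → Matrix β β ℂ := fun i => if x i = 1 then σ 1 else 1
    have hαμ : 0 ≤ α * μ := mul_nonneg hα0 hμ
    have s1 : rtr (Pr0 * Pr1 * Pr0 * tpow (mix σ α) n) ≤
        rtr (Pr0 * Pr1 * Pr0 * sp (kron G0) (fun b => ∏ i, d i (b i))) := by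
      apply rtr_mul_le (sandwich_eff hE0 hP0 hE1).1
      rw [← kron_sp, tpow_eq_kron]
      apply kron_mono (fun i => (density_mix hσ hα0 hα1).1)
      intro i
      by_cases hi : x i = 1
      · have := mix_dom hσ hdom hα0
        simp only [d, hG0, hi, if_true]
        rw [sp_smul, ← hσ0]; exact this
      · simp only [d, hG0, hi, if_false]
        have e5 : (fun b => v b) = v := rfl
        rw [e5, ← hσα, sub_self]; exact PosSemidef.zero
    have s2 : rtr (Pr0 * Pr1 * Pr0 * sp (kron G0) (fun b => ∏ i, d i (b i))) =
        rtr (Pr1 * sp (kron G0) (fun b => (if S0 b then 1 else 0) * ∏ i, d i (b i))) := by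
      have : Pr0 * Pr1 * Pr0 * sp (kron G0) (fun b => ∏ i, d i (b i)) =
        Pr0 * (Pr1 * (Pr0 * sp (kron G0) (fun b => ∏ i, d i (b i)))) := by simp only [Matrix.mul_assoc]
      rw [this, rtr_comm, Matrix.mul_assoc, hPr0, sp_mul (kron_UN hUN0), sp_mul (kron_UN hUN0)]
      congr 3
      ext b; split_ifs <;> ring
    set E0 := Real.exp (wt x * (α * μ + t0)) with hE0d
    set E1 := Real.exp (wt x * t1) with hE1d
    have s3 : rtr (Pr1 * sp (kron G0) (fun b => (if S0 b then 1 else 0) * ∏ i, d i (b i))) ≤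
        rtr (Pr1 * sp (kron G0) (fun b => E0 * ∏ i, e i (b i))) := by
      apply rtr_mul_le hE1.1
      apply sp_sub_psd
      intro b
      have hen : 0 ≤ ∏ i, e i (b i) := Finset.prod_nonneg fun i _ => by
        simp only [e]; split_ifs
        · norm_num
        · exact hv0 _
      by_cases hb : S0 b
      · rw [if_pos hb, one_mul]
        have hde : ∏ i, d i (b i) = (∏ i, if x i = 1 then (1 + α * μ) * s (b i) else 1) * ∏ i, e i (b i) := by
          rw [← Finset.prod_mul_distrib]
          refine Finset.prod_congr rfl fun i _ => ?_
          simp only [d, e]; split_ifs <;> ring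
        rw [hde]
        apply mul_le_mul_of_nonneg_right _ hen
        calc (∏ i, if x i = 1 then (1 + α * μ) * s (b i) else 1)
            ≤ ∏ i, if x i = 1 then Real.exp (α * μ + Real.log (s (b i))) else 1 := by
              refine Finset.prod_le_prod (fun i _ => ?_) (fun i _ => ?_)
              · have := hs0 (b i)
                split_ifs <;> positivity
              · split_ifs with hi
                · have hsne : s (b i) ≠ 0 := by
                    intro h0
                    refine hb.1 i hi ?_
                    exact suppLE_qd (hσ 1).1 hU0 (hσ0 ▸ hs) h0
                  have hsp : 0 < s (b i) := lt_of_le_of_ne (hs0 _) (Ne.symm hsne)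
                  rw [Real.exp_add, Real.exp_log hsp]
                  apply mul_le_mul_of_nonneg_right _ hsp.le
                  linarith [Real.add_one_le_exp (α * μ)]
                · exact le_rfl
          _ = Real.exp (∑ i, if x i = 1 then α * μ + Real.log (s (b i)) else 0) :=
              prod_ite_exp x _
          _ ≤ E0 := by
              rw [hE0d, Real.exp_le_exp, mul_add, ← sum_ite_wt x (α * μ)]
              have := hb.2
              calc (∑ i, if x i = 1 then α * μ + Real.log (s (b i)) else 0)
                  = (∑ i, if x i = 1 then α * μ else 0) + ∑ i, if x i = 1 then Real.log (s (b i)) else 0 := by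
                    rw [← Finset.sum_add_distrib]
                    refine Finset.sum_congr rfl fun i _ => ?_
                    split_ifs <;> simp
                _ ≤ _ := by linarith
      · rw [if_neg hb, zero_mul]
        exact mul_nonneg (Real.exp_pos _).le hen
    have hke : sp (kron G0) (fun b => E0 * ∏ i, e i (b i)) =
        (E0 : ℂ) • kron (fun i => if x i = 1 then 1 else mix σ α) := by
      rw [sp_smul, ← kron_sp]
      congr 2
      ext1 i
      by_cases hi : x i = 1
      · simp only [hG0, e, hi, if_true]; exact sp_one hU0
      · simp only [hG0, e, hi, if_false]; exact hσα.symm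
    have hkr : sp (kron G1) (fun b => E1 * ∏ i, (if x i = 1 then r (b i) else 1)) =
        (E1 : ℂ) • kron ρ1 := by
      rw [sp_smul]
      have := kron_sp G1 (fun i b => if x i = 1 then r b else 1)
      rw [← this]
      congr 2
      ext1 i
      by_cases hi : x i = 1
      · simp only [hG1, ρ1, hi, if_true]; exact hσ1.symm
      · simp only [hG1, ρ1, hi, if_false]; exact sp_one UN_one
    have hpsd : (kron (fun i => if x i = 1 then 1 else mix σ α)).PosSemidef := by
      apply kron_psd
      intro i; split_ifs
      · exact PosSemidef.one
      · exact (density_mix hσ hα0 hα1).1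
    have s4 : rtr (Pr1 * kron (fun i => if x i = 1 then 1 else mix σ α)) ≤ E1 := by
      have hle : rtr (Pr1 * kron (fun i => if x i = 1 then 1 else mix σ α)) ≤
          rtr ((E1 : ℂ) • kron ρ1 * kron (fun i => if x i = 1 then 1 else mix σ α)) := by
        apply rtr_mul_le' hpsd
        rw [← hkr]
        apply sp_sub_psd
        intro b
        by_cases hb : S1 b
        · rw [if_pos hb]
          have e1 : (∏ i, if x i = 1 then r (b i) else 1) =
              ∏ i, if x i = 1 then Real.exp (Real.log (r (b i))) else 1 := by
            refine Finset.prod_congr rfl fun i _ => ?_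
            split_ifs with hi
            · rw [Real.exp_log (lt_of_le_of_ne (hr0 _) (Ne.symm (hb.1 i hi)))]
            · rfl
          rw [e1, prod_ite_exp x (fun i => Real.log (r (b i))), hE1d, ← Real.exp_add, Real.one_le_exp_iff]
          have h2 := hb.2
          have e2 : (∑ i, if x i = 1 then -Real.log (r (b i)) else 0) =
              -∑ i, if x i = 1 then Real.log (r (b i)) else 0 := by
            rw [← Finset.sum_neg_distrib]
            refine Finset.sum_congr rfl fun i _ => ?_
            split_ifs <;> simp
          rw [e2] at h2
          linarith
        · rw [if_neg hb]
          refine mul_nonneg (Real.exp_pos _).le (Finset.prod_nonneg fun i _ => ?_)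
          split_ifs
          · exact hr0 _
          · norm_num
      refine hle.trans ?_
      rw [Matrix.smul_mul, rtr_smul, kron_mul]
      have hd : IsDensity (kron fun i => ρ1 i * if x i = 1 then 1 else mix σ α) := by
        apply kron_density
        intro i
        simp only [ρ1]
        split_ifs
        · rw [Matrix.mul_one]; exact hσ 1
        · rw [Matrix.one_mul]; exact density_mix hσ hα0 hα1
      rw [rtr_density hd, mul_one]
    calc rtr (Pr0 * Pr1 * Pr0 * tpow (mix σ α) n)
        ≤ rtr (Pr1 * sp (kron G0) (fun b => E0 * ∏ i, e i (b i))) := by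
          rw [s2] at s1; exact s1.trans s3
      _ = E0 * rtr (Pr1 * kron (fun i => if x i = 1 then 1 else mix σ α)) := by
          rw [hke, Matrix.mul_smul, rtr_smul]
      _ ≤ E0 * E1 := mul_le_mul_of_nonneg_left s4 (Real.exp_pos _).le
      _ = _ := by
          rw [hE0d, hE1d, ← Real.exp_add, ← hD]; congr 1; ring

end TestSec

section Ach

/-- Resampling one coordinate of a uniformly random function. -/
lemma resample {A Ω V : Type*} [Fintype A] [DecidableEq A] [Fintype Ω] [AddCommMonoid V]
    (m : A) (F : (A → Ω) → V) :
    ∑ k : A → Ω, ∑ o : Ω, F (Function.update k m o) = Fintype.card Ω • ∑ k, F k := by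
  classical
  have h1 : ∑ k : A → Ω, ∑ o : Ω, F (Function.update k m o)
      = ∑ p : (A → Ω) × Ω, F (Function.update p.1 m p.2) := by
    rw [Fintype.sum_prod_type]
  have h2 : ∑ p : (A → Ω) × Ω, F (Function.update p.1 m p.2) = ∑ p : (A → Ω) × Ω, F p.1 := by
    refine Finset.sum_nbij' (fun p => (Function.update p.1 m p.2, p.1 m))
      (fun p => (Function.update p.1 m p.2, p.1 m)) ?_ ?_ ?_ ?_ ?_
    · simp
    · simp
    · rintro ⟨k, o⟩ _; simp
    · rintro ⟨k, o⟩ _; simp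
    · rintro ⟨k, o⟩ _; simp
  rw [h1, h2, Fintype.sum_prod_type]
  simp [Finset.smul_sum]

lemma marginal {A Ω V : Type*} [Fintype A] [DecidableEq A] [Fintype Ω] [AddCommMonoid V]
    (m : A) (G : Ω → V) :
    Fintype.card Ω • ∑ k : A → Ω, G (k m) = Fintype.card (A → Ω) • ∑ o, G o := by
  rw [← resample m (fun k => G (k m))]
  simp

/-- Random coding error bound. -/
lemma random_code {ι Ω : Type*} [Fintype ι] [DecidableEq ι] [Fintype Ω] [Nonempty Ω]
    {ρ : Ω → Matrix ι ι ℂ} {τ : Matrix ι ι ℂ} {T : Ω → Matrix ι ι ℂ} {a b : ℝ}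
    (hτ : ∑ o, ρ o = ((Fintype.card Ω : ℝ) : ℂ) • τ) (hρ : ∀ o, IsDensity (ρ o))
    (hT : ∀ o, Eff (T o)) (hb0 : 0 ≤ b) (hb : ∀ o, rtr (T o * τ) ≤ b)
    (ha : ∑ o, rtr ((1 - T o) * ρ o) ≤ Fintype.card Ω * a) (M : ℕ) (m : Fin M) :
    ∑ k : Fin M → Ω,
      (1 - rtr (seqΛ (fun i => if h : i < M then T (k ⟨i, h⟩) else 0) m * ρ (k m)))
      ≤ Fintype.card (Fin M → Ω) * (4 * (a + M * b)) := by
  classical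
  have hN : (0 : ℝ) < Fintype.card Ω := by exact_mod_cast Fintype.card_pos
  set Kc : ℝ := ((Fintype.card (Fin M → Ω) : ℕ) : ℝ) with hKc
  have hE : ∀ k : Fin M → Ω, ∀ i, Eff ((fun i => if h : i < M then T (k ⟨i, h⟩) else 0) i) := by
    intro k i
    by_cases h : i < M
    · simpa [h] using hT _
    · simpa [h] using Eff.zero
  have h1 : ∑ k : Fin M → Ω, rtr ((1 - T (k m)) * ρ (k m)) ≤ Kc * a := by
    have := marginal (A := Fin M) m (fun o => rtr ((1 - T o) * ρ o))
    simp only [nsmul_eq_mul] at this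
    rw [← hKc] at this
    have h2 : Kc * ∑ o, rtr ((1 - T o) * ρ o) ≤ Kc * (Fintype.card Ω * a) :=
      mul_le_mul_of_nonneg_left ha (by positivity)
    rw [← this] at h2
    have : (Fintype.card Ω : ℝ) * ∑ k : Fin M → Ω, rtr ((1 - T (k m)) * ρ (k m))
        ≤ Fintype.card Ω * (Kc * a) := by linarith
    exact le_of_mul_le_mul_left this hN
  have h3 : ∀ i : Fin M, i ≠ m → ∑ k : Fin M → Ω, rtr (T (k i) * ρ (k m)) ≤ Kc * b := by
    intro i him
    have := resample (A := Fin M) m (fun k : Fin M → Ω => rtr (T (k i) * ρ (k m)))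
    simp only [nsmul_eq_mul, Function.update_self, Function.update_of_ne him] at this
    have h4 : ∀ k : Fin M → Ω, ∑ o, rtr (T (k i) * ρ o) ≤ Fintype.card Ω * b := by
      intro k
      rw [← rtr_sum, ← Finset.mul_sum, hτ, mul_smul_comm, rtr_smul]
      exact mul_le_mul_of_nonneg_left (hb _) hN.le
    have h5 : ∑ k : Fin M → Ω, ∑ o, rtr (T (k i) * ρ o) ≤ Kc * (Fintype.card Ω * b) := by
      refine (Finset.sum_le_sum fun k _ => h4 k).trans ?_
      simp [hKc]
    rw [this] at h5
    have : (Fintype.card Ω : ℝ) * ∑ k : Fin M → Ω, rtr (T (k i) * ρ (k m))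
        ≤ Fintype.card Ω * (Kc * b) := by linarith
    exact le_of_mul_le_mul_left this hN
  have h6 : ∀ k : Fin M → Ω,
      (1 - rtr (seqΛ (fun i => if h : i < M then T (k ⟨i, h⟩) else 0) m * ρ (k m)))
      ≤ 4 * (rtr ((1 - T (k m)) * ρ (k m)) +
        ∑ i ∈ Finset.range m, rtr ((if h : i < M then T (k ⟨i, h⟩) else 0) * ρ (k m))) := by
    intro k
    have := seq_error (hE k) (hρ (k m)) m
    simpa using this
  refine (Finset.sum_le_sum fun k _ => h6 k).trans ?_
  rw [← Finset.mul_sum, Finset.sum_add_distrib, Finset.sum_comm]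
  have h7 : ∑ i ∈ Finset.range m, ∑ k : Fin M → Ω,
      rtr ((if h : i < M then T (k ⟨i, h⟩) else 0) * ρ (k m)) ≤ M * (Kc * b) := by
    have : ∀ i ∈ Finset.range m, ∑ k : Fin M → Ω,
      rtr ((if h : i < M then T (k ⟨i, h⟩) else 0) * ρ (k m)) ≤ Kc * b := by
      intro i hi
      have him : i < m := Finset.mem_range.1 hi
      have hiM : i < M := him.trans m.2
      simp only [hiM, dif_pos]
      refine h3 ⟨i, hiM⟩ ?_
      intro h
      rw [← h] at him
      simp at him
    refine (Finset.sum_le_sum this).trans ?_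
    simp only [Finset.sum_const, Finset.card_range, nsmul_eq_mul]
    refine mul_le_mul_of_nonneg_right ?_ (by positivity)
    exact_mod_cast m.2.le
  nlinarith

/-- The codeword attached to a sample point. -/
def cw {n : ℕ} (a : ℕ) (o : Fin n → Fin n) (i : Fin n) : Fin 2 := if (o i).val < a then 1 else 0

lemma card_lt_fin {n a : ℕ} (h : a ≤ n) :
    (Finset.univ.filter fun j : Fin n => j.val < a).card = a := by
  rw [Fin.card_filter_val_lt]; simp [h]

lemma sum_letter {V : Type*} [AddCommGroup V] [Module ℂ V] {n a : ℕ} (h : a ≤ n) (u v : V) :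
    ∑ j : Fin n, (if j.val < a then u else v) = (a : ℂ) • u + ((n : ℂ) - a) • v := by
  rw [Finset.sum_ite, Finset.sum_const, Finset.sum_const, card_lt_fin h]
  have : (Finset.univ.filter fun j : Fin n => ¬ j.val < a).card = n - a := by
    have := Finset.card_filter_add_card_filter_not (s := (Finset.univ : Finset (Fin n)))
      (fun j : Fin n => j.val < a)
    rw [card_lt_fin h, Finset.card_univ, Fintype.card_fin] at this
    omega
  rw [this, ← Nat.cast_smul_eq_nsmul ℂ, ← Nat.cast_smul_eq_nsmul ℂ, Nat.cast_sub h]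

lemma avg_cw {β : Type*} [Fintype β] [DecidableEq β] {n a : ℕ} (hn : 0 < n) (h : a ≤ n)
    (σ : Fin 2 → Matrix β β ℂ) :
    ∑ o : Fin n → Fin n, kron (fun i => σ (cw a o i))
      = ((Fintype.card (Fin n → Fin n) : ℝ) : ℂ) • tpow (mix σ ((a : ℝ) / n)) n := by
  have h1 := kron_sum (n := n) (fun (_ : Fin n) (j : Fin n) => σ (if j.val < a then 1 else 0))
  have h2 : ∑ j : Fin n, σ (if j.val < a then 1 else 0) = (n : ℂ) • mix σ ((a : ℝ) / n) := by
    have : ∀ j : Fin n, σ (if j.val < a then 1 else 0) = if j.val < a then σ 1 else σ 0 := by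
      intro j; split_ifs <;> rfl
    simp only [this]
    rw [sum_letter h, mix, smul_add, smul_smul, smul_smul]
    have hn' : (n : ℂ) ≠ 0 := by exact_mod_cast hn.ne'
    congr 2
    · push_cast; field_simp
    · push_cast; field_simp
  rw [h2, kron_smul] at h1
  unfold cw
  rw [← h1, tpow_eq_kron]
  simp

lemma chernoff {n a : ℕ} (hn : 0 < n) (h : a ≤ n) {η : ℝ} (h0 : 0 < η) (h1 : η ≤ 1) :
    ∑ o : Fin n → Fin n, (if wt (cw a o) < (1 - η) * a then (1 : ℝ) else 0)
      ≤ Fintype.card (Fin n → Fin n) * Real.exp (-(a * η ^ 2 / 4)) := by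
  set θ := η / 2 with hθ
  have h2 : ∀ o : Fin n → Fin n, (if wt (cw a o) < (1 - η) * a then (1 : ℝ) else 0)
      ≤ Real.exp (θ * ((1 - η) * a)) * ∏ i, (if (o i).val < a then Real.exp (-θ) else 1) := by
    intro o
    have : ∏ i, (if (o i).val < a then Real.exp (-θ) else 1) = Real.exp (-θ * wt (cw a o)) := by
      have : ∀ i, (if (o i).val < a then Real.exp (-θ) else 1)
          = Real.exp (-θ * if cw a o i = 1 then 1 else 0) := by
        intro i
        by_cases hi : (o i).val < a
        · simp [cw, hi]
        · simp [cw, hi]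
      simp only [this]
      rw [← Real.exp_sum, ← Finset.mul_sum, wt]
    rw [this, ← Real.exp_add]
    split_ifs with hw
    · apply Real.one_le_exp
      nlinarith
    · positivity
  refine (Finset.sum_le_sum fun o _ => h2 o).trans ?_
  rw [← Finset.mul_sum]
  have h3 := (Finset.prod_univ_sum (fun _ : Fin n => (Finset.univ : Finset (Fin n)))
    (fun _ j => if j.val < a then Real.exp (-θ) else 1))
  rw [Fintype.piFinset_univ] at h3
  rw [← h3]
  have h4 : ∑ j : Fin n, (if j.val < a then Real.exp (-θ) else 1)
      = n * (1 + (a : ℝ) / n * (Real.exp (-θ) - 1)) := by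
    have h5 := sum_letter h ((Real.exp (-θ) : ℝ) : ℂ) (1 : ℂ)
    have h6 : ((∑ j : Fin n, (if j.val < a then Real.exp (-θ) else 1) : ℝ) : ℂ)
        = ((a * Real.exp (-θ) + (n - a) : ℝ) : ℂ) := by
      rw [Complex.ofReal_sum]
      rw [smul_eq_mul, smul_eq_mul, mul_one] at h5
      rw [Complex.ofReal_add, Complex.ofReal_mul, Complex.ofReal_sub, Complex.ofReal_natCast,
        Complex.ofReal_natCast, ← h5]
      refine Finset.sum_congr rfl fun j _ => ?_
      split_ifs <;> simp
    rw [Complex.ofReal_inj] at h6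
    rw [h6]
    have hn' : (n : ℝ) ≠ 0 := by exact_mod_cast hn.ne'
    field_simp
    ring
  simp only [h4, Finset.prod_const, Finset.card_univ, Fintype.card_fin, Fintype.card_fun]
  have hn' : (n : ℝ) ≠ 0 := by exact_mod_cast hn.ne'
  have h7 : Real.exp (-θ) - 1 ≤ -θ + θ ^ 2 := by
    have := Real.abs_exp_sub_one_sub_id_le (x := -θ) (by rw [abs_le]; constructor <;> linarith)
    have := (abs_le.1 this).2
    nlinarith
  have h8 : 0 ≤ 1 + (a : ℝ) / n * (Real.exp (-θ) - 1) := by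
    have : (a : ℝ) / n ≤ 1 := by
      rw [div_le_one (by positivity)]; exact_mod_cast h
    have h9 : 0 ≤ (a : ℝ) / n := by positivity
    nlinarith [Real.exp_pos (-θ)]
  have h10 : (1 + (a : ℝ) / n * (Real.exp (-θ) - 1)) ^ n ≤ Real.exp (a * (-θ + θ ^ 2)) := by
    calc (1 + (a : ℝ) / n * (Real.exp (-θ) - 1)) ^ n
        ≤ (Real.exp ((a : ℝ) / n * (Real.exp (-θ) - 1))) ^ n := by
          refine pow_le_pow_left₀ h8 ?_ n
          rw [add_comm]; exact Real.add_one_le_exp _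
      _ = Real.exp (a * (Real.exp (-θ) - 1)) := by
          rw [← Real.exp_nat_mul]; congr 1; field_simp
      _ ≤ _ := by
          refine Real.exp_le_exp.2 (mul_le_mul_of_nonneg_left h7 (by positivity))
  rw [mul_pow]
  push_cast
  calc Real.exp (θ * ((1 - η) * a)) * ((n : ℝ) ^ n * (1 + (a : ℝ) / n * (Real.exp (-θ) - 1)) ^ n)
      ≤ Real.exp (θ * ((1 - η) * a)) * ((n : ℝ) ^ n * Real.exp (a * (-θ + θ ^ 2))) := by gcongr
    _ = (n : ℝ) ^ n * (Real.exp (θ * ((1 - η) * a)) * Real.exp (a * (-θ + θ ^ 2))) := by ring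
    _ = _ := by
      rw [← Real.exp_add]
      congr 2
      rw [hθ]; ring

lemma traceNorm_zero {ι : Type*} [Fintype ι] [DecidableEq ι] :
    traceNorm (0 : Matrix ι ι ℂ) = 0 := by
  have h : (0 : Matrix ι ι ℂ).IsHermitian := Matrix.isHermitian_zero
  have he : h.eigenvalues = 0 := h.eigenvalues_eq_zero_iff.2 rfl
  unfold traceNorm matFun
  simp [he]

end Ach

section Ach2

variable {B W : Type*} [Fintype B] [DecidableEq B] [Fintype W] [DecidableEq W]

lemma one_shot_code {π : Fin 2 → Matrix (B × W) (B × W) ℂ}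
    (hπ : ∀ x, IsDensity (π x))
    (hω : SuppLE (willieOut π 1) (willieOut π 0))
    {η u μ D : ℝ} (h0 : 0 < η) (h1 : η ≤ 1) (hu : 0 < u)
    (ht : ∀ (n : ℕ) (x : Fin n → Fin 2) (α : ℝ), 0 ≤ α → α ≤ 1 →
      ∃ T, Eff T ∧ rtr ((1 - T) * kron fun i => bobOut π (x i)) ≤ 8 * Real.exp (-u * wt x) ∧
        rtr (T * tpow (mix (bobOut π) α) n) ≤ Real.exp (wt x * (-D + 2 * η + α * μ)))
    {n a M : ℕ} (hn : 0 < n) (ha : a ≤ n) (hM : 0 < M)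
    (hneg : -D + 2 * η + ((a : ℝ) / n) * μ ≤ 0) {ε δ δ' : ℝ}
    (herr : 4 * ((Real.exp (-(a * η ^ 2 / 4)) + 8 * Real.exp (-u * ((1 - η) * a))) +
      M * Real.exp (((1 - η) * a) * (-D + 2 * η + ((a : ℝ) / n) * μ))) ≤ ε)
    (hcov : n * gD (willieOut π) ((a : ℝ) / n) ≤ δ) (hδ' : 0 < δ') :
    ∃ K, CodeExists π n M 1 K ε δ δ' := by
  classical
  set α : ℝ := (a : ℝ) / n with hα
  have hα0 : 0 ≤ α := by positivity
  have hα1 : α ≤ 1 := by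
    rw [hα, div_le_one (by exact_mod_cast hn)]; exact_mod_cast ha
  set w0 : ℝ := (1 - η) * a with hw0
  choose T hT hT1 hT2 using fun x : Fin n → Fin 2 => ht n x α hα0 hα1
  have : Nonempty (Fin n → Fin n) := ⟨id⟩
  let T' : (Fin n → Fin n) → Matrix (Fin n → B) (Fin n → B) ℂ :=
    fun o => if wt (cw a o) < w0 then 0 else T (cw a o)
  let ρ : (Fin n → Fin n) → Matrix (Fin n → B) (Fin n → B) ℂ :=
    fun o => kron (fun i => bobOut π (cw a o i))
  have hρ : ∀ o, IsDensity (ρ o) := fun o => kron_density fun i => bob_density hπ _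
  have hT' : ∀ o, Eff (T' o) := by
    intro o
    by_cases h : wt (cw a o) < w0
    · simpa [T', h] using Eff.zero
    · simpa [T', h] using hT _
  have hb : ∀ o, rtr (T' o * tpow (mix (bobOut π) α) n)
      ≤ Real.exp (w0 * (-D + 2 * η + α * μ)) := by
    intro o
    by_cases h : wt (cw a o) < w0
    · simp only [T', h, if_true, zero_mul]
      simp only [rtr, Matrix.trace_zero, Complex.zero_re]
      positivity
    · simp only [T', h, if_false]
      refine (hT2 _).trans (Real.exp_le_exp.2 ?_)
      push Not at h
      nlinarith
  have hA : ∑ o, rtr ((1 - T' o) * ρ o) ≤ Fintype.card (Fin n → Fin n) *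
      (Real.exp (-(a * η ^ 2 / 4)) + 8 * Real.exp (-u * w0)) := by
    have : ∀ o, rtr ((1 - T' o) * ρ o) ≤ (if wt (cw a o) < w0 then (1 : ℝ) else 0)
        + 8 * Real.exp (-u * w0) := by
      intro o
      by_cases h : wt (cw a o) < w0
      · simp only [T', h, if_true, sub_zero, one_mul]
        rw [rtr_density (hρ o)]
        have := Real.exp_pos (-u * w0)
        linarith
      · simp only [T', h, if_false, zero_add]
        refine (hT1 _).trans ?_
        push Not at h
        have : Real.exp (-u * wt (cw a o)) ≤ Real.exp (-u * w0) :=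
          Real.exp_le_exp.2 (by nlinarith)
        linarith
    refine (Finset.sum_le_sum fun o _ => this o).trans ?_
    rw [Finset.sum_add_distrib]
    have hc := chernoff hn ha h0 h1
    rw [← hw0] at hc
    simp only [Finset.sum_const, Finset.card_univ, nsmul_eq_mul]
    linarith
  have key := random_code (avg_cw hn ha (bobOut π)) hρ hT' (Real.exp_pos _).le hb hA M
  set K := Fintype.card (Fin M → (Fin n → Fin n)) with hK
  have hKpos : 0 < K := Fintype.card_pos
  let e : Fin K ≃ (Fin M → (Fin n → Fin n)) := (Fintype.equivFin _).symm
  let f : Fin M → Fin 1 → Fin K → Fin n → Fin 2 := fun m _ k => cw a (e k m)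
  let TT : (Fin M → (Fin n → Fin n)) → ℕ → Matrix (Fin n → B) (Fin n → B) ℂ :=
    fun k i => if h : i < M then T' (k ⟨i, h⟩) else 0
  have hTT : ∀ k i, Eff (TT k i) := by
    intro k i
    by_cases h : i < M
    · simpa [TT, h] using hT' _
    · simpa [TT, h] using Eff.zero
  have hMr : (M : ℝ) ≠ 0 := by exact_mod_cast hM.ne'
  have hKr : (K : ℝ) ≠ 0 := by exact_mod_cast hKpos.ne'
  have hsum : ∀ m : Fin M, ∑ k : Fin K, willieWord π (f m 0 k)
      = ((K : ℝ) : ℂ) • tpow (mix (willieOut π) α) n := by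
    intro m
    have h2 : ∑ k : Fin K, willieWord π (f m 0 k)
        = ∑ k : Fin M → (Fin n → Fin n), kron (fun i => willieOut π (cw a (k m) i)) :=
      Equiv.sum_comp e (fun k => kron (fun i => willieOut π (cw a (k m) i)))
    have h3 := marginal (A := Fin M) m
      (fun o : Fin n → Fin n => kron (fun i => willieOut π (cw a o i)))
    rw [avg_cw hn ha (willieOut π), ← h2, ← Nat.cast_smul_eq_nsmul ℂ, ← Nat.cast_smul_eq_nsmul ℂ,
      ← hK] at h3
    rw [smul_comm] at h3
    have hN : ((Fintype.card (Fin n → Fin n) : ℕ) : ℂ) ≠ 0 := by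
      exact_mod_cast (Fintype.card_pos (α := Fin n → Fin n)).ne'
    rw [Complex.ofReal_natCast] at h3 ⊢
    exact smul_right_injective _ hN h3
  have hmsg : ∀ m, willieMsg π f m = tpow (mix (willieOut π) α) n := by
    intro m
    unfold willieMsg
    simp only [Finset.univ_unique, Finset.sum_singleton, Fin.default_eq_zero]
    rw [hsum m, smul_smul, ← Complex.ofReal_mul]
    simp [hKr]
  have havg : willieAvg π f = tpow (mix (willieOut π) α) n := by
    unfold willieAvg
    simp only [Finset.univ_unique, Finset.sum_singleton, Fin.default_eq_zero]
    simp only [hsum]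
    rw [Finset.sum_const, Finset.card_univ, Fintype.card_fin, ← Nat.cast_smul_eq_nsmul ℂ, smul_smul,
      smul_smul, ← Complex.ofReal_natCast, ← Complex.ofReal_mul, ← Complex.ofReal_mul]
    have : ((M : ℝ) * ((1 : ℕ) : ℝ) * K)⁻¹ * M * K = 1 := by
      push_cast; field_simp
    rw [this]; simp
  have hdens := density_mix (fun y => willie_density hπ y) hα0 hα1
  refine ⟨K, f, fun k m _ => seqΛ (TT (e k)) m, ⟨?_, ?_⟩, ?_, ?_, ?_⟩
  · intro k m _
    exact seqΛ_psd _ _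
  · intro k
    simp only [Finset.univ_unique, Finset.sum_singleton]
    rw [Fin.sum_univ_eq_sum_range (fun i => seqΛ (TT (e k)) i) M]
    exact seqΛ_le (hTT _) M
  · unfold avgErr
    simp only [Finset.univ_unique, Finset.sum_singleton]
    have h4 : ∀ m : Fin M, ∑ k : Fin K,
        (1 - ((seqΛ (TT (e k)) m * bobWord π (f m default k)).trace).re)
        ≤ K * ε := by
      intro m
      have h5 : ∑ k : Fin K, (1 - ((seqΛ (TT (e k)) m * bobWord π (f m default k)).trace).re)
        = ∑ k : Fin M → (Fin n → Fin n), (1 - rtr (seqΛ (TT k) m * ρ (k m))) :=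
        Equiv.sum_comp e (fun k => (1 - rtr (seqΛ (TT k) m * ρ (k m))))
      rw [h5]
      refine (key m).trans ?_
      exact mul_le_mul_of_nonneg_left herr (by positivity)
    have h6 := Finset.sum_le_sum fun (m : Fin M) (_ : m ∈ Finset.univ) => h4 m
    simp only [Finset.sum_const, Finset.card_univ, Fintype.card_fin, nsmul_eq_mul] at h6
    calc _ ≤ ((M : ℝ) * ((1 : ℕ) : ℝ) * K)⁻¹ * (M * (K * ε)) :=
          mul_le_mul_of_nonneg_left h6 (by positivity)
      _ = ε := by push_cast; field_simp
  · unfold Covert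
    rw [havg, relEnt_tpow hdens (willie_density hπ 0).1 (suppLE_mix hω α)]
    exact hcov
  · refine ⟨tpow (mix (willieOut π) α) n, ?_, ?_⟩
    · rw [tpow_eq_kron]
      exact kron_density fun _ => hdens
    · simp only [hmsg, sub_self, traceNorm_zero]
      simpa using hδ'.le

end Ach2

section Ach3

variable {B W : Type*} [Fintype B] [DecidableEq B] [Fintype W] [DecidableEq W]

lemma achievable {π : Fin 2 → Matrix (B × W) (B × W) ℂ}
    (hπ : ∀ x, IsDensity (π x))
    (hσ : SuppLE (bobOut π 1) (bobOut π 0))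
    (hω : SuppLE (willieOut π 1) (willieOut π 0))
    (hχ : 0 < chiSq (willieOut π 1) (willieOut π 0)) {LS : ℝ} (hLS : 0 < LS)
    (hlt : LS < relEnt (bobOut π 1) (bobOut π 0) /
        Real.sqrt (2⁻¹ * chiSq (willieOut π 1) (willieOut π 0))) :
    AchievableWithKey π LS := by
  refine ⟨hLS, ?_⟩
  intro ε δ δ' hε hδ hδ'
  set χ := chiSq (willieOut π 1) (willieOut π 0) with hχd
  set D := relEnt (bobOut π 1) (bobOut π 0) with hD
  set s := Real.sqrt (2⁻¹ * χ) with hs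
  have hs0 : 0 < s := Real.sqrt_pos.2 (by positivity)
  have hs2 : s ^ 2 = χ / 2 := by rw [hs, Real.sq_sqrt (by positivity)]; ring
  have hlt' : LS * s < D := (lt_div_iff₀ hs0).1 hlt
  have hD0 : 0 < D := lt_trans (by positivity) hlt'
  have hδs : 0 < Real.sqrt δ := Real.sqrt_pos.2 hδ
  obtain ⟨t, ht1, ht2⟩ : ∃ t, LS / D < t ∧ t < 1 / s := by
    refine exists_between ?_
    rw [div_lt_div_iff₀ hD0 hs0]; linarith
  have ht0 : 0 < t := lt_trans (by positivity) ht1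
  set c := t * Real.sqrt δ with hc
  have hc0 : 0 < c := by positivity
  have hc1 : c ^ 2 * (χ / 2) < δ := by
    rw [← hs2, hc, mul_pow, Real.sq_sqrt hδ.le]
    have h1 : t * s < 1 := by rwa [lt_div_iff₀ hs0] at ht2
    have h2 : (t * s) ^ 2 < 1 := by
      have : 0 < t * s := by positivity
      nlinarith
    nlinarith
  have hc2 : Real.sqrt δ * LS < c * D := by
    rw [div_lt_iff₀ hD0] at ht1
    rw [hc]; nlinarith
  obtain ⟨η, hη0, hη1, hη2⟩ : ∃ η : ℝ, 0 < η ∧ η < 1 ∧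
      Real.sqrt δ * LS < (1 - η) * c * (D - 3 * η) := by
    have hcont : Tendsto (fun η : ℝ => (1 - η) * c * (D - 3 * η)) (nhdsWithin 0 (Set.Ioi 0))
        (nhds ((1 - 0) * c * (D - 3 * 0))) := by
      have : Continuous (fun η : ℝ => (1 - η) * c * (D - 3 * η)) := by fun_prop
      exact (this.tendsto 0).mono_left nhdsWithin_le_nhds
    have h1 := hcont.eventually_const_lt (u := Real.sqrt δ * LS) (by simpa using hc2)
    have h2 : ∀ᶠ η : ℝ in nhdsWithin 0 (Set.Ioi 0), η < 1 :=
      nhdsWithin_le_nhds (gt_mem_nhds one_pos)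
    have h3 : ∀ᶠ η : ℝ in nhdsWithin 0 (Set.Ioi 0), 0 < η := self_mem_nhdsWithin
    obtain ⟨η, a1, a2, a3⟩ := (h1.and (h2.and h3)).exists
    exact ⟨η, a3, a2, a1⟩
  have hDη : 0 < D - 3 * η := by
    by_contra h
    push Not at h
    have h1 : 0 < (1 - η) * c := mul_pos (by linarith) hc0
    have h2 : 0 < Real.sqrt δ * LS := by positivity
    nlinarith
  obtain ⟨u, μ, hu, hμ, ht⟩ := exists_test (fun y => bob_density hπ y) hσ hη0
  rw [← hD] at ht
  -- asymptotics
  have hsq : Tendsto (fun n : ℕ => Real.sqrt n) atTop atTop :=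
    Real.tendsto_sqrt_atTop.comp tendsto_natCast_atTop_atTop
  let a : ℕ → ℕ := fun n => ⌊c * Real.sqrt n⌋₊
  have hr : Tendsto (fun n : ℕ => (a n : ℝ) / Real.sqrt n) atTop (nhds c) :=
    (tendsto_nat_floor_mul_div_atTop hc0.le).comp hsq
  have haT : Tendsto (fun n : ℕ => (a n : ℝ)) atTop atTop := by
    have : Tendsto (fun n : ℕ => ⌊c * Real.sqrt n⌋₊) atTop atTop :=
      tendsto_nat_floor_atTop.comp (hsq.const_mul_atTop hc0)
    exact tendsto_natCast_atTop_atTop.comp this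
  have hα_eq : ∀ n : ℕ, (a n : ℝ) / n = (a n : ℝ) / Real.sqrt n * (Real.sqrt n)⁻¹ := by
    intro n
    rw [div_mul_eq_mul_div, div_eq_mul_inv (a n : ℝ) (n : ℝ), ← div_mul_eq_mul_div,
      div_eq_mul_inv, mul_assoc, ← mul_inv, Real.mul_self_sqrt (by positivity)]
  have hα0 : Tendsto (fun n : ℕ => (a n : ℝ) / n) atTop (nhds 0) := by
    simp only [hα_eq]
    simpa using hr.mul (tendsto_inv_atTop_zero.comp hsq)
  have hcov : Tendsto (fun n : ℕ => n * gD (willieOut π) ((a n : ℝ) / n)) atTop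
      (nhds (c ^ 2 * (χ / 2))) := by
    have hpos : ∀ᶠ n : ℕ in atTop, 0 < (a n : ℝ) / n := by
      filter_upwards [haT.eventually_gt_atTop 0, eventually_gt_atTop 0] with n h1 h2
      have : (0 : ℝ) < n := by exact_mod_cast h2
      positivity
    have hw : Tendsto (fun n : ℕ => (a n : ℝ) / n) atTop (nhdsWithin 0 {0}ᶜ) := by
      refine tendsto_nhdsWithin_iff.2 ⟨hα0, ?_⟩
      filter_upwards [hpos] with n hn
      exact hn.ne'
    have h1 := (gD_tendsto (fun y => willie_density hπ y) hω).comp hw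
    have h2 := (hr.pow 2).mul h1
    refine h2.congr' ?_
    filter_upwards [hpos, eventually_gt_atTop 0] with n hn hn0
    have hn1 : (0 : ℝ) < n := by exact_mod_cast hn0
    have han : (a n : ℝ) ≠ 0 := by
      intro h; rw [h] at hn; simp at hn
    simp only [Function.comp]
    rw [div_pow, Real.sq_sqrt hn1.le]
    field_simp
  have herrT : Tendsto (fun n : ℕ => 4 * ((Real.exp (-(a n * η ^ 2 / 4)) +
      8 * Real.exp (-u * ((1 - η) * a n))) + 2 * Real.exp (Real.sqrt n *
        (Real.sqrt δ * LS - (1 - η) * ((a n : ℝ) / Real.sqrt n) * (D - 3 * η))))) atTop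
      (nhds (4 * ((0 + 8 * 0) + 2 * 0))) := by
    refine ((Tendsto.add (Tendsto.add ?_ (Tendsto.const_mul _ ?_))
      (Tendsto.const_mul _ ?_))).const_mul _
    · refine Real.tendsto_exp_neg_atTop_nhds_zero.comp ?_
      have : Tendsto (fun n : ℕ => (η ^ 2 / 4) * (a n : ℝ)) atTop atTop :=
        haT.const_mul_atTop (by positivity)
      refine this.congr fun n => by ring
    · have h1 : Tendsto (fun n : ℕ => (u * (1 - η)) * (a n : ℝ)) atTop atTop :=
        haT.const_mul_atTop (mul_pos hu (by linarith))
      refine (Real.tendsto_exp_neg_atTop_nhds_zero.comp h1).congr fun n => ?_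
      simp only [Function.comp]
      congr 1; ring
    · refine Real.tendsto_exp_atBot.comp ?_
      have h1 : Tendsto (fun n : ℕ => Real.sqrt δ * LS
          - (1 - η) * ((a n : ℝ) / Real.sqrt n) * (D - 3 * η)) atTop
          (nhds (Real.sqrt δ * LS - (1 - η) * c * (D - 3 * η))) :=
        tendsto_const_nhds.sub ((hr.const_mul _).mul_const _)
      exact hsq.atTop_mul_neg (by linarith) h1
  have e1 := herrT.eventually_lt_const (u := ε) (by simpa using hε)
  have e2 := hcov.eventually_lt_const hc1
  have e3 := (hα0.mul_const μ).eventually_lt_const (u := η) (by simpa using hη0)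
  have e4 := hα0.eventually_lt_const (u := 1) one_pos
  filter_upwards [e1, e2, e3, e4, eventually_gt_atTop 0] with n h1 h2 h3 h4 hn
  have hn1 : (0 : ℝ) < n := by exact_mod_cast hn
  have hsn : 0 < Real.sqrt n := Real.sqrt_pos.2 hn1
  set R := Real.sqrt ((n : ℝ) * δ) * LS with hR
  have hR0 : 0 ≤ R := by positivity
  have hM1 : Real.exp R ≤ (⌈Real.exp R⌉₊ : ℝ) := Nat.le_ceil _
  have hM2 : (⌈Real.exp R⌉₊ : ℝ) ≤ 2 * Real.exp R := by
    have := (Nat.ceil_lt_add_one (Real.exp_pos R).le).le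
    have := Real.one_le_exp hR0
    linarith
  have han : a n ≤ n := by
    rw [div_lt_one hn1] at h4
    exact_mod_cast h4.le
  obtain ⟨K, hK⟩ := one_shot_code hπ hω hη0 hη1.le hu ht (M := ⌈Real.exp R⌉₊) (ε := ε) hn han
    (Nat.ceil_pos.2 (Real.exp_pos R)) (by linarith) (by
      refine le_trans ?_ h1.le
      have h5 : (⌈Real.exp R⌉₊ : ℝ) *
          Real.exp (((1 - η) * a n) * (-D + 2 * η + ((a n : ℝ) / n) * μ))
          ≤ 2 * Real.exp (Real.sqrt n *
            (Real.sqrt δ * LS - (1 - η) * ((a n : ℝ) / Real.sqrt n) * (D - 3 * η))) := by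
        have h6 : Real.sqrt n *
            (Real.sqrt δ * LS - (1 - η) * ((a n : ℝ) / Real.sqrt n) * (D - 3 * η))
            = R + ((1 - η) * a n) * (-D + 3 * η) := by
          rw [hR, Real.sqrt_mul hn1.le]
          field_simp
          ring
        rw [h6, Real.exp_add, ← mul_assoc]
        refine mul_le_mul hM2 (Real.exp_le_exp.2 ?_) (Real.exp_pos _).le (by positivity)
        refine mul_le_mul_of_nonneg_left (by linarith) ?_
        exact mul_nonneg (by linarith) (by positivity)
      linarith) h2.le hδ'
  refine ⟨_, K, ?_, hK⟩
  rw [Real.le_log_iff_exp_le (lt_of_lt_of_le (Real.exp_pos R) hM1)]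
  exact hM1

end Ach3

section Degenerate

variable {B W : Type*} [Fintype B] [DecidableEq B] [Fintype W] [DecidableEq W]

lemma covert_of_eq {π : Fin 2 → Matrix (B × W) (B × W) ℂ}
    (he : willieOut π 1 = willieOut π 0) {n M K : ℕ}
    (f : Fin M → Fin 1 → Fin K → Fin n → Fin 2) {δ : ℝ} (hδ : 0 < δ) : Covert π f δ := by
  unfold Covert
  have h1 : ∀ y : Fin 2, willieOut π y = willieOut π 0 := by
    intro y
    fin_cases y
    · rfl
    · exact he
  have h2 : ∀ m l k, willieWord π (f m l k) = tpow (willieOut π 0) n := by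
    intro m l k
    unfold willieWord stringState tpow
    simp only [h1]
  have h3 : willieAvg π f = 0 ∨ willieAvg π f = tpow (willieOut π 0) n := by
    unfold willieAvg
    simp only [h2, Finset.sum_const, Finset.card_univ, Fintype.card_fin, one_smul]
    rw [← Nat.cast_smul_eq_nsmul ℂ, ← Nat.cast_smul_eq_nsmul ℂ, smul_smul, smul_smul]
    by_cases hM : M = 0
    · left; simp [hM]
    by_cases hK : K = 0
    · left; simp [hK]
    right
    have hM' : (M : ℂ) ≠ 0 := by exact_mod_cast hM
    have hK' : (K : ℂ) ≠ 0 := by exact_mod_cast hK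
    have : (((((M : ℝ) * ((1 : ℕ) : ℝ) * K)⁻¹ : ℝ) : ℂ) * M * K) = 1 := by
      push_cast; field_simp
    rw [this, one_smul]
  rcases h3 with h3 | h3
  · rw [h3]; simpa [relEnt] using hδ.le
  · rw [h3]; simpa [relEnt] using hδ.le

lemma scale_of_eq {π : Fin 2 → Matrix (B × W) (B × W) ℂ}
    (he : willieOut π 1 = willieOut π 0) {LS c : ℝ} (hc : 0 < c)
    (h : AchievableWithKey π LS) : AchievableWithKey π (c * LS) := by
  refine ⟨mul_pos hc h.1, fun ε δ δ' hε hδ hδ' => ?_⟩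
  filter_upwards [h.2 ε (c ^ 2 * δ) δ' hε (by positivity) hδ'] with n hn
  obtain ⟨M, K, h1, f, L, h2, h3, _, h5⟩ := hn
  refine ⟨M, K, ?_, f, L, h2, h3, covert_of_eq he f hδ, h5⟩
  have : Real.sqrt ((n : ℝ) * (c ^ 2 * δ)) = c * Real.sqrt (n * δ) := by
    rw [show (n : ℝ) * (c ^ 2 * δ) = c ^ 2 * (n * δ) by ring, Real.sqrt_mul (by positivity),
      Real.sqrt_sq hc.le]
  rw [this] at h1
  linarith

lemma chiSq_self {ι : Type*} [Fintype ι] [DecidableEq ι] (ρ : Matrix ι ι ℂ) : chiSq ρ ρ = 0 := by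
  unfold chiSq
  have : (fun α : ℝ => relEnt ((α : ℂ) • ρ + ((1 - α : ℝ) : ℂ) • ρ) ρ) = fun _ => 0 := by
    funext α
    rw [← add_smul]
    have : (α : ℂ) + ((1 - α : ℝ) : ℂ) = 1 := by push_cast; ring
    rw [this, one_smul]
    simp [relEnt]
  rw [this]
  simp

end Degenerate

/-- **Theorem 1** (covert secrecy capacity with key assistance):
`C_S^key(P) = D(σ₁‖σ₀) / √((1/2) χ²(ω₁‖ω₀))`. -/
theorem covert_secrecy_capacity_with_key_assistance
    (π : Fin 2 → Matrix (B × W) (B × W) ℂ)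
    (hπ : ∀ x, IsDensity (π x))
    (hσ : SuppLE (bobOut π 1) (bobOut π 0))
    (hω : SuppLE (willieOut π 1) (willieOut π 0)) :
    keyAssistedCovertSecrecyCapacity π =
      relEnt (bobOut π 1) (bobOut π 0) /
        Real.sqrt (2⁻¹ * chiSq (willieOut π 1) (willieOut π 0)) := by
  classical
  unfold keyAssistedCovertSecrecyCapacity
  by_cases he : willieOut π 1 = willieOut π 0
  · rw [he, chiSq_self]
    simp only [mul_zero, Real.sqrt_zero, div_zero]
    by_cases hS : {LS : ℝ | AchievableWithKey π LS} = ∅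
    · rw [hS]; exact Real.sSup_empty
    · obtain ⟨LS, hL⟩ := Set.nonempty_iff_ne_empty.2 hS
      refine Real.sSup_of_not_bddAbove ?_
      rintro ⟨b, hb⟩
      have hLp : 0 < LS := hL.1
      have hc : 0 < (|b| + 1) / LS := by positivity
      have h1 := hb (scale_of_eq he hc hL)
      rw [div_mul_cancel₀ _ hLp.ne'] at h1
      have := le_abs_self b
      linarith
  · have hχ := chiSq_pos (fun y => willie_density hπ y) hω he
    have hD := relEnt_nonneg (bob_density hπ 1) (bob_density hπ 0) hσ
    set C := relEnt (bobOut π 1) (bobOut π 0) /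
        Real.sqrt (2⁻¹ * chiSq (willieOut π 1) (willieOut π 0)) with hC
    have hC0 : 0 ≤ C := by positivity
    rcases hC0.eq_or_lt with h0 | h0
    · have hS : {LS : ℝ | AchievableWithKey π LS} = ∅ := by
        ext LS
        simp only [Set.mem_ofPred_eq, Set.mem_empty_iff_false, iff_false]
        intro h
        have h1 := converse hπ hσ hω hχ h
        have h2 := h.1
        rw [← hC, ← h0] at h1
        linarith
      rw [hS, ← h0]
      exact Real.sSup_empty
    · refine csSup_eq_of_forall_le_of_forall_lt_exists_gt ?_ ?_ ?_
      · exact ⟨C / 2, achievable hπ hσ hω hχ (by positivity) (by rw [← hC]; linarith)⟩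
      · intro LS h
        exact converse hπ hσ hω hχ h
      · intro w hw
        obtain ⟨v, hv1, hv2⟩ := exists_between (max_lt hw h0)
        exact ⟨v, achievable hπ hσ hω hχ (lt_of_le_of_lt (le_max_right _ _) hv1) hv2,
          lt_of_le_of_lt (le_max_left _ _) hv1⟩

end Statement0

end CovertPaper
end
end

section
/- Lemma (lower bound on Willie's Holevo information): Let supp(ω_1) ⊆ supp(ω_0). For any covert secrecy code satisfying the covertness constraint D(ρ̄_{W^n}||ω_0^{⊗n}) ≤ δ_n^{cov}, the Holevo (mutual) information between the classical channel input and Willie's output satisfies I(x^n; W^n)_{ρ̄} ≥ n μ_n D(ω_1||ω_0) − 2 δ_n^{cov}, provided lim_{n→∞} √n μ_n = 0, where μ_n ∈ o(1) is the average probability of transmitting a non-innocent symbol. -/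
open Matrix Filter
open scoped Kronecker Classical ComplexOrder

noncomputable section

namespace CovertPaper



variable {ι : Type*} [Fintype ι] [DecidableEq ι]

/-- The average probability `μ` of transmitting a non-innocent symbol:
`μ = 1 − Pr[x_J = 0]` for a uniform position `J` and codeword induced by the uniform and
independent message, public message and key. -/
def sparsity {n M L K : ℕ} (f : Fin M → Fin L → Fin K → Fin n → Fin 2) : ℝ :=
  ((n : ℝ) * M * L * K)⁻¹ *
    ∑ m, ∑ ℓ, ∑ k, ∑ i, (if f m ℓ k i = 0 then (0 : ℝ) else 1)

section Statement8

variable {B W : Type*} [Fintype B] [DecidableEq B] [Fintype W] [DecidableEq W]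

/-- The Holevo (quantum mutual) information `I(x^n; W^n)` between the classical channel
input and Willie's output: `H(ρ̄_{W^n}) − Σ_{x^n} p(x^n) H(ω_{x^n})`, where `p` is the
distribution of the codeword under uniform `(m,ℓ,k)`. -/
def holevoW {B W : Type*} [Fintype B] [DecidableEq B] [Fintype W] [DecidableEq W]
    (π : Fin 2 → Matrix (B × W) (B × W) ℂ)
    {n M L K : ℕ} (f : Fin M → Fin L → Fin K → Fin n → Fin 2) : ℝ :=
  vnEnt (willieAvg π f) -
    ((M : ℝ) * L * K)⁻¹ * ∑ m, ∑ ℓ, ∑ k, vnEnt (willieWord π (f m ℓ k))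

section Helpers

variable {ι : Type*} [Fintype ι] [DecidableEq ι]

/-- Uniqueness of the functional calculus. -/
lemma matFun_eq (f : ℝ → ℝ) (A U : Matrix ι ι ℂ) (d : ι → ℝ)
    (hU : U * star U = 1)
    (hA : A = U * diagonal (fun i => (d i : ℂ)) * star U) :
    matFun f A = U * diagonal (fun i => (f (d i) : ℂ)) * star U := by
  have hU' : star U * U = 1 := mul_eq_one_comm.mp hU
  have hH : A.IsHermitian := by
    rw [hA, Matrix.IsHermitian, ← star_eq_conjTranspose]
    rw [star_mul, star_mul, star_star, mul_assoc]
    congr 2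
    rw [star_eq_conjTranspose, diagonal_conjTranspose]
    congr 1
    ext i
    simp
  rw [matFun, dif_pos hH]
  set V : Matrix ι ι ℂ := (hH.eigenvectorUnitary : Matrix ι ι ℂ) with hV
  have hVV : V * star V = 1 := Unitary.mul_star_self_of_mem hH.eigenvectorUnitary.2
  have hVV' : star V * V = 1 := Unitary.star_mul_self_of_mem hH.eigenvectorUnitary.2
  have hspec : A = V * diagonal (fun i => (hH.eigenvalues i : ℂ)) * star V := by
    have h := hH.spectral_theorem
    rw [Unitary.conjStarAlgAut_apply] at h
    exact h
  have key : diagonal (fun i => (hH.eigenvalues i : ℂ)) * (star V * U)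
      = (star V * U) * diagonal (fun i => (d i : ℂ)) := by
    have h1 : star V * A * U = diagonal (fun i => (hH.eigenvalues i : ℂ)) * (star V * U) := by
      conv_lhs => rw [hspec]
      simp only [← mul_assoc]
      rw [hVV', one_mul]
    have h2 : star V * A * U = (star V * U) * diagonal (fun i => (d i : ℂ)) := by
      conv_lhs => rw [hA]
      simp only [mul_assoc]
      rw [hU', mul_one]
    rw [← h1, h2]
  have key2 : diagonal (fun i => (f (hH.eigenvalues i) : ℂ)) * (star V * U)
      = (star V * U) * diagonal (fun i => (f (d i) : ℂ)) := by
    ext i j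
    have h := congrFun (congrFun key i) j
    rw [diagonal_mul, mul_diagonal] at h ⊢
    by_cases hw : (star V * U) i j = 0
    · rw [hw]; simp
    · rw [mul_comm] at h
      have h' := mul_left_cancel₀ hw h
      have h'' : hH.eigenvalues i = d j := by exact_mod_cast h'
      rw [h'', mul_comm]
  calc V * diagonal (fun i => (f (hH.eigenvalues i) : ℂ)) * star V
      = V * (diagonal (fun i => (f (hH.eigenvalues i) : ℂ)) * (star V * U)) * star U := by
        simp only [mul_assoc]; rw [hU, mul_one]
    _ = U * diagonal (fun i => (f (d i) : ℂ)) * star U := by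
        rw [key2]; simp only [← mul_assoc]; rw [hVV, one_mul]

lemma exists_decomp (A : Matrix ι ι ℂ) (hA : A.PosSemidef) :
    ∃ (U : Matrix ι ι ℂ) (d : ι → ℝ), U * star U = 1 ∧ (∀ i, 0 ≤ d i) ∧
      A = U * diagonal (fun i => (d i : ℂ)) * star U := by
  refine ⟨hA.1.eigenvectorUnitary, hA.1.eigenvalues,
    Unitary.mul_star_self_of_mem hA.1.eigenvectorUnitary.2, hA.eigenvalues_nonneg, ?_⟩
  have h := hA.1.spectral_theorem
  rw [Unitary.conjStarAlgAut_apply] at h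
  exact h

lemma posSemidef_of_decomp (U : Matrix ι ι ℂ) (d : ι → ℝ) (hd : ∀ i, 0 ≤ d i) :
    (U * diagonal (fun i => (d i : ℂ)) * star U).PosSemidef := by
  have : (diagonal (fun i => (d i : ℂ))).PosSemidef := by
    rw [posSemidef_diagonal_iff]
    intro i
    exact_mod_cast hd i
  exact this.mul_mul_conjTranspose_same U

lemma trace_mul_decomp (B U : Matrix ι ι ℂ) (e : ι → ℂ) :
    (B * (U * diagonal e * star U)).trace = ∑ j, (star U * B * U) j j * e j := by
  have : (B * (U * diagonal e * star U)).trace = ((star U * B * U) * diagonal e).trace := by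
    rw [← mul_assoc, trace_mul_comm]; simp only [mul_assoc]
  rw [this, trace]
  simp

/-- On the kernel of `σ` the diagonal elements vanish. -/
lemma diag_zero_of_suppLE (ρ σ U : Matrix ι ι ℂ) (d : ι → ℝ) (hU : U * star U = 1)
    (hσ : σ = U * diagonal (fun i => (d i : ℂ)) * star U) (h : SuppLE ρ σ) (j : ι)
    (hj : d j = 0) : (star U * ρ * U) j j = 0 := by
  have hU' : star U * U = 1 := mul_eq_one_comm.mp hU
  have h1 : σ.mulVec (fun i => U i j) = 0 := by
    have : σ * U = U * diagonal (fun i => (d i : ℂ)) := by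
      rw [hσ]; simp only [mul_assoc]; rw [hU', mul_one]
    ext i
    have h2 := congrFun (congrFun this i) j
    rw [mul_diagonal, hj] at h2
    simpa [mul_apply, mulVec, dotProduct] using h2
  have h2 := h _ h1
  have h3 : ∀ i, (ρ * U) i j = 0 := by
    intro i
    have := congrFun h2 i
    simpa [mul_apply, mulVec, dotProduct] using this
  rw [mul_assoc, mul_apply]
  simp [h3]

lemma klein_pointwise (p q : ℝ) (hp : 0 ≤ p) (hq : 0 < q) :
    p - q ≤ p * Real.log p - p * Real.log q := by
  rcases hp.eq_or_lt with rfl | hp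
  · simp; exact hq.le
  · have h := Real.log_le_sub_one_of_pos (div_pos hq hp)
    rw [Real.log_div hq.ne' hp.ne'] at h
    have h2 := mul_le_mul_of_nonneg_left h hp.le
    have h3 : p * (q / p - 1) = q - p := by field_simp
    linarith

/-- Klein's inequality. -/
lemma klein_s8 (ρ σ U : Matrix ι ι ℂ) (q : ι → ℝ) (hρ : ρ.PosSemidef)
    (hU : U * star U = 1) (hq : ∀ i, 0 ≤ q i)
    (hσ : σ = U * diagonal (fun i => (q i : ℂ)) * star U)
    (htr : ρ.trace = σ.trace)
    (hs : ∀ j, q j = 0 → (star U * ρ * U) j j = 0) : 0 ≤ relEnt ρ σ := by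
  obtain ⟨V, p, hV, hp, hdec⟩ := exists_decomp ρ hρ
  have hU' : star U * U = 1 := mul_eq_one_comm.mp hU
  have hV' : star V * V = 1 := mul_eq_one_comm.mp hV
  set C : Matrix ι ι ℂ := star U * V with hC
  have hCC : C * star C = 1 := by
    rw [hC, star_mul, star_star, mul_assoc, ← mul_assoc V, hV, one_mul, hU']
  have hCC' : star C * C = 1 := mul_eq_one_comm.mp hCC
  set c : ι → ι → ℝ := fun j i => Complex.normSq (C j i) with hc
  have hc0 : ∀ j i, 0 ≤ c j i := fun j i => Complex.normSq_nonneg _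
  have hrow : ∀ j, ∑ i, c j i = 1 := by
    intro j
    have h := congrFun (congrFun hCC j) j
    rw [mul_apply, one_apply_eq] at h
    have h2 : ∀ i, C j i * (star C) i j = ((c j i : ℝ) : ℂ) := by
      intro i
      rw [star_apply]; exact Complex.mul_conj _
    simp only [h2] at h
    exact_mod_cast h
  have hcol : ∀ i, ∑ j, c j i = 1 := by
    intro i
    have h := congrFun (congrFun hCC' i) i
    rw [mul_apply, one_apply_eq] at h
    have h2 : ∀ j, (star C) i j * C j i = ((c j i : ℝ) : ℂ) := by
      intro j
      rw [star_apply, mul_comm]; exact Complex.mul_conj _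
    simp only [h2] at h
    exact_mod_cast h
  have hdiag : ∀ j, (star U * ρ * U) j j = ((∑ i, c j i * p i : ℝ) : ℂ) := by
    intro j
    have : star U * ρ * U = C * diagonal (fun i => (p i : ℂ)) * star C := by
      rw [hdec, hC, star_mul, star_star]; simp only [mul_assoc]
    rw [this, mul_apply]
    push_cast
    refine Finset.sum_congr rfl fun i _ => ?_
    rw [mul_diagonal, star_apply, mul_right_comm]
    congr 1
    exact Complex.mul_conj _
  have h1 : ((ρ * matLog ρ).trace).re = ∑ i, p i * Real.log (p i) := by
    rw [matLog, matFun_eq Real.log ρ V p hV hdec, trace_mul_decomp]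
    have : star V * ρ * V = diagonal (fun i => (p i : ℂ)) := by
      rw [hdec]; simp only [mul_assoc]; rw [hV', mul_one, ← mul_assoc, hV', one_mul]
    rw [this]
    simp only [diagonal_apply_eq]
    rw [Complex.re_sum]
    refine Finset.sum_congr rfl fun i _ => ?_
    rw [← Complex.ofReal_mul, Complex.ofReal_re]
  have h2 : ((ρ * matLog σ).trace).re = ∑ j, (∑ i, c j i * p i) * Real.log (q j) := by
    rw [matLog, matFun_eq Real.log σ U q hU hσ, trace_mul_decomp, Complex.re_sum]
    refine Finset.sum_congr rfl fun i _ => ?_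
    rw [hdiag, ← Complex.ofReal_mul, Complex.ofReal_re]
  have htr1 : ρ.trace = ((∑ i, p i : ℝ) : ℂ) := by
    rw [hdec, trace_mul_comm, ← mul_assoc, hV', one_mul, trace_diagonal]; push_cast; rfl
  have htr2 : σ.trace = ((∑ i, q i : ℝ) : ℂ) := by
    rw [hσ, trace_mul_comm, ← mul_assoc, hU', one_mul, trace_diagonal]; push_cast; rfl
  have hpq : ∑ i, p i = ∑ i, q i := by
    rw [htr1, htr2] at htr; exact_mod_cast htr
  have e1 : ∑ i, p i * Real.log (p i) = ∑ j, ∑ i, c j i * (p i * Real.log (p i)) := by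
    rw [Finset.sum_comm]
    refine Finset.sum_congr rfl fun i _ => ?_
    rw [← Finset.sum_mul, hcol, one_mul]
  have e2 : ∑ i, p i = ∑ j, ∑ i, c j i * p i := by
    rw [Finset.sum_comm]
    refine Finset.sum_congr rfl fun i _ => ?_
    rw [← Finset.sum_mul, hcol, one_mul]
  have e3 : ∑ j, q j = ∑ j, ∑ i, c j i * q j := by
    refine Finset.sum_congr rfl fun j _ => ?_
    rw [← Finset.sum_mul, hrow, one_mul]
  have hre : relEnt ρ σ = ∑ j, ∑ i, c j i * (p i * Real.log (p i) - p i * Real.log (q j)) := by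
    rw [relEnt, mul_sub, trace_sub, Complex.sub_re, h1, h2, e1, ← Finset.sum_sub_distrib]
    refine Finset.sum_congr rfl fun j _ => ?_
    rw [Finset.sum_mul, ← Finset.sum_sub_distrib]
    refine Finset.sum_congr rfl fun i _ => ?_
    ring
  have hle : ∑ j, ∑ i, c j i * (p i - q j) ≤ relEnt ρ σ := by
    rw [hre]
    refine Finset.sum_le_sum fun j _ => Finset.sum_le_sum fun i _ => ?_
    rcases (hq j).eq_or_lt with h0 | hpos
    · have hz := hs j h0.symm
      rw [hdiag] at hz
      have hz' : ∑ i, c j i * p i = 0 := by exact_mod_cast hz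
      have hz2 := (Finset.sum_eq_zero_iff_of_nonneg
        (fun i _ => mul_nonneg (hc0 j i) (hp i))).mp hz' i (Finset.mem_univ i)
      rcases mul_eq_zero.mp hz2 with h | h
      · simp [h]
      · simp [h, ← h0]
    · exact mul_le_mul_of_nonneg_left (klein_pointwise _ _ (hp i) hpos) (hc0 j i)
  have hz : ∑ j, ∑ i, c j i * (p i - q j) = 0 := by
    simp only [mul_sub, Finset.sum_sub_distrib]
    rw [← e2, ← e3, hpq, sub_self]
  linarith

/-- General tensor product of matrices. -/
def tens {n : ℕ} (A : Fin n → Matrix ι ι ℂ) : Matrix (Fin n → ι) (Fin n → ι) ℂ :=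
  of fun a b => ∏ i, A i (a i) (b i)

lemma tens_mul {n : ℕ} (A B : Fin n → Matrix ι ι ℂ) :
    tens A * tens B = tens (fun i => A i * B i) := by
  ext a b
  simp only [tens, mul_apply, of_apply]
  rw [Finset.prod_univ_sum, Fintype.piFinset_univ]
  refine Finset.sum_congr rfl fun x _ => ?_
  rw [Finset.prod_mul_distrib]

lemma tens_star {n : ℕ} (A : Fin n → Matrix ι ι ℂ) :
    star (tens A) = tens (fun i => star (A i)) := by
  ext a b
  simp [tens, star_apply]

lemma tens_diagonal {n : ℕ} (d : Fin n → ι → ℂ) :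
    tens (fun i => diagonal (d i)) = diagonal (fun a : Fin n → ι => ∏ i, d i (a i)) := by
  ext a b
  simp only [tens, of_apply]
  by_cases h : a = b
  · subst h; simp
  · rw [diagonal_apply_ne _ h]
    obtain ⟨i, hi⟩ := Function.ne_iff.mp h
    exact Finset.prod_eq_zero (Finset.mem_univ i) (diagonal_apply_ne _ hi)

lemma tens_one {n : ℕ} : tens (fun _ : Fin n => (1 : Matrix ι ι ℂ)) = 1 := by
  have := tens_diagonal (fun (_ : Fin n) (_ : ι) => (1 : ℂ))
  simpa using this

lemma tens_trace {n : ℕ} (A : Fin n → Matrix ι ι ℂ) :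
    (tens A).trace = ∏ i, (A i).trace := by
  simp only [trace, tens, diag_apply, of_apply]
  rw [Finset.prod_univ_sum, Fintype.piFinset_univ]

lemma tens_decomp {n : ℕ} (σ U : Fin n → Matrix ι ι ℂ) (d : Fin n → ι → ℝ)
    (hσ : ∀ i, σ i = U i * diagonal (fun j => (d i j : ℂ)) * star (U i)) :
    tens σ = tens U * diagonal (fun a : Fin n → ι => ((∏ i, d i (a i) : ℝ) : ℂ)) *
      star (tens U) := by
  have : (fun a : Fin n → ι => ((∏ i, d i (a i) : ℝ) : ℂ))
      = fun a : Fin n → ι => ∏ i, ((d i (a i) : ℝ) : ℂ) := by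
    ext a; push_cast; rfl
  rw [this, ← tens_diagonal (fun i j => ((d i j : ℝ) : ℂ)), tens_star, tens_mul, tens_mul]
  congr 1
  ext1 i
  exact hσ i

lemma tens_unitary {n : ℕ} (U : Fin n → Matrix ι ι ℂ) (hU : ∀ i, U i * star (U i) = 1) :
    tens U * star (tens U) = 1 := by
  rw [tens_star, tens_mul]
  simp only [hU]
  exact tens_one

lemma tens_posSemidef {n : ℕ} (A : Fin n → Matrix ι ι ℂ) (hA : ∀ i, (A i).PosSemidef) :
    (tens A).PosSemidef := by
  choose U d hU hd hdec using fun i => exists_decomp (A i) (hA i)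
  rw [tens_decomp A U d hdec]
  exact posSemidef_of_decomp _ _ fun a => Finset.prod_nonneg fun i _ => hd i (a i)

lemma tens_conj_diag {n : ℕ} (A U : Fin n → Matrix ι ι ℂ) (a : Fin n → ι) :
    (star (tens U) * tens A * tens U) a a = ∏ i, (star (U i) * A i * U i) (a i) (a i) := by
  rw [tens_star, tens_mul, tens_mul]; rfl

lemma sum_prod_mul_sum {n : ℕ} (α : Fin n → ι → ℂ) (g : Fin n → ι → ℂ)
    (h1 : ∀ i, ∑ j, α i j = 1) :
    ∑ a : Fin n → ι, (∏ i, α i (a i)) * ∑ i, g i (a i) = ∑ i, ∑ j, α i j * g i j := by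
  simp only [Finset.mul_sum]
  rw [Finset.sum_comm]
  refine Finset.sum_congr rfl fun i _ => ?_
  have h : ∀ a : Fin n → ι, (∏ k, α k (a k)) * g i (a i)
      = ∏ k, (fun k j => α k j * if k = i then g k j else 1) k (a k) := by
    intro a
    simp only [Finset.prod_mul_distrib]
    simp
  simp only [h]
  rw [← Fintype.piFinset_univ, ← Finset.prod_univ_sum (fun _ : Fin n => (Finset.univ : Finset ι))
    (fun k j => α k j * if k = i then g k j else 1)]
  rw [Finset.prod_eq_single i]
  · simp
  · intro k _ hk
    simp [hk, h1]
  · simp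

lemma tens_log_trace {n : ℕ} (A σ : Fin n → Matrix ι ι ℂ)
    (htr : ∀ i, (A i).trace = 1) (hσ : ∀ i, (σ i).PosSemidef)
    (hs : ∀ i, SuppLE (A i) (σ i)) :
    (tens A * matLog (tens σ)).trace = ∑ i, (A i * matLog (σ i)).trace := by
  choose U d hU hd hdec using fun i => exists_decomp (σ i) (hσ i)
  rw [matLog, matFun_eq Real.log _ (tens U) _ (tens_unitary U hU) (tens_decomp σ U d hdec),
    trace_mul_decomp]
  have hr : ∀ i, (A i * matLog (σ i)).trace
      = ∑ j, (star (U i) * A i * U i) j j * (Real.log (d i j) : ℂ) := by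
    intro i
    rw [matLog, matFun_eq Real.log _ (U i) (d i) (hU i) (hdec i), trace_mul_decomp]
  simp only [hr]
  rw [← sum_prod_mul_sum (fun i j => (star (U i) * A i * U i) j j)
    (fun i j => (Real.log (d i j) : ℂ))]
  · refine Finset.sum_congr rfl fun a _ => ?_
    rw [tens_conj_diag]
    by_cases h : ∃ i, d i (a i) = 0
    · obtain ⟨i, hi⟩ := h
      have : ∏ i, (star (U i) * A i * U i) (a i) (a i) = 0 :=
        Finset.prod_eq_zero (Finset.mem_univ i)
          (diag_zero_of_suppLE _ _ _ _ (hU i) (hdec i) (hs i) _ hi)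
      rw [this, zero_mul, zero_mul]
    · push Not at h
      rw [Real.log_prod fun i _ => h i]
      push_cast
      rfl
  · intro i
    have : (star (U i) * A i * U i).trace = 1 := by
      rw [trace_mul_comm, ← mul_assoc, hU, one_mul, htr]
    exact this

lemma relEnt_eq (ρ σ : Matrix ι ι ℂ) :
    relEnt ρ σ = -vnEnt ρ - ((ρ * matLog σ).trace).re := by
  rw [relEnt, vnEnt, mul_sub, trace_sub, Complex.sub_re]; ring

lemma suppLE_refl (ρ : Matrix ι ι ℂ) : SuppLE ρ ρ := fun _ h => h

end Helpers

section Channel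

variable {B W : Type*} [Fintype B] [DecidableEq B] [Fintype W] [DecidableEq W]

lemma willieOut_density (π : Fin 2 → Matrix (B × W) (B × W) ℂ)
    (hπ : ∀ x, IsDensity (π x)) (x : Fin 2) : IsDensity (willieOut π x) := by
  constructor
  · have : willieOut π x = ∑ a : B, (π x).submatrix (fun b => (a, b)) (fun b => (a, b)) := by
      ext b b'
      simp [willieOut, ptraceLeft, Matrix.sum_apply]
    rw [this]
    exact posSemidef_sum _ fun a _ => (hπ x).1.submatrix _
  · rw [← (hπ x).2]
    simp only [willieOut, ptraceLeft, trace, diag_apply, of_apply]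
    rw [Fintype.sum_prod_type, Finset.sum_comm]

/-- The exact identity per code, together with nonnegativity of the relative entropy. -/
lemma code_identity (π : Fin 2 → Matrix (B × W) (B × W) ℂ)
    (hπ : ∀ x, IsDensity (π x))
    (hω : SuppLE (willieOut π 1) (willieOut π 0))
    {n M L K : ℕ} (f : Fin M → Fin L → Fin K → Fin n → Fin 2) :
    0 ≤ relEnt (willieAvg π f) (tpow (willieOut π 0) n) ∧
    holevoW π f = (n : ℝ) * sparsity f * relEnt (willieOut π 1) (willieOut π 0)
      - relEnt (willieAvg π f) (tpow (willieOut π 0) n) := by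
  have hd := willieOut_density π hπ
  have hsup : ∀ x, SuppLE (willieOut π x) (willieOut π 0) := by
    intro x
    fin_cases x
    · exact suppLE_refl _
    · exact hω
  have htp : tpow (willieOut π 0) n = tens (fun _ : Fin n => willieOut π 0) := rfl
  have hww : ∀ x : Fin n → Fin 2, willieWord π x = tens (fun i => willieOut π (x i)) :=
    fun _ => rfl
  constructor
  · by_cases hN : (M : ℝ) * L * K = 0
    · have : willieAvg π f = 0 := by
        rw [willieAvg, hN]; simp
      rw [this, relEnt]; simp
    · obtain ⟨U, q, hU, hq, hdec⟩ := exists_decomp _ (hd 0).1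
      have hNpos : 0 ≤ ((M : ℝ) * L * K)⁻¹ := by positivity
      refine klein_s8 _ _ (tens fun _ : Fin n => U) (fun a => ∏ i, q (a i)) ?_
        (tens_unitary _ fun _ => hU)
        (fun a => Finset.prod_nonneg fun i _ => hq (a i))
        (by rw [htp]; exact tens_decomp _ _ (fun _ => q) fun _ => hdec) ?_ ?_
      · rw [willieAvg]
        refine PosSemidef.smul (posSemidef_sum _ fun m _ => posSemidef_sum _ fun l _ =>
          posSemidef_sum _ fun k _ => ?_) (by exact_mod_cast hNpos)
        rw [hww]
        exact tens_posSemidef _ fun i => (hd _).1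
      · have ht : ∀ x : Fin n → Fin 2, (willieWord π x).trace = 1 := by
          intro x
          rw [hww, tens_trace]
          simp [(hd _).2]
        have h0 : (tpow (willieOut π 0) n).trace = 1 := by
          rw [htp, tens_trace]
          simp [(hd _).2]
        rw [h0, willieAvg, trace_smul]
        simp only [trace_sum, ht]
        have hN' : (M : ℂ) * L * K ≠ 0 := by exact_mod_cast hN
        simp only [Finset.sum_const, Finset.card_univ, Fintype.card_fin, nsmul_eq_mul, smul_eq_mul]
        push_cast
        rw [mul_one, ← mul_assoc (M : ℂ), inv_mul_cancel₀ hN']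
      · intro a ha
        obtain ⟨i, -, hi⟩ := Finset.prod_eq_zero_iff.mp ha
        rw [willieAvg]
        simp only [mul_smul_comm, smul_mul_assoc, Finset.mul_sum, Finset.sum_mul, Matrix.smul_apply,
          Matrix.sum_apply]
        have : ∀ x : Fin n → Fin 2, (star (tens fun _ : Fin n => U) * willieWord π x *
            tens fun _ : Fin n => U) a a = 0 := by
          intro x
          rw [hww, tens_conj_diag]
          exact Finset.prod_eq_zero (Finset.mem_univ i)
            (diag_zero_of_suppLE _ _ _ _ hU hdec (hsup _) _ hi)
        simp [this]
  · have hT : ∀ x : Fin n → Fin 2, ((willieWord π x * matLog (tpow (willieOut π 0) n)).trace).re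
        = ∑ i, ((willieOut π (x i) * matLog (willieOut π 0)).trace).re := by
      intro x
      rw [hww, htp, tens_log_trace _ _ (fun i => (hd _).2) (fun i => (hd _).1)
        (fun i => hsup _), Complex.re_sum]
    have hH : ∀ x : Fin n → Fin 2, vnEnt (willieWord π x) = ∑ i, vnEnt (willieOut π (x i)) := by
      intro x
      simp only [vnEnt]
      rw [hww, tens_log_trace _ _ (fun i => (hd _).2) (fun i => (hd _).1)
        (fun i => suppLE_refl _), Complex.re_sum, Finset.sum_neg_distrib]
    have hg : ∀ y : Fin 2, vnEnt (willieOut π y) =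
        -((willieOut π y * matLog (willieOut π 0)).trace).re
        - (if y = 0 then (0 : ℝ) else 1) * relEnt (willieOut π 1) (willieOut π 0) := by
      intro y
      fin_cases y
      · simp [vnEnt]
      · have := relEnt_eq (willieOut π 1) (willieOut π 0)
        simp only [Fin.mk_one, one_ne_zero, if_false, one_mul]
        linarith
    have hword : ∀ x : Fin n → Fin 2, vnEnt (willieWord π x) =
        -((willieWord π x * matLog (tpow (willieOut π 0) n)).trace).re
        - (∑ i, if x i = 0 then (0 : ℝ) else 1) * relEnt (willieOut π 1) (willieOut π 0) := by
      intro x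
      rw [hH, hT, Finset.sum_mul, ← Finset.sum_neg_distrib, ← Finset.sum_sub_distrib]
      exact Finset.sum_congr rfl fun i _ => hg _
    have havg : ((willieAvg π f * matLog (tpow (willieOut π 0) n)).trace).re
        = ((M : ℝ) * L * K)⁻¹ * ∑ m, ∑ l, ∑ k,
          ((willieWord π (f m l k) * matLog (tpow (willieOut π 0) n)).trace).re := by
      rw [willieAvg, smul_mul_assoc, trace_smul, smul_eq_mul, Complex.re_ofReal_mul]
      simp only [Finset.sum_mul, trace_sum, Complex.re_sum]
    have hsp : (n : ℝ) * sparsity f = ((M : ℝ) * L * K)⁻¹ *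
        ∑ m, ∑ l, ∑ k, ∑ i, (if f m l k i = 0 then (0 : ℝ) else 1) := by
      rcases Nat.eq_zero_or_pos n with rfl | hn
      · simp
      · have hn' : (n : ℝ) ≠ 0 := by positivity
        rw [sparsity, ← mul_assoc]
        congr 1
        rw [mul_assoc (n : ℝ), mul_assoc (n : ℝ), mul_inv, ← mul_assoc, mul_inv_cancel₀ hn', one_mul]
    rw [relEnt_eq (willieAvg π f), havg, hsp, holevoW]
    simp only [hword, Finset.sum_sub_distrib, Finset.sum_neg_distrib, ← Finset.sum_mul]
    ring

end Channel

/-- **Lemma** (lower bound on Willie's Holevo information): under the covertness constraint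
`D(ρ̄_{W^n}‖ω₀^{⊗n}) ≤ δ_n^{cov}` and `√n μ_n → 0`, one has
`I(x^n;W^n) ≥ n μ_n D(ω₁‖ω₀) − 2δ_n^{cov}`. -/
theorem holevo_information_lower_bound
    (π : Fin 2 → Matrix (B × W) (B × W) ℂ)
    (hπ : ∀ x, IsDensity (π x))
    (hω : SuppLE (willieOut π 1) (willieOut π 0))
    (M L K : ℕ → ℕ)
    (f : ∀ n : ℕ, Fin (M n) → Fin (L n) → Fin (K n) → Fin n → Fin 2)
    (δcov : ℕ → ℝ)
    (hcov : ∀ n, relEnt (willieAvg π (f n)) (tpow (willieOut π 0) n) ≤ δcov n)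
    (hμ : Tendsto (fun n : ℕ => Real.sqrt n * sparsity (f n)) atTop (nhds 0)) :
    ∀ n : ℕ,
      (n : ℝ) * sparsity (f n) * relEnt (willieOut π 1) (willieOut π 0) - 2 * δcov n ≤
        holevoW π (f n) := by
  intro n
  obtain ⟨h1, h2⟩ := code_identity π hπ hω (f n)
  have h3 := hcov n
  linarith

end Statement8

end CovertPaper
end
end
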